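/- arXiv:2305.20023 — 4 statements merged into one kernel-verified Lean document; each statement's English description precedes it below -/
import Mathlib

section
/- Let L > 0, let a : ℝ → ℝ be an L-periodic continuous function with magnetic flux α = (1/(2π))∫₀^L a(x)dx, α ∉ ℤ, and let k(α) be defined by: k(α) = 1/|sin(2πα)| if α mod 1 ∈ (0,1/4) ∪ (3/4,1), and k(α) = 1 if α mod 1 ∈ [1/4,3/4]. Then for every finite family ψ₁,…,ψ_N of L-periodic H¹ functions that is orthonormal in L²(0,L), setting ρ(x) = Σ_{n=1}^N |ψ_n(x)|², one has ∫₀^L ρ(x)³ dx ≤ k(α)² · Σ_{n=1}^N ∫₀^L |i ψ_n'(x) − a(x)ψ_n(x)|² dx. -/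
open MeasureTheory Real Filter

/-- The constant `k(α)` from (K1): `1/|sin(2πα)|` when `α mod 1 ∈ (0,1/4)∪(3/4,1)`,
and `1` when `α mod 1 ∈ [1/4,3/4]`. -/
noncomputable def kConst (α : ℝ) : ℝ :=
  if 1/4 ≤ Int.fract α ∧ Int.fract α ≤ 3/4 then 1
  else 1 / |Real.sin (2 * Real.pi * α)|

/-- `F(b,α) = b^{5/3} Σ_{k∈ℤ} (|k+α|³+b)^{-2}`. -/
noncomputable def Fsum (α b : ℝ) : ℝ :=
  b ^ ((5:ℝ)/3) * ∑' k : ℤ, ((|(k : ℝ) + α| ^ 3 + b) ^ 2)⁻¹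

/-- `sup_{b ≥ 0} F(b,α)`. -/
noncomputable def supF (α : ℝ) : ℝ := ⨆ b : {x : ℝ // 0 ≤ x}, Fsum α b.1

/-- The constant `K₂(α)`. -/
noncomputable def K2 (α : ℝ) : ℝ :=
  5 / (3 * Real.sqrt 3 * Real.pi) * (supF α) ^ 2

/-- `K(α) = min(K₁(α), K₂(α))` with `K₁(α) = k(α)²`. -/
noncomputable def Kmin (α : ℝ) : ℝ := min ((kConst α) ^ 2) (K2 α)

open ComplexConjugate in
lemma lt_energy (L : ℝ) (hL : 0 < L) (x s : ℝ) (hs : 0 < s) (v v' : ℝ → ℂ)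
    (hv : ∀ y, HasDerivAt v (v' y) y) (hv' : Continuous v') (w : ℂ) (hw : ‖w‖ = 1)
    (hvw : v (x + L) = w * v x) :
    2 * s * ‖v x‖ ^ 2 * (Real.cosh (s * L) - w.re) ≤
      Real.sinh (s * L) * ∫ y in x..(x + L), (‖v' y‖ ^ 2 + s ^ 2 * ‖v y‖ ^ 2) := by
  have hS : 0 < Real.sinh (s * L) := Real.sinh_pos_iff.mpr (by positivity)
  set S := Real.sinh (s * L) with hSdef
  set p := v x with hp
  -- the minimizer and its derivative
  let h : ℝ → ℂ := fun y =>
    p * (((Real.sinh (s * (x + L - y)) / S : ℝ) : ℂ) + w * ((Real.sinh (s * (y - x)) / S : ℝ) : ℂ))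
  let h' : ℝ → ℂ := fun y =>
    p * (((-(s * Real.cosh (s * (x + L - y))) / S : ℝ) : ℂ)
      + w * ((s * Real.cosh (s * (y - x)) / S : ℝ) : ℂ))
  have e1 : ∀ y : ℝ, HasDerivAt (fun y : ℝ => s * (x + L - y)) (-s) y := fun y => by
    simpa using ((hasDerivAt_id y).const_sub (x + L)).const_mul s
  have e2 : ∀ y : ℝ, HasDerivAt (fun y : ℝ => s * (y - x)) s y := fun y => by
    simpa using ((hasDerivAt_id y).sub_const x).const_mul s
  have hh : ∀ y, HasDerivAt h (h' y) y := fun y => by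
    have a1 := (((e1 y).sinh).div_const S).ofReal_comp
    have a2 := (((e2 y).sinh).div_const S).ofReal_comp
    have := (a1.add (a2.const_mul w)).const_mul p
    refine this.congr_deriv ?_
    simp only [h']
    push_cast
    ring
  have hh' : ∀ y, HasDerivAt h' ((s : ℂ) ^ 2 * h y) y := fun y => by
    have a1 := ((((e1 y).cosh).const_mul s).neg.div_const S).ofReal_comp
    have a2 := ((((e2 y).cosh).const_mul s).div_const S).ofReal_comp
    have := (a1.add (a2.const_mul w)).const_mul p
    refine this.congr_deriv ?_
    simp only [h]
    push_cast
    ring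
  have hconj : ∀ y, HasDerivAt (fun y => conj (h' y)) (conj ((s : ℂ) ^ 2 * h y)) y :=
    fun y => (hh' y).star
  let F : ℝ → ℂ := fun y => (2 * v y - h y) * conj (h' y)
  have hF : ∀ y, HasDerivAt F ((2 * v' y - h' y) * conj (h' y)
      + (2 * v y - h y) * conj ((s : ℂ) ^ 2 * h y)) y := fun y =>
    (((hv y).const_mul 2).sub (hh y)).mul (hconj y)
  let G : ℝ → ℝ := fun y => (F y).re
  have hG : ∀ y, HasDerivAt G (((2 * v' y - h' y) * conj (h' y)
      + (2 * v y - h y) * conj ((s : ℂ) ^ 2 * h y)).re) y := fun y =>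
    Complex.reCLM.hasFDerivAt.comp_hasDerivAt y (hF y)
  have cv : Continuous v := continuous_iff_continuousAt.mpr fun y => (hv y).continuousAt
  have ch : Continuous h := continuous_iff_continuousAt.mpr fun y => (hh y).continuousAt
  have ch' : Continuous h' := continuous_iff_continuousAt.mpr fun y => (hh' y).continuousAt
  have cc : Continuous (fun y => conj (h' y)) := Complex.continuous_conj.comp ch'
  have cd : Continuous (fun y => conj ((s : ℂ) ^ 2 * h y)) :=
    Complex.continuous_conj.comp (by fun_prop)
  have cder : Continuous (fun y => (((2 * v' y - h' y) * conj (h' y)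
      + (2 * v y - h y) * conj ((s : ℂ) ^ 2 * h y)).re)) :=
    Complex.continuous_re.comp (by fun_prop)
  have key : G (x + L) - G x ≤ ∫ y in x..(x + L), (‖v' y‖ ^ 2 + s ^ 2 * ‖v y‖ ^ 2) := by
    rw [← intervalIntegral.integral_eq_sub_of_hasDerivAt (fun y _ => hG y)
      (cder.intervalIntegrable _ _)]
    refine intervalIntegral.integral_mono_on (by linarith) (cder.intervalIntegrable _ _)
      (Continuous.intervalIntegrable (by fun_prop) _ _) fun y _ => ?_
    generalize v y = A
    generalize v' y = B
    generalize h y = C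
    generalize h' y = D
    rw [← Complex.normSq_eq_norm_sq, ← Complex.normSq_eq_norm_sq]
    have : ((s : ℂ) ^ 2 * C) = (((s ^ 2 : ℝ)) : ℂ) * C := by push_cast; rfl
    rw [this]
    simp only [Complex.normSq_apply, Complex.add_re, Complex.mul_re, Complex.mul_im,
      Complex.sub_re, Complex.sub_im, Complex.conj_re, Complex.conj_im, Complex.ofReal_re,
      Complex.ofReal_im, Complex.re_ofNat, Complex.im_ofNat]
    nlinarith [sq_nonneg (B.re - D.re), sq_nonneg (B.im - D.im), sq_nonneg (s * (A.re - C.re)),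
      sq_nonneg (s * (A.im - C.im))]
  have hw2 : w.re ^ 2 + w.im ^ 2 = 1 := by
    have := Complex.normSq_eq_norm_sq w
    rw [hw, Complex.normSq_apply] at this
    linarith
  have hend : S * (G (x + L) - G x) = 2 * s * ‖p‖ ^ 2 * (Real.cosh (s * L) - w.re) := by
    have h1 : h (x + L) = v (x + L) := by
      simp only [h, hvw]; simp [← hSdef, hS.ne']; ring
    have h0 : h x = p := by
      simp only [h]; simp [← hSdef, hS.ne']
    simp only [G, F]
    rw [h1, h0, hvw, ← hp]
    simp only [h']
    simp only [add_sub_cancel_left, sub_self, mul_zero, Real.cosh_zero]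
    rw [← Complex.normSq_eq_norm_sq]
    generalize Real.cosh (s * L) = C
    simp only [Complex.normSq_apply, Complex.add_re, Complex.add_im, Complex.mul_re, Complex.mul_im,
      Complex.sub_re, Complex.sub_im, Complex.conj_re, Complex.conj_im, Complex.ofReal_re,
      Complex.ofReal_im, Complex.re_ofNat, Complex.im_ofNat]
    field_simp
    ring_nf
    have : w.im ^ 2 = 1 - w.re ^ 2 := by linarith
    simp only [this]
    ring
  rw [← hend]
  exact mul_le_mul_of_nonneg_left key hS.le

lemma lt_trig (t φ : ℝ) : Real.sinh t * |Real.sin φ| ≤ Real.cosh t - Real.cos φ := by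
  have h1 := Real.cosh_sq t
  have h2 := Real.sin_sq_add_cos_sq φ
  have h3 := Real.one_le_cosh t
  rw [← sq_abs] at h2
  set b := |Real.sin φ|
  set c := Real.cos φ
  have : (Real.sinh t * b + c) ^ 2 ≤ Real.cosh t ^ 2 := by
    nlinarith [sq_nonneg (Real.sinh t * c - b)]
  have := abs_le_of_sq_le_sq this (by linarith)
  linarith [le_abs_self (Real.sinh t * b + c)]

lemma lt_k_nonneg (α : ℝ) : 0 ≤ kConst α := by
  unfold kConst; split_ifs <;> positivity

lemma lt_k (α : ℝ) (hαZ : ∀ m : ℤ, α ≠ (m : ℝ)) (t : ℝ) :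
    Real.sinh t ≤ kConst α * (Real.cosh t - Real.cos (2 * π * α)) := by
  have hper : Real.cos (2 * π * α) = Real.cos (2 * π * Int.fract α) := by
    rw [← Real.cos_sub_int_mul_two_pi _ ⌊α⌋]
    congr 1; rw [Int.fract]; ring
  unfold kConst
  split_ifs with h
  · have : Real.cos (2 * π * α) ≤ 0 := by
      rw [hper]
      apply Real.cos_nonpos_of_pi_div_two_le_of_le <;> nlinarith [Real.pi_pos]
    have := Real.sinh_lt_cosh t
    linarith
  · have hsin : Real.sin (2 * π * α) ≠ 0 := by
      intro h0
      obtain ⟨n, hn⟩ := Real.sin_eq_zero_iff.mp h0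
      have hn2 : (n : ℝ) = 2 * α := by
        have := Real.pi_pos
        apply mul_right_cancel₀ this.ne'
        linarith
      rcases Int.even_or_odd' n with ⟨m, rfl | rfl⟩
      · apply hαZ m; push_cast at hn2; linarith
      · apply h
        have : α = m + 1/2 := by push_cast at hn2; linarith
        rw [this, Int.fract_intCast_add]
        have : Int.fract (1/2 : ℝ) = 1/2 := Int.fract_eq_self.mpr (by norm_num)
        rw [this]; norm_num
    have := lt_trig t (2 * π * α)
    have hp : 0 < |Real.sin (2 * π * α)| := abs_pos.mpr hsin
    rw [one_div, inv_mul_eq_div, le_div_iff₀ hp]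
    exact this

lemma lt_point (L : ℝ) (hL : 0 < L)
    (a : ℝ → ℝ) (ha : Continuous a) (haP : Function.Periodic a L)
    (α : ℝ) (hα : α = (1 / (2 * Real.pi)) * ∫ x in (0:ℝ)..L, a x)
    (hαZ : ∀ m : ℤ, α ≠ (m : ℝ)) (u u' : ℝ → ℂ) (hu : ∀ y, HasDerivAt u (u' y) y)
    (hu' : Continuous u') (huP : Function.Periodic u L) (huP' : Function.Periodic u' L) (x : ℝ) :
    ‖u x‖ ^ 4 ≤ kConst α ^ 2 * ((∫ y in (0:ℝ)..L, ‖u y‖ ^ 2) *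
      ∫ y in (0:ℝ)..L, ‖Complex.I * u' y - (a y : ℂ) * u y‖ ^ 2) := by
  have cu : Continuous u := continuous_iff_continuousAt.mpr fun y => (hu y).continuousAt
  let θ : ℝ → ℝ := fun y => ∫ t in x..y, a t
  have hθ : ∀ y, HasDerivAt θ (a y) y := fun y =>
    intervalIntegral.integral_hasDerivAt_right (ha.intervalIntegrable _ _)
      (ha.stronglyMeasurableAtFilter _ _) ha.continuousAt
  have cθ : Continuous θ := continuous_iff_continuousAt.mpr fun y => (hθ y).continuousAt
  let e : ℝ → ℂ := fun y => Complex.exp ((θ y : ℂ) * Complex.I)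
  have he : ∀ y, HasDerivAt e (e y * (a y * Complex.I)) y := fun y =>
    ((hθ y).ofReal_comp.mul_const Complex.I).cexp
  have ce : Continuous e := continuous_iff_continuousAt.mpr fun y => (he y).continuousAt
  have ne : ∀ y, ‖e y‖ = 1 := fun y => Complex.norm_exp_ofReal_mul_I _
  let v : ℝ → ℂ := fun y => e y * u y
  let v' : ℝ → ℂ := fun y => e y * (a y * Complex.I) * u y + e y * u' y
  have hv : ∀ y, HasDerivAt v (v' y) y := fun y => (he y).mul (hu y)
  have cv' : Continuous v' := by
    have : Continuous fun y => (a y : ℂ) := Complex.continuous_ofReal.comp ha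
    fun_prop
  have nv : ∀ y, ‖v y‖ = ‖u y‖ := fun y => by simp [v, ne]
  have nv' : ∀ y, ‖v' y‖ = ‖Complex.I * u' y - (a y : ℂ) * u y‖ := fun y => by
    have : Complex.I * v' y = e y * (Complex.I * u' y - (a y : ℂ) * u y) := by
      simp only [v']; ring_nf; rw [Complex.I_sq]; ring
    have h2 := congrArg norm this
    simpa [ne] using h2
  have hθL : θ (x + L) = 2 * π * α := by
    simp only [θ]
    rw [haP.intervalIntegral_add_eq x 0, zero_add, hα]
    field_simp
  have hvx : v x = u x := by simp [v, e, θ]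
  have hvL : v (x + L) = Complex.exp (((2 * π * α : ℝ) : ℂ) * Complex.I) * v x := by
    rw [hvx, ← huP x, ← hθL]
  have hre : (Complex.exp (((2 * π * α : ℝ) : ℂ) * Complex.I)).re = Real.cos (2 * π * α) :=
    Complex.exp_ofReal_mul_I_re _
  have hk0 := lt_k_nonneg α
  set A := ∫ y in (0:ℝ)..L, ‖u y‖ ^ 2 with hA
  set B := ∫ y in (0:ℝ)..L, ‖Complex.I * u' y - (a y : ℂ) * u y‖ ^ 2 with hB
  have hA0 : 0 ≤ A := intervalIntegral.integral_nonneg hL.le fun y _ => by positivity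
  have hB0 : 0 ≤ B := intervalIntegral.integral_nonneg hL.le fun y _ => by positivity
  have hint : ∀ s : ℝ, ∫ y in x..(x + L), (‖v' y‖ ^ 2 + s ^ 2 * ‖v y‖ ^ 2) = B + s ^ 2 * A := by
    intro s
    have cac : Continuous fun y => (a y : ℂ) := Complex.continuous_ofReal.comp ha
    simp only [nv, nv']
    rw [intervalIntegral.integral_add (Continuous.intervalIntegrable (by fun_prop) _ _)
      (Continuous.intervalIntegrable (by fun_prop) _ _), intervalIntegral.integral_const_mul]
    have P1 : Function.Periodic (fun y => ‖Complex.I * u' y - (a y : ℂ) * u y‖ ^ 2) L := fun y => by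
      simp only [huP y, huP' y, haP y]
    have P2 : Function.Periodic (fun y => ‖u y‖ ^ 2) L := fun y => by simp only [huP y]
    rw [P1.intervalIntegral_add_eq x 0, P2.intervalIntegral_add_eq x 0, zero_add]
  have main : ∀ s : ℝ, 0 < s → 2 * s * ‖u x‖ ^ 2 ≤ kConst α * (B + s ^ 2 * A) := by
    intro s hs
    have h1 := lt_energy L hL x s hs v v' hv cv' _ (Complex.norm_exp_ofReal_mul_I _) hvL
    rw [hint, hre, nv] at h1
    have h2 := lt_k α hαZ (s * L)
    have hS : 0 < Real.sinh (s * L) := Real.sinh_pos_iff.mpr (by positivity)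
    have hX : 0 ≤ 2 * s * ‖u x‖ ^ 2 := by positivity
    have h3 := mul_le_mul_of_nonneg_left h2 hX
    have h4 := mul_le_mul_of_nonneg_left h1 hk0
    have : Real.sinh (s * L) * (2 * s * ‖u x‖ ^ 2)
        ≤ Real.sinh (s * L) * (kConst α * (B + s ^ 2 * A)) := by linarith
    exact le_of_mul_le_mul_left this hS
  have hd := discrim_le_zero (a := kConst α * A) (b := -(2 * ‖u x‖ ^ 2)) (c := kConst α * B) (by
    intro s
    rcases lt_or_ge 0 s with hs | hs
    · linarith [main s hs]
    · have : 0 ≤ kConst α * A * (s * s) := mul_nonneg (mul_nonneg hk0 hA0) (mul_self_nonneg s)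
      have : 0 ≤ kConst α * B := mul_nonneg hk0 hB0
      have : 0 ≤ 2 * ‖u x‖ ^ 2 * (-s) := mul_nonneg (by positivity) (by linarith)
      linarith)
  rw [discrim] at hd
  linarith

open ComplexConjugate in
lemma lt_expand (L : ℝ) (N : ℕ) (f : Fin N → ℝ → ℂ) (hf : ∀ n, Continuous (f n)) (c : Fin N → ℂ) :
    ((∫ y in (0:ℝ)..L, ‖∑ n, c n * f n y‖ ^ 2 : ℝ) : ℂ) =
      ∑ n, ∑ m, c n * conj (c m) * ∫ y in (0:ℝ)..L, f n y * conj (f m y) := by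
  have cc : ∀ n, Continuous fun y => conj (f n y) := fun n => Complex.continuous_conj.comp (hf n)
  rw [← intervalIntegral.integral_ofReal]
  have : ∀ y, ((‖∑ n, c n * f n y‖ ^ 2 : ℝ) : ℂ) =
      ∑ n, ∑ m, c n * conj (c m) * (f n y * conj (f m y)) := fun y => by
    push_cast
    rw [← Complex.mul_conj', map_sum, Finset.sum_mul_sum]
    refine Finset.sum_congr rfl fun n _ => Finset.sum_congr rfl fun m _ => ?_
    rw [map_mul]; ring
  simp only [this]
  rw [intervalIntegral.integral_finsetSum]
  · refine Finset.sum_congr rfl fun n _ => ?_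
    rw [intervalIntegral.integral_finsetSum]
    · simp only [intervalIntegral.integral_const_mul]
    · intro m _
      have := hf n
      have := cc m
      exact Continuous.intervalIntegrable (by fun_prop) _ _
  · intro n _
    have := hf n
    exact Continuous.intervalIntegrable (by fun_prop) _ _

open ComplexConjugate in
/-- scalar Lieb–Thirring inequality for orthonormal systems, constant `k(α)²`. -/
theorem lieb_thirring_orthonormal_K1
    (L : ℝ) (hL : 0 < L)
    (a : ℝ → ℝ) (ha : Continuous a) (haP : Function.Periodic a L)
    (α : ℝ) (hα : α = (1 / (2 * Real.pi)) * ∫ x in (0:ℝ)..L, a x)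
    (hαZ : ∀ m : ℤ, α ≠ (m : ℝ))
    (N : ℕ) (ψ : Fin N → ℝ → ℂ)
    (hψ : ∀ n, ContDiff ℝ 1 (ψ n))
    (hψP : ∀ n, Function.Periodic (ψ n) L)
    (horth : ∀ n m, ∫ x in (0:ℝ)..L, ψ n x * (starRingEnd ℂ) (ψ m x) =
      if n = m then 1 else 0) :
    ∫ x in (0:ℝ)..L, (∑ n, ‖ψ n x‖ ^ 2) ^ 3 ≤
      kConst α ^ 2 *
        ∑ n, ∫ x in (0:ℝ)..L, ‖Complex.I * deriv (ψ n) x - (a x : ℂ) * ψ n x‖ ^ 2 := by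
  have cψ : ∀ n, Continuous (ψ n) := fun n => (hψ n).continuous
  have cψ' : ∀ n, Continuous (deriv (ψ n)) := fun n => (hψ n).continuous_deriv le_rfl
  have hd : ∀ n y, HasDerivAt (ψ n) (deriv (ψ n) y) y := fun n y =>
    ((hψ n).differentiable (by norm_num) y).hasDerivAt
  have hψP' : ∀ n, Function.Periodic (deriv (ψ n)) L := fun n y => by
    rw [← deriv_comp_add_const]
    congr 1
    funext z; exact hψP n z
  have cac : Continuous fun y => (a y : ℂ) := Complex.continuous_ofReal.comp ha
  have ccψ : ∀ n, Continuous fun y => conj (ψ n y) :=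
    fun n => Complex.continuous_conj.comp (cψ n)
  let f : Fin N → ℝ → ℂ := fun n x => Complex.I * deriv (ψ n) x - (a x : ℂ) * ψ n x
  have hf : ∀ n, Continuous (f n) := fun n => by
    have := cψ n
    have := cψ' n
    fun_prop
  let M : Fin N → Fin N → ℂ := fun n m => ∫ y in (0:ℝ)..L, f n y * conj (f m y)
  let T : ℝ → ℂ := fun x => ∑ n, ∑ m, M n m * (ψ m x * conj (ψ n x))
  have cT : Continuous T := by fun_prop
  have hpt : ∀ x, (∑ n, ‖ψ n x‖ ^ 2) ^ 3 ≤ kConst α ^ 2 * (T x).re := by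
    intro x
    set r := ∑ n, ‖ψ n x‖ ^ 2 with hr
    have hr0 : 0 ≤ r := Finset.sum_nonneg fun n _ => by positivity
    let c : Fin N → ℂ := fun n => conj (ψ n x)
    have h := lt_point L hL a ha haP α hα hαZ (fun y => ∑ n, c n * ψ n y)
      (fun y => ∑ n, c n * deriv (ψ n) y)
      (fun y => HasDerivAt.fun_sum fun n _ => (hd n y).const_mul (c n))
      (by fun_prop) (fun y => by simp only [hψP _ y]) (fun y => by simp only [hψP' _ y]) x
    have hux : ∑ n, c n * ψ n x = (r : ℂ) := by
      rw [hr]; push_cast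
      refine Finset.sum_congr rfl fun n _ => ?_
      simp only [c]; rw [Complex.conj_mul']
    have hA : ∫ y in (0:ℝ)..L, ‖∑ n, c n * ψ n y‖ ^ 2 = r := by
      have := lt_expand L N ψ cψ c
      simp only [horth, mul_ite, mul_one, mul_zero, Finset.sum_ite_eq, Finset.mem_univ,
        if_true] at this
      have h2 : ∑ n, c n * conj (c n) = (r : ℂ) := by
        rw [← hux]; simp [c]
      rw [h2] at this
      exact_mod_cast this
    have hB : ∫ y in (0:ℝ)..L, ‖Complex.I * (∑ n, c n * deriv (ψ n) y)
        - (a y : ℂ) * ∑ n, c n * ψ n y‖ ^ 2 = (T x).re := by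
      have h1 : ∀ y, Complex.I * (∑ n, c n * deriv (ψ n) y)
        - (a y : ℂ) * ∑ n, c n * ψ n y = ∑ n, c n * f n y := fun y => by
        rw [Finset.mul_sum, Finset.mul_sum, ← Finset.sum_sub_distrib]
        refine Finset.sum_congr rfl fun n _ => ?_
        simp only [f]; ring
      simp only [h1]
      have := lt_expand L N f hf c
      have h2 : ∑ n, ∑ m, c n * conj (c m) * (∫ y in (0:ℝ)..L, f n y * conj (f m y)) = T x := by
        refine Finset.sum_congr rfl fun n _ => Finset.sum_congr rfl fun m _ => ?_
        simp only [c, M, Complex.conj_conj]; ring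
      rw [h2] at this
      rw [← this, Complex.ofReal_re]
    have hT0 : 0 ≤ (T x).re := by
      rw [← hB]
      exact intervalIntegral.integral_nonneg hL.le fun y _ => by positivity
    simp only [hA, hB, hux] at h
    rw [Complex.norm_real, Real.norm_of_nonneg hr0] at h
    rcases hr0.eq_or_lt with h0 | h0
    · rw [← h0]; simp; positivity
    · refine le_of_mul_le_mul_left ?_ h0
      linarith
  calc ∫ x in (0:ℝ)..L, (∑ n, ‖ψ n x‖ ^ 2) ^ 3
      ≤ ∫ x in (0:ℝ)..L, kConst α ^ 2 * (T x).re := by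
        refine intervalIntegral.integral_mono_on hL.le
          (Continuous.intervalIntegrable (by fun_prop) _ _)
          (Continuous.intervalIntegrable ?_ _ _) fun y _ => hpt y
        exact continuous_const.mul (Complex.continuous_re.comp cT)
    _ = kConst α ^ 2 * (∫ x in (0:ℝ)..L, T x).re := by
        rw [intervalIntegral.integral_const_mul]
        congr 1
        exact Complex.reCLM.intervalIntegral_comp_comm (cT.intervalIntegrable _ _)
    _ = _ := by
        congr 1
        have h1 : ∫ x in (0:ℝ)..L, T x = ∑ n, M n n := by
          simp only [T]
          rw [intervalIntegral.integral_finsetSum]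
          · refine Finset.sum_congr rfl fun n _ => ?_
            rw [intervalIntegral.integral_finsetSum]
            · simp only [intervalIntegral.integral_const_mul, horth]
              simp
            · intro m _
              exact Continuous.intervalIntegrable (by fun_prop) _ _
          · intro n _
            exact Continuous.intervalIntegrable (by fun_prop) _ _
        rw [h1, Complex.re_sum]
        refine Finset.sum_congr rfl fun n _ => ?_
        simp only [M]
        have : ∀ y, f n y * conj (f n y) = ((‖f n y‖ ^ 2 : ℝ) : ℂ) := fun y => by
          rw [Complex.mul_conj']; push_cast; rfl
        simp only [this]
        rw [intervalIntegral.integral_ofReal, Complex.ofReal_re]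
end

section
/- Let L > 0, let a : ℝ → ℝ be an L-periodic continuous function with magnetic flux α = (1/(2π))∫₀^L a(x)dx, α ∉ ℤ, and define K₂(α) = (5/(3√3 π)) · [sup_{b ≥ 0} b^{5/3} Σ_{k∈ℤ} (|k+α|³ + b)^{−2}]². Then for every finite family ψ₁,…,ψ_N of L-periodic H¹ functions that is orthonormal in L²(0,L), setting ρ(x) = Σ_{n=1}^N |ψ_n(x)|², one has ∫₀^L ρ(x)³ dx ≤ K₂(α) · Σ_{n=1}^N ∫₀^L |i ψ_n'(x) − a(x)ψ_n(x)|² dx. -/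
open MeasureTheory Real Filter

namespace LTaux

lemma telescope_int (G : ℤ → ℝ) (m : ℤ) (n : ℕ) :
    ∑ k ∈ Finset.Ico m (m + n), (G (k+1) - G k) = G (m+n) - G m := by
  induction n with
  | zero => simp
  | succ n ih =>
    have : Finset.Ico m (m + (n+1 : ℕ)) = insert (m + (n:ℤ)) (Finset.Ico m (m+n)) := by
      ext x; simp only [Finset.mem_Ico, Finset.mem_insert]; push_cast; omega
    rw [this, Finset.sum_insert (by simp), ih]
    push_cast
    rw [← add_assoc]; ring

lemma sum_telescope_le (G : ℤ → ℝ) (hG : Monotone G) (lo hi : ℝ) (h1 : ∀ k, lo ≤ G k)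
    (h2 : ∀ k, G k ≤ hi) (s : Finset ℤ) : ∑ k ∈ s, (G (k+1) - G k) ≤ hi - lo := by
  obtain ⟨m, hm⟩ := s.bddBelow
  obtain ⟨M, hM⟩ := s.bddAbove
  have hsub : s ⊆ Finset.Ico m (m + ((M + 1 - m).toNat : ℤ)) := by
    intro x hx
    have a1 := hm hx
    have a2 := hM hx
    simp only [Finset.mem_Ico]
    omega
  calc _ ≤ ∑ k ∈ Finset.Ico m (m + ((M + 1 - m).toNat : ℤ)), (G (k+1) - G k) :=
        Finset.sum_le_sum_of_subset_of_nonneg hsub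
          (fun i _ _ => sub_nonneg.2 (hG (by omega)))
    _ = _ := telescope_int G m _
    _ ≤ _ := by linarith [h1 m, h2 (m + ((M + 1 - m).toNat : ℤ))]

lemma arctan_step (x β : ℝ) (hβ : 1 ≤ β) :
    β / (x^2 + β^2) ≤ 3 * (arctan ((x+1)/β) - arctan (x/β)) := by
  have hβ0 : 0 < β := by linarith
  have hd : ∀ t : ℝ, HasDerivAt (fun t => arctan (t/β)) (β / (t^2+β^2)) t := by
    intro t
    have := ((hasDerivAt_id t).div_const β).arctan
    convert! this using 1
    simp only [id]
    field_simp
    ring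
  obtain ⟨c, hc, h⟩ := exists_hasDerivAt_eq_slope (fun t => arctan (t/β))
    (fun t => β / (t^2+β^2)) (show x < x+1 by linarith)
    (fun t _ => (hd t).continuousAt.continuousWithinAt) (fun t _ => hd t)
  have h' : arctan ((x+1)/β) - arctan (x/β) = β / (c^2+β^2) := by
    rw [h]; simp
  rw [h', ← mul_div_assoc, div_le_div_iff₀ (by positivity) (by positivity)]
  have : c^2 + β^2 ≤ 3 * (x^2+β^2) := by
    obtain ⟨c1, c2⟩ := hc
    nlinarith [sq_nonneg (x - (c - x)), sq_nonneg (c-x)]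
  nlinarith

lemma kpos {α : ℝ} (hαZ : ∀ m : ℤ, α ≠ (m : ℝ)) (k : ℤ) : 0 < |(k:ℝ) + α| := by
  rw [abs_pos]
  intro h
  apply hαZ (-k)
  push_cast; linarith

lemma summable_sq {α : ℝ} : Summable (fun k : ℤ => (|(k:ℝ)+α|^2)⁻¹) := by
  have := (Real.summable_one_div_int_add_rpow α 2).2 (by norm_num)
  refine this.congr fun k => ?_
  rw [one_div]; norm_cast

lemma summable_six {α : ℝ} : Summable (fun k : ℤ => (|(k:ℝ)+α|^6)⁻¹) := by
  have := (Real.summable_one_div_int_add_rpow α 6).2 (by norm_num)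
  refine this.congr fun k => ?_
  rw [one_div]; norm_cast

lemma term_le {α : ℝ} (hαZ : ∀ m : ℤ, α ≠ (m : ℝ)) {b : ℝ} (hb : 0 ≤ b) (k : ℤ) :
    ((|(k : ℝ) + α| ^ 3 + b) ^ 2)⁻¹ ≤ (|(k:ℝ)+α|^6)⁻¹ := by
  have := kpos hαZ k
  apply inv_anti₀ (by positivity)
  have h3 : 0 < |(k:ℝ)+α|^3 := by positivity
  nlinarith

lemma summable_F {α : ℝ} (hαZ : ∀ m : ℤ, α ≠ (m : ℝ)) {b : ℝ} (hb : 0 ≤ b) :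
    Summable (fun k : ℤ => ((|(k : ℝ) + α| ^ 3 + b) ^ 2)⁻¹) :=
  Summable.of_nonneg_of_le (fun k => by positivity) (term_le hαZ hb) summable_six

lemma bdd_F {α : ℝ} (hαZ : ∀ m : ℤ, α ≠ (m : ℝ)) :
    BddAbove (Set.range fun b : {x : ℝ // 0 ≤ x} => Fsum α b.1) := by
  refine ⟨max (∑' k : ℤ, (|(k:ℝ)+α|^6)⁻¹) (6 * π), ?_⟩
  rintro _ ⟨⟨b, hb⟩, rfl⟩
  simp only [Fsum]
  rcases le_total b 1 with h | h
  · apply le_max_of_le_left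
    have h1 : b ^ ((5:ℝ)/3) ≤ 1 := Real.rpow_le_one hb h (by norm_num)
    have h2 : ∑' k : ℤ, ((|(k : ℝ) + α| ^ 3 + b) ^ 2)⁻¹ ≤ ∑' k : ℤ, (|(k:ℝ)+α|^6)⁻¹ :=
      (summable_F hαZ hb).tsum_le_tsum (term_le hαZ hb) summable_six
    have h3 : 0 ≤ ∑' k : ℤ, ((|(k : ℝ) + α| ^ 3 + b) ^ 2)⁻¹ := tsum_nonneg fun k => by positivity
    nlinarith
  · apply le_max_of_le_right
    set β := b ^ ((1:ℝ)/3) with hβ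
    have hβ1 : 1 ≤ β := Real.one_le_rpow h (by norm_num)
    have hb3 : b = β^3 := by
      rw [hβ, ← Real.rpow_natCast, ← Real.rpow_mul hb]; norm_num
    have hb5 : b ^ ((5:ℝ)/3) = β^5 := by
      rw [hβ, ← Real.rpow_natCast, ← Real.rpow_mul hb]; norm_num
    rw [hb5, ← tsum_mul_left]
    apply Real.tsum_le_of_sum_le (fun k => by positivity)
    intro s
    have key : ∀ k ∈ s, β^5 * ((|(k : ℝ) + α| ^ 3 + b) ^ 2)⁻¹ ≤
        6 * (arctan ((((k+1 : ℤ):ℝ)+α)/β) - arctan (((k:ℝ)+α)/β)) := by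
      intro k _
      have hs := arctan_step ((k:ℝ)+α) β hβ1
      rw [hb3]
      have e : β^5 * ((|(k : ℝ) + α| ^ 3 + β^3) ^ 2)⁻¹ ≤ 2 * (β / (((k:ℝ)+α)^2 + β^2)) := by
        rw [← sq_abs ((k:ℝ)+α)]
        have := kpos hαZ k
        generalize |(k:ℝ)+α| = x at *
        have hβ0 : 0 < β := by linarith
        rw [← div_eq_mul_inv, ← mul_div_assoc, div_le_div_iff₀ (by positivity) (by positivity)]
        have q : β^4 * (x^2+β^2) ≤ 2 * (x^3+β^3)^2 := by
          have hx6 : 0 < x^3*β^3 := by positivity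
          rcases le_total x β with h | h
          · have : β^4 * x^2 ≤ β^4*β^2 := by gcongr
            nlinarith [sq_nonneg (x^3)]
          · have a1 : β^4 * x^2 ≤ x^4*x^2 := by gcongr
            nlinarith [sq_nonneg (β^3)]
        nlinarith
      refine e.trans ?_
      have : (((k+1 : ℤ):ℝ)+α) = (k:ℝ)+α+1 := by push_cast; ring
      rw [this]
      linarith
    refine (Finset.sum_le_sum key).trans ?_
    rw [← Finset.mul_sum]
    have := sum_telescope_le (fun k : ℤ => arctan (((k:ℝ)+α)/β)) (by
      intro i j hij
      apply Real.arctan_strictMono.monotone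
      have : (i:ℝ) ≤ j := by exact_mod_cast hij
      gcongr) (-(π/2)) (π/2) (fun k => (Real.neg_pi_div_two_lt_arctan _).le)
        (fun k => (Real.arctan_lt_pi_div_two _).le) s
    linarith

lemma F_le_sup {α : ℝ} (hαZ : ∀ m : ℤ, α ≠ (m : ℝ)) {b : ℝ} (hb : 0 ≤ b) :
    Fsum α b ≤ supF α := le_ciSup (bdd_F hαZ) ⟨b, hb⟩

lemma supF_pos {α : ℝ} (hαZ : ∀ m : ℤ, α ≠ (m : ℝ)) : 0 < supF α := by
  refine lt_of_lt_of_le ?_ (F_le_sup hαZ zero_le_one)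
  simp only [Fsum, Real.one_rpow, one_mul]
  exact (summable_F hαZ zero_le_one).tsum_pos (fun k => by positivity) 0 (by positivity)

/-- the form in which the supremum gets used, `b = s^6` -/
lemma sup_use {α : ℝ} (hαZ : ∀ m : ℤ, α ≠ (m : ℝ)) {s : ℝ} (hs : 0 < s) :
    ∑' k : ℤ, (s^6 / (|(k : ℝ) + α| ^ 3 + s^6))^2 ≤ s^2 * supF α := by
  have h := F_le_sup hαZ (b := s^6) (by positivity)
  have e : (s^6) ^ ((5:ℝ)/3) = s^10 := by
    rw [← Real.rpow_natCast, ← Real.rpow_natCast, ← Real.rpow_mul hs.le]; norm_num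
  rw [Fsum, e] at h
  have : ∀ k : ℤ, (s^6 / (|(k : ℝ) + α| ^ 3 + s^6))^2 =
      s^12 * ((|(k : ℝ) + α| ^ 3 + s^6) ^ 2)⁻¹ := by
    intro k
    rw [div_pow, div_eq_mul_inv]; ring
  simp_rw [this]
  rw [tsum_mul_left]
  have := mul_le_mul_of_nonneg_left h (sq_nonneg s)
  linarith [this]

end LTaux

namespace LTaux
open Set Topology

noncomputable def Hfun (s : ℝ) : ℝ :=
  (2/3) * (s^4/(1+s^6)) + (1/9) * Real.log ((s^4-s^2+1)/(1+s^2)^2)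
    + (2/(3*√3)) * arctan ((2*s^2-1)/√3)

lemma quad_pos (s : ℝ) : 0 < s^4 - s^2+1 := by nlinarith [sq_nonneg (s^2-1/2)]

lemma hasDerivAt_Hfun (s : ℝ) : HasDerivAt Hfun (4*s^3/(1+s^6)^2) s := by
  have h3 : (√3)^2 = 3 := Real.sq_sqrt (by norm_num)
  have h3' : 0 < √3 := by positivity
  have q := quad_pos s
  have q' : s^2*(s^2-1)+1 ≠ 0 := by
    have : s^2*(s^2-1)+1 = s^4-s^2+1 := by ring
    rw [this]; exact q.ne'
  have p1 : 0 < 1 + s^6 := by positivity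
  have p2 : 0 < 1 + s^2 := by positivity
  have d1 : HasDerivAt (fun s : ℝ => s^4/(1+s^6)) ((4*s^3*(1+s^6) - s^4*(6*s^5))/(1+s^6)^2) s := by
    have := (hasDerivAt_pow 4 s).div ((hasDerivAt_pow 6 s).const_add 1) p1.ne'
    convert! this using 1
    try norm_num
  have d2 : HasDerivAt (fun s : ℝ => Real.log ((s^4-s^2+1)/(1+s^2)^2))
      ((4*s^3-2*s)/(s^4-s^2+1) - 2*(2*s)/(1+s^2)) s := by
    have a1 : HasDerivAt (fun s : ℝ => s^4-s^2+1) (4*s^3-2*s) s := by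
      have := ((hasDerivAt_pow 4 s).sub (hasDerivAt_pow 2 s)).add_const 1
      convert! this using 1
      norm_num
    have a2 : HasDerivAt (fun s : ℝ => (1+s^2)^2) (2*(1+s^2)*(2*s)) s := by
      have := ((hasDerivAt_pow 2 s).const_add 1).pow 2
      convert! this using 1
      norm_num
    have := (a1.div a2 (by positivity)).log (div_pos q (by positivity)).ne'
    convert! this using 1
    simp only [Pi.div_apply]
    field_simp
    try ring
  have d3 : HasDerivAt (fun s : ℝ => arctan ((2*s^2-1)/√3))
      (√3 * s / (s^4-s^2+1)) s := by
    have := ((((hasDerivAt_pow 2 s).const_mul 2).sub_const 1).div_const (√3)).arctan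
    convert! this using 1
    have : 1 + ((2*s^2-1)/√3)^2 = 4/3*(s^4-s^2+1) := by
      rw [div_pow, h3]; ring
    rw [this]
    field_simp
    norm_num
    try rw [h3]
    try ring
  have := ((d1.const_mul (2/3)).add (d2.const_mul (1/9))).add (d3.const_mul (2/(3*√3)))
  convert! this using 1
  have e : 2/(3*√3) * (√3 * s / (s^4-s^2+1)) = 2/3 * s / (s^4-s^2+1) := by
    field_simp
  rw [e]
  have e2 : 1 + s^6 = (1+s^2)*(s^4-s^2+1) := by ring
  rw [e2]
  field_simp
  ring

lemma tendsto_Hfun : Tendsto Hfun atTop (𝓝 (π/(3*√3))) := by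
  have sq : Tendsto (fun s : ℝ => s^2) atTop atTop := tendsto_pow_atTop (by norm_num)
  have inv2 : Tendsto (fun s : ℝ => (s^2)⁻¹) atTop (𝓝 0) := sq.inv_tendsto_atTop
  have t1 : Tendsto (fun s : ℝ => s^4/(1+s^6)) atTop (𝓝 0) := by
    have : Tendsto (fun s : ℝ => (s^2)⁻¹ / ((s^2)⁻¹^3+1)) atTop (𝓝 (0/(0^3+1))) :=
      inv2.div ((inv2.pow 3).add_const 1) (by norm_num)
    rw [zero_div] at this
    refine this.congr' ?_
    filter_upwards [eventually_gt_atTop 0] with s hs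
    field_simp
  have t2 : Tendsto (fun s : ℝ => Real.log ((s^4-s^2+1)/(1+s^2)^2)) atTop (𝓝 0) := by
    have : Tendsto (fun s : ℝ => (1 - (s^2)⁻¹ + (s^2)⁻¹^2) / ((s^2)⁻¹+1)^2) atTop
        (𝓝 ((1-0+0^2)/(0+1)^2)) :=
      ((tendsto_const_nhds.sub inv2).add (inv2.pow 2)).div ((inv2.add_const 1).pow 2) (by norm_num)
    have h1 : ((1-0+0^2)/(0+1)^2 : ℝ) = 1 := by norm_num
    rw [h1] at this
    have h := this.log one_ne_zero
    rw [Real.log_one] at h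
    refine h.congr' ?_
    filter_upwards [eventually_gt_atTop 0] with s hs
    congr 1
    field_simp
  have t3 : Tendsto (fun s : ℝ => arctan ((2*s^2-1)/√3)) atTop (𝓝 (π/2)) := by
    have : Tendsto (fun s : ℝ => (2*s^2-1)/√3) atTop atTop := by
      apply Tendsto.atTop_div_const (by positivity)
      apply tendsto_atTop_add_const_right
      exact sq.const_mul_atTop (by norm_num)
    exact ((Real.tendsto_arctan_atTop).mono_right nhdsWithin_le_nhds).comp this
  have := ((t1.const_mul (2/3)).add (t2.const_mul (1/9))).add (t3.const_mul (2/(3*√3)))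
  convert! this using 2
  ring

lemma Hfun_zero : Hfun 0 = -(π/(9*√3)) := by
  have : arctan ((2*0^2-1)/√3) = -(π/6) := by
    have : ((2*0^2-1)/√3 : ℝ) = -(1/√3) := by ring
    rw [this, Real.arctan_neg, ← Real.tan_pi_div_six, Real.arctan_tan] <;> linarith [Real.pi_pos]
  unfold Hfun
  rw [this]
  norm_num
  ring

noncomputable def Ic : ℝ := 4*π/(9*√3)

lemma Ic_eq : Ic = π/(3*√3) - Hfun 0 := by
  rw [Hfun_zero, Ic]; field_simp; norm_num

lemma scaled (r : ℝ) (hr : 0 < r) :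
    IntegrableOn (fun s => 4*s^3*((r^2)^3/((r^2)^3+s^6))^2) (Ioi 0) ∧
    ∫ s in Ioi 0, 4*s^3*((r^2)^3/((r^2)^3+s^6))^2 = (r^2)^2 * Ic := by
  have hd : ∀ s ∈ Ici (0:ℝ), HasDerivAt (fun s => r^4 * Hfun (s/r))
      (4*s^3*((r^2)^3/((r^2)^3+s^6))^2) s := by
    intro s hs
    have hs : 0 ≤ s := hs
    have := ((hasDerivAt_Hfun (s/r)).comp s ((hasDerivAt_id s).div_const r)).const_mul (r^4)
    convert! this using 1
    have : 0 < r^6+s^6 := by positivity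
    have e : 1 + (s/r)^6 = (r^6+s^6)/r^6 := by field_simp
    rw [e]
    field_simp
  have hn : ∀ s ∈ Ioi (0:ℝ), 0 ≤ 4*s^3*((r^2)^3/((r^2)^3+s^6))^2 := by
    intro s hs
    have hs : 0 < s := hs
    positivity
  have ht : Tendsto (fun s => r^4 * Hfun (s/r)) atTop (𝓝 (r^4 * (π/(3*√3)))) :=
    (tendsto_Hfun.comp (tendsto_id.atTop_div_const hr)).const_mul _
  refine ⟨integrableOn_Ioi_deriv_of_nonneg' hd hn ht, ?_⟩
  rw [integral_Ioi_of_hasDerivAt_of_nonneg' hd hn ht, Ic_eq, zero_div]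
  ring

lemma lint_f (x : ℝ) (hx : 0 < x) :
    ∫⁻ s in Ioi (0:ℝ), ENNReal.ofReal (4*s^3*(x^3/(x^3+s^6))^2) = ENNReal.ofReal (x^2 * Ic) := by
  obtain ⟨h1, h2⟩ := scaled (√x) (by positivity)
  rw [Real.sq_sqrt hx.le] at h1 h2
  rw [← h2, ofReal_integral_eq_lintegral_ofReal h1]
  filter_upwards [ae_restrict_mem measurableSet_Ioi] with s hs
  have hs : 0 < s := hs
  positivity

/-- the lower bound by integrating out `s` -/
lemma lower (R c : ℝ) (hR : 0 ≤ R) (hc : 0 < c) (S : ℝ → ℝ) (hS0 : ∀ s, 0 ≤ S s)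
    (hS : ∀ s, 0 < s → R - c * s ≤ √(S s)) :
    ENNReal.ofReal (R^6/(15*c^4)) ≤ ∫⁻ s in Ioi (0:ℝ), ENNReal.ofReal (4*s^3*S s) := by
  have hle : 0 ≤ R/c := by positivity
  have i1 : ∫ s in (0:ℝ)..(R/c), 4*s^3*(R-c*s)^2 = R^6/(15*c^4) := by
    have hd : ∀ s ∈ uIcc 0 (R/c), HasDerivAt
      (fun s : ℝ => R^2*s^4 - 8/5*R*c*s^5 + 2/3*c^2*s^6) (4*s^3*(R-c*s)^2) s := by
      intro s _
      have := (((hasDerivAt_pow 4 s).const_mul (R^2)).sub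
        ((hasDerivAt_pow 5 s).const_mul (8/5*R*c))).add ((hasDerivAt_pow 6 s).const_mul (2/3*c^2))
      convert! this using 1
      norm_num
      ring
    rw [intervalIntegral.integral_eq_sub_of_hasDerivAt hd
      (Continuous.intervalIntegrable (by fun_prop) _ _)]
    field_simp
    ring
  rw [← i1, intervalIntegral.integral_of_le hle, ofReal_integral_eq_lintegral_ofReal]
  · refine (lintegral_mono_ae ?_).trans (lintegral_mono_set (Ioc_subset_Ioi_self))
    filter_upwards [ae_restrict_mem measurableSet_Ioc] with s hs
    apply ENNReal.ofReal_le_ofReal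
    have hs0 : 0 < s := hs.1
    have h1 : 0 ≤ R - c*s := by
      have := (le_div_iff₀ hc).1 hs.2
      linarith
    have h2 := hS s hs0
    have : (R-c*s)^2 ≤ S s := by
      rw [← Real.sq_sqrt (hS0 s)]; gcongr
    gcongr
  · exact (Continuous.integrableOn_Ioc (by fun_prop))
  · filter_upwards [ae_restrict_mem measurableSet_Ioc] with s hs
    have hs0 : 0 < s := hs.1
    positivity

end LTaux

namespace LTaux
open Set Topology AddCircle

section core
variable {T : ℝ} [hT : Fact (0 < T)]

lemma parseval_cont (f : C(AddCircle T, ℂ)) :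
    HasSum (fun k => ‖fourierCoeff f k‖^2) (∫ x, ‖f x‖^2 ∂(haarAddCircle (T := T))) := by
  have h := hasSum_sq_fourierCoeff (ContinuousMap.toLp (E := ℂ) 2 (haarAddCircle (T := T)) ℂ f)
  simp_rw [fourierCoeff_toLp] at h
  convert! h using 1
  apply integral_congr_ae
  filter_upwards [ContinuousMap.coeFn_toLp (E := ℂ) (p := 2) (𝕜 := ℂ) (haarAddCircle (T := T)) f] with x hx
  rw [hx]

lemma series_hasSum {d : ℤ → ℂ} (hd : Summable fun k => ‖d k‖) :
    HasSum (fun k => d k • (fourier k : C(AddCircle T, ℂ))) (∑' k, d k • fourier k) := by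
  apply Summable.hasSum
  apply Summable.of_norm
  refine hd.congr fun k => ?_
  rw [norm_smul, fourier_norm, mul_one]

lemma series_apply {d : ℤ → ℂ} (hd : Summable fun k => ‖d k‖) (x : AddCircle T) :
    HasSum (fun k => d k * fourier k x) ((∑' k, d k • (fourier k : C(AddCircle T, ℂ))) x) := by
  convert! (ContinuousMap.evalCLM ℂ x).hasSum (series_hasSum hd)

lemma series_coeff {d : ℤ → ℂ} (hd : Summable fun k => ‖d k‖) (k : ℤ) :
    fourierCoeff (∑' k, d k • (fourier k : C(AddCircle T, ℂ)) : C(AddCircle T, ℂ)) k = d k := by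
  rw [← fourierCoeff_toLp, ← fourierBasis_repr, HilbertBasis.repr_apply_apply, coe_fourierBasis]
  have h1 := (ContinuousMap.toLp (E := ℂ) 2 (haarAddCircle (T := T)) ℂ).hasSum (series_hasSum hd)
  have h2 := h1.mapL (innerSL ℂ (fourierLp 2 k))
  refine h2.unique ?_
  convert! hasSum_ite_eq k (d k) using 2 with j
  simp only [map_smul, innerSL_apply_apply]
  have := orthonormal_iff_ite.1 (orthonormal_fourier (T := T)) k j
  change d j • inner ℂ (fourierLp 2 k) (fourierLp 2 j) = _
  rw [this]
  by_cases h : j = k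
  · simp [h]
  · simp [h, Ne.symm h]

lemma series_parseval {d : ℤ → ℂ} (hd : Summable fun k => ‖d k‖) :
    ∫⁻ x : AddCircle T, ENNReal.ofReal (‖∑' k, d k * fourier k x‖^2) ∂haarAddCircle
      = ∑' k, ENNReal.ofReal (‖d k‖^2) := by
  have h := parseval_cont (∑' k, d k • (fourier k : C(AddCircle T, ℂ)))
  simp_rw [series_coeff hd] at h
  rw [← ENNReal.ofReal_tsum_of_nonneg (fun k => by positivity) h.summable, h.tsum_eq,
    ofReal_integral_eq_lintegral_ofReal]
  · simp_rw [(series_apply hd _).tsum_eq]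
  · exact Continuous.integrable_of_hasCompactSupport (by fun_prop)
      (HasCompactSupport.of_compactSpace _)
  · exact ae_of_all _ fun x => by positivity

/-- Bessel's inequality on the level of Fourier coefficients -/
lemma bessel {N : ℕ} (u : Fin N → C(AddCircle T, ℂ))
    (hu : Orthonormal ℂ (fun n => ContinuousMap.toLp (E := ℂ) 2 (haarAddCircle (T := T)) ℂ (u n)))
    (v : ℤ → ℝ) (hv : Summable fun k => (v k)^2) (x : AddCircle T) :
    ∑ n, ‖∑' k, (v k : ℂ) * fourierCoeff (u n) k * fourier k x‖^2 ≤ ∑' k, (v k)^2 := by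
  have ho := hu.comp_linearIsometryEquiv (fourierBasis (T := T)).repr
  have hm : ∀ k, ‖(v k : ℂ) * (starRingEnd ℂ) (fourier k x)‖^2 = (v k)^2 := by
    intro k
    rw [norm_mul, RCLike.norm_conj, fourier_apply, Circle.norm_coe]
    simp
  let V : lp (fun _ : ℤ => ℂ) 2 := ⟨fun k => (v k : ℂ) * (starRingEnd ℂ) (fourier k x), by
    apply memℓp_gen
    simp only [ENNReal.toReal_ofNat, Real.rpow_ofNat]
    simp_rw [hm]; exact hv⟩
  have hV : ‖V‖^2 = ∑' k, (v k)^2 := by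
    have := lp.norm_rpow_eq_tsum (p := 2) (by simp) V
    simp only [ENNReal.toReal_ofNat, Real.rpow_ofNat] at this
    rw [this]
    exact tsum_congr hm
  have hB := ho.sum_inner_products_le (s := Finset.univ) (x := V)
  rw [hV] at hB
  refine le_trans (le_of_eq ?_) hB
  refine Finset.sum_congr rfl fun n _ => ?_
  rw [norm_inner_symm, lp.inner_eq_tsum]
  congr 2
  refine tsum_congr fun k => ?_
  have e : fourierBasis.repr ((ContinuousMap.toLp (E := ℂ) 2 (haarAddCircle (T := T)) ℂ) (u n)) k
      = fourierCoeff (u n) k := by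
    rw [fourierBasis_repr, fourierCoeff_toLp]
  simp only [Function.comp_apply, RCLike.inner_apply, V]
  rw [e]
  simp
  ring

end core
end LTaux

namespace LTaux
open Set Topology AddCircle

noncomputable def fk (α s : ℝ) (k : ℤ) : ℝ := |(k:ℝ)+α|^3/(|(k:ℝ)+α|^3+s^6)

lemma fk_nonneg (α s : ℝ) (k : ℤ) : 0 ≤ fk α s k := by unfold fk; positivity

lemma fk_den {α : ℝ} (hαZ : ∀ m : ℤ, α ≠ (m : ℝ)) (s : ℝ) (k : ℤ) :
    0 < |(k:ℝ)+α|^3+s^6 := by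
  have := kpos hαZ k
  positivity

lemma fk_le_one {α : ℝ} (hαZ : ∀ m : ℤ, α ≠ (m : ℝ)) (s : ℝ) (k : ℤ) : fk α s k ≤ 1 := by
  unfold fk
  rw [div_le_one (fk_den hαZ s k)]
  have : 0 ≤ s^6 := by positivity
  linarith

lemma one_sub_fk {α : ℝ} (hαZ : ∀ m : ℤ, α ≠ (m : ℝ)) (s : ℝ) (k : ℤ) :
    1 - fk α s k = s^6/(|(k:ℝ)+α|^3+s^6) := by
  have := fk_den hαZ s k
  unfold fk
  field_simp
  ring

lemma fk_continuous {α : ℝ} (hαZ : ∀ m : ℤ, α ≠ (m : ℝ)) (k : ℤ) :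
    Continuous (fun s => fk α s k) := by
  unfold fk
  exact continuous_const.div (by fun_prop) (fun s => (fk_den hαZ s k).ne')

lemma summable_norm_of_kin {α : ℝ} (hαZ : ∀ m : ℤ, α ≠ (m : ℝ)) {c : ℤ → ℂ}
    (h : Summable fun k : ℤ => |(k:ℝ)+α|^2 * ‖c k‖^2) : Summable fun k => ‖c k‖ := by
  refine Summable.of_nonneg_of_le (fun k => norm_nonneg _) (fun k => ?_)
    (h.add (summable_sq (α := α)))
  have := kpos hαZ k
  have e : |(k:ℝ)+α|^2 * ‖c k‖^2 + (|(k:ℝ)+α|^2)⁻¹ = 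
    (|(k:ℝ)+α| * ‖c k‖ - |(k:ℝ)+α|⁻¹)^2 + 2 * ‖c k‖ := by
    field_simp
    ring
  rw [e]
  nlinarith [sq_nonneg (|(k:ℝ)+α| * ‖c k‖ - |(k:ℝ)+α|⁻¹), norm_nonneg (c k)]

lemma l2_triangle {N : ℕ} (p q : Fin N → ℂ) :
    √(∑ n, ‖p n‖^2) ≤ √(∑ n, ‖q n‖^2) + √(∑ n, ‖p n - q n‖^2) := by
  have h := norm_add_le (WithLp.toLp 2 q : EuclideanSpace ℂ (Fin N)) (WithLp.toLp 2 (p - q))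
  rw [← WithLp.toLp_add, EuclideanSpace.norm_eq, EuclideanSpace.norm_eq,
    EuclideanSpace.norm_eq] at h
  simpa using h

section core
variable {T : ℝ} [hT : Fact (0 < T)]

lemma cutoff_bound {N : ℕ} (u : Fin N → C(AddCircle T, ℂ))
    (hu : Orthonormal ℂ (fun n => ContinuousMap.toLp (E := ℂ) 2 (haarAddCircle (T := T)) ℂ (u n)))
    {α : ℝ} (hαZ : ∀ m : ℤ, α ≠ (m : ℝ))
    (hc : ∀ n, Summable fun k => ‖fourierCoeff (u n) k‖) (x : AddCircle T) {s : ℝ} (hs : 0 < s) :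
    √(∑ n, ‖u n x‖^2) - √(supF α) * s ≤
      √(∑ n, ‖∑' k, (fk α s k : ℂ) * fourierCoeff (u n) k * fourier k x‖^2) := by
  have h1 := l2_triangle (fun n => u n x)
    (fun n => ∑' k, (fk α s k : ℂ) * fourierCoeff (u n) k * fourier k x)
  have hsm : Summable fun k : ℤ => (s^6/(|(k:ℝ)+α|^3+s^6))^2 := by
    refine ((summable_F hαZ (b := s^6) (by positivity)).mul_left ((s^6)^2)).congr fun k => ?_
    rw [div_pow, div_eq_mul_inv]
  have h2 := bessel u hu (fun k : ℤ => s^6/(|(k:ℝ)+α|^3+s^6)) hsm x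
  have h3 : ∀ n, u n x - ∑' k, (fk α s k : ℂ) * fourierCoeff (u n) k * fourier k x =
      ∑' k : ℤ, ((s^6/(|(k:ℝ)+α|^3+s^6) : ℝ) : ℂ) * fourierCoeff (u n) k * fourier k x := by
    intro n
    have a1 := has_pointwise_sum_fourier_series_of_summable (hc n).of_norm x
    have a2 : Summable fun k => (fk α s k : ℂ) * fourierCoeff (u n) k * fourier k x := by
      refine Summable.of_norm_bounded (hc n) fun k => ?_
      rw [norm_mul, norm_mul, fourier_apply, Circle.norm_coe, mul_one, Complex.norm_real,
        Real.norm_of_nonneg (fk_nonneg _ _ _)]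
      exact mul_le_of_le_one_left (norm_nonneg _) (fk_le_one hαZ s k)
    have a3 := a1.sub a2.hasSum
    rw [← a3.tsum_eq]
    refine tsum_congr fun k => ?_
    rw [← one_sub_fk hαZ, smul_eq_mul]
    push_cast
    ring
  simp_rw [h3] at h1
  have h4 : √(∑ n, ‖∑' k : ℤ, ((s^6/(|(k:ℝ)+α|^3+s^6) : ℝ) : ℂ) * fourierCoeff (u n) k *
      fourier k x‖^2) ≤ √(supF α) * s := by
    have : √(supF α) * s = √(s^2 * supF α) := by
      rw [Real.sqrt_mul (sq_nonneg s), Real.sqrt_sq hs.le, mul_comm]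
    rw [this]
    exact Real.sqrt_le_sqrt (h2.trans (sup_use hαZ hs))
  linarith

lemma core {N : ℕ} (u : Fin N → C(AddCircle T, ℂ))
    (hu : Orthonormal ℂ (fun n => ContinuousMap.toLp (E := ℂ) 2 (haarAddCircle (T := T)) ℂ (u n)))
    {α : ℝ} (hαZ : ∀ m : ℤ, α ≠ (m : ℝ))
    (hk : ∀ n, Summable fun k : ℤ => |(k:ℝ)+α|^2 * ‖fourierCoeff (u n) k‖^2) :
    ∫ x, (∑ n, ‖u n x‖^2)^3 ∂(haarAddCircle (T := T)) ≤
      15 * (supF α)^2 * Ic * ∑ n, ∑' k : ℤ, |(k:ℝ)+α|^2 * ‖fourierCoeff (u n) k‖^2 := by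
  have hc := fun n => summable_norm_of_kin hαZ (hk n)
  have hA := supF_pos hαZ
  have hI : 0 < Ic := by unfold Ic; positivity
  set G : Fin N → AddCircle T → ℝ → ℂ := fun n x s =>
    ∑' k, (fk α s k : ℂ) * fourierCoeff (u n) k * fourier k x with hG
  have hcont : ∀ n, Continuous (fun p : AddCircle T × ℝ => G n p.1 p.2) := by
    intro n
    refine continuous_tsum (fun k => ?_) (hc n) (fun k p => ?_)
    · have := fk_continuous hαZ k
      fun_prop
    · rw [norm_mul, norm_mul, fourier_apply, Circle.norm_coe, mul_one, Complex.norm_real,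
        Real.norm_of_nonneg (fk_nonneg _ _ _)]
      exact mul_le_of_le_one_left (norm_nonneg _) (fk_le_one hαZ _ k)
  -- lower bound
  have hlow : ∀ x : AddCircle T, ENNReal.ofReal ((∑ n, ‖u n x‖^2)^3/(15*(supF α)^2)) ≤
      ∫⁻ s in Ioi (0:ℝ), ENNReal.ofReal (4*s^3*∑ n, ‖G n x s‖^2) := by
    intro x
    have := lower (√(∑ n, ‖u n x‖^2)) (√(supF α)) (by positivity) (by positivity)
      (fun s => ∑ n, ‖G n x s‖^2) (fun s => by positivity)
      (fun s hs => cutoff_bound u hu hαZ hc x hs)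
    convert! this using 3
    · rw [show 6 = 2*3 from rfl, pow_mul, Real.sq_sqrt (by positivity)]
    · rw [show 4 = 2*2 from rfl, pow_mul, Real.sq_sqrt hA.le]
  -- upper bound
  have hup : ∫⁻ x, (∫⁻ s in Ioi (0:ℝ), ENNReal.ofReal (4*s^3*∑ n, ‖G n x s‖^2))
      ∂(haarAddCircle (T := T)) =
      ENNReal.ofReal (Ic * ∑ n, ∑' k : ℤ, |(k:ℝ)+α|^2 * ‖fourierCoeff (u n) k‖^2) := by
    rw [lintegral_lintegral_swap (by
      apply Measurable.aemeasurable
      apply ENNReal.measurable_ofReal.comp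
      apply Continuous.measurable
      fun_prop)]
    have inner : ∀ s ∈ Ioi (0:ℝ), ∫⁻ x, ENNReal.ofReal (4*s^3*∑ n, ‖G n x s‖^2)
        ∂(haarAddCircle (T := T)) =
        ∑ n, ∑' k, ENNReal.ofReal (4*s^3*(fk α s k)^2) *
          ENNReal.ofReal (‖fourierCoeff (u n) k‖^2) := by
      intro s hs
      have hs : 0 < s := hs
      have e1 : ∀ x, ENNReal.ofReal (4*s^3*∑ n, ‖G n x s‖^2) =
          ∑ n, ENNReal.ofReal (4*s^3) * ENNReal.ofReal (‖G n x s‖^2) := by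
        intro x
        rw [ENNReal.ofReal_mul (by positivity), ENNReal.ofReal_sum_of_nonneg
          (fun _ _ => by positivity), Finset.mul_sum]
      simp_rw [e1]
      have hmeas : ∀ n, Measurable (fun x => ENNReal.ofReal (‖G n x s‖^2)) := by
        intro n
        apply ENNReal.measurable_ofReal.comp
        apply Continuous.measurable
        have := (hcont n).comp (Continuous.prodMk_left s)
        exact (this.norm).pow 2
      rw [lintegral_finsetSum _ (fun n _ => (hmeas n).const_mul _)]
      refine Finset.sum_congr rfl fun n _ => ?_
      rw [lintegral_const_mul _ (hmeas n)]
      have hd : Summable fun k => ‖(fk α s k : ℂ) * fourierCoeff (u n) k‖ := by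
        refine Summable.of_nonneg_of_le (fun k => norm_nonneg _) (fun k => ?_) (hc n)
        rw [norm_mul, Complex.norm_real, Real.norm_of_nonneg (fk_nonneg _ _ _)]
        exact mul_le_of_le_one_left (norm_nonneg _) (fk_le_one hαZ _ k)
      rw [series_parseval hd, ← ENNReal.tsum_mul_left]
      refine tsum_congr fun k => ?_
      rw [← ENNReal.ofReal_mul (by positivity), ← ENNReal.ofReal_mul (by positivity), norm_mul,
        Complex.norm_real, Real.norm_of_nonneg (fk_nonneg _ _ _)]
      congr 1
      ring
    rw [setLIntegral_congr_fun measurableSet_Ioi inner]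
    have hm : ∀ k, Measurable fun s => ENNReal.ofReal (4*s^3*(fk α s k)^2) := by
      intro k
      apply ENNReal.measurable_ofReal.comp
      apply Continuous.measurable
      have := fk_continuous hαZ k
      fun_prop
    rw [lintegral_finsetSum _ (fun n _ => Measurable.tsum fun k => (hm k).mul_const _)]
    rw [Finset.mul_sum, ENNReal.ofReal_sum_of_nonneg
      (fun n _ => mul_nonneg hI.le (tsum_nonneg fun k => by positivity))]
    refine Finset.sum_congr rfl fun n _ => ?_
    rw [lintegral_tsum (fun k => ((hm k).mul_const _).aemeasurable), ← tsum_mul_left,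
      ENNReal.ofReal_tsum_of_nonneg (fun k => by positivity) ((hk n).mul_left _)]
    refine tsum_congr fun k => ?_
    rw [lintegral_mul_const _ (hm k)]
    have := lint_f _ (kpos hαZ k)
    unfold fk
    rw [this, ← ENNReal.ofReal_mul (by positivity)]
    congr 1
    ring
  have hfin := (lintegral_mono hlow).trans hup.le
  have hnn : 0 ≤ ∑ n, ∑' k : ℤ, |(k:ℝ)+α|^2 * ‖fourierCoeff (u n) k‖^2 :=
    Finset.sum_nonneg fun n _ => tsum_nonneg fun k => by positivity
  rw [← ofReal_integral_eq_lintegral_ofReal, ENNReal.ofReal_le_ofReal_iff (by positivity),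
    integral_div, div_le_iff₀ (by positivity)] at hfin
  · linarith
  · exact Continuous.integrable_of_hasCompactSupport (by fun_prop)
      (HasCompactSupport.of_compactSpace _)
  · exact ae_of_all _ fun x => by positivity

end core
end LTaux

namespace LTaux
open Set Topology AddCircle

lemma exists_lift {L : ℝ} (f : ℝ → ℂ) (hf : Continuous f) (hp : Function.Periodic f L) :
    ∃ F : C(AddCircle L, ℂ), ∀ x : ℝ, F (x : AddCircle L) = f x :=
  ⟨⟨hp.lift, by
    apply continuous_coinduced_dom.2
    exact hf⟩, fun x => rfl⟩

lemma haar_int {L : ℝ} [hL : Fact (0 < L)] {E : Type*} [NormedAddCommGroup E] [NormedSpace ℝ E]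
    (F : AddCircle L → E) :
    ∫ x, F x ∂(haarAddCircle (T := L)) = L⁻¹ • ∫ x in (0:ℝ)..L, F x := by
  have h := AddCircle.intervalIntegral_preimage L 0 F
  rw [zero_add] at h
  rw [h, integral_haarAddCircle]

end LTaux



open LTaux AddCircle in
/-- scalar Lieb–Thirring inequality for orthonormal systems, constant `K₂(α)`. -/
theorem lieb_thirring_orthonormal_K2
    (L : ℝ) (hL : 0 < L)
    (a : ℝ → ℝ) (ha : Continuous a) (haP : Function.Periodic a L)
    (α : ℝ) (hα : α = (1 / (2 * Real.pi)) * ∫ x in (0:ℝ)..L, a x)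
    (hαZ : ∀ m : ℤ, α ≠ (m : ℝ))
    (N : ℕ) (ψ : Fin N → ℝ → ℂ)
    (hψ : ∀ n, ContDiff ℝ 1 (ψ n))
    (hψP : ∀ n, Function.Periodic (ψ n) L)
    (horth : ∀ n m, ∫ x in (0:ℝ)..L, ψ n x * (starRingEnd ℂ) (ψ m x) =
      if n = m then 1 else 0) :
    ∫ x in (0:ℝ)..L, (∑ n, ‖ψ n x‖ ^ 2) ^ 3 ≤
      K2 α *
        ∑ n, ∫ x in (0:ℝ)..L, ‖Complex.I * deriv (ψ n) x - (a x : ℂ) * ψ n x‖ ^ 2 := by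
  have : Fact (0 < L) := ⟨hL⟩
  have hπ := Real.pi_pos
  have hflux : ∫ x in (0:ℝ)..L, a x = 2 * π * α := by
    rw [hα]; field_simp
  -- the phase
  set θ : ℝ → ℝ := fun x => (∫ t in (0:ℝ)..x, a t) - 2 * π * α / L * x with hθ
  have dθ : ∀ x, HasDerivAt θ (a x - 2 * π * α / L) x := by
    intro x
    have h1 := intervalIntegral.integral_hasDerivAt_right (ha.intervalIntegrable 0 x)
      ha.stronglyMeasurable.stronglyMeasurableAtFilter ha.continuousAt
    have h2 := (hasDerivAt_id x).const_mul (2 * π * α / L)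
    rw [mul_one] at h2
    exact h1.sub h2
  have pθ : Function.Periodic θ L := by
    intro x
    have h1 : ∫ t in (0:ℝ)..(x+L), a t = (∫ t in (0:ℝ)..x, a t) + ∫ t in x..(x+L), a t :=
      (intervalIntegral.integral_add_adjacent_intervals (ha.intervalIntegrable _ _)
        (ha.intervalIntegrable _ _)).symm
    have h2 := haP.intervalIntegral_add_eq x 0
    rw [zero_add, hflux] at h2
    simp only [hθ]
    rw [h1, h2]
    field_simp
    ring
  have cθ : Continuous θ := continuous_iff_continuousAt.2 fun x => (dθ x).continuousAt
  set e : ℝ → ℂ := fun x => (√L : ℂ) * Complex.exp (θ x * Complex.I) with he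
  have ce : Continuous e := by fun_prop
  have de : ∀ x, HasDerivAt e (e x * ((a x - 2 * π * α / L) * Complex.I)) x := by
    intro x
    have h1 := (((dθ x).ofReal_comp.mul_const Complex.I).cexp).const_mul (√L : ℂ)
    convert! h1 using 1
    simp only [he]
    push_cast
    ring
  have pe : Function.Periodic e L := fun x => by simp only [he, pθ x]
  have ne : ∀ x, ‖e x‖^2 = L := by
    intro x
    simp only [he]
    rw [norm_mul, Complex.norm_exp_ofReal_mul_I, mul_one, Complex.norm_real,
      Real.norm_of_nonneg (by positivity), Real.sq_sqrt hL.le]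
  have cψ : ∀ n, Continuous (ψ n) := fun n => (hψ n).continuous
  have cdψ : ∀ n, Continuous (deriv (ψ n)) := fun n => (hψ n).continuous_deriv le_rfl
  have dψ : ∀ n x, HasDerivAt (ψ n) (deriv (ψ n) x) x := fun n x =>
    ((hψ n).differentiable one_ne_zero x).hasDerivAt
  have pdψ : ∀ n, Function.Periodic (deriv (ψ n)) L := by
    intro n x
    rw [← deriv_comp_add_const]
    congr 1
    funext y
    exact hψP n y
  have cac : Continuous (fun x => (a x : ℂ)) := by fun_prop
  have hU := fun n => exists_lift (L := L) (fun x => e x * ψ n x) (ce.mul (cψ n))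
    (fun x => by simp only [pe x, hψP n x])
  have hW := fun n => exists_lift (L := L)
    (fun x => e x * (Complex.I * deriv (ψ n) x - (a x : ℂ) * ψ n x))
    (ce.mul ((continuous_const.mul (cdψ n)).sub (cac.mul (cψ n))))
    (fun x => by simp only [pe x, hψP n x, pdψ n x, haP x])
  choose U hU using hU
  choose W hW using hW
  -- orthonormality
  have hu : Orthonormal ℂ
      (fun n => ContinuousMap.toLp (E := ℂ) 2 (haarAddCircle (T := L)) ℂ (U n)) := by
    rw [orthonormal_iff_ite]
    intro i j
    rw [ContinuousMap.inner_toLp, haar_int (fun x => U j x * (starRingEnd ℂ) (U i x))]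
    simp_rw [hU]
    have : ∀ x, e x * ψ j x * (starRingEnd ℂ) (e x * ψ i x) =
        (L : ℂ) * (ψ j x * (starRingEnd ℂ) (ψ i x)) := by
      intro x
      have : e x * (starRingEnd ℂ) (e x) = L := by
        rw [Complex.mul_conj, Complex.normSq_eq_norm_sq, ne]
      rw [map_mul, ← this]
      ring
    simp_rw [this]
    rw [intervalIntegral.integral_const_mul, horth]
    have hL' : (L : ℂ) ≠ 0 := by exact_mod_cast hL.ne'
    by_cases h : i = j
    · simp [h, hL.ne']
    · simp [h, Ne.symm h]
  -- Fourier coefficients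
  have hcoef : ∀ n k, fourierCoeff (W n) k =
      -((2 * π / L : ℝ) : ℂ) * ((k:ℝ) + α : ℝ) * fourierCoeff (U n) k := by
    intro n k
    rw [fourierCoeff_eq_intervalIntegral _ _ 0, fourierCoeff_eq_intervalIntegral _ _ 0, zero_add]
    simp_rw [hU, hW, smul_eq_mul]
    set E : ℝ → ℂ := fun x => fourier (-k) (x : AddCircle L) with hE
    have dE : ∀ x, HasDerivAt E (-2 * π * Complex.I * k / L * E x) x := hasDerivAt_fourier_neg L k
    have cE : Continuous E := continuous_iff_continuousAt.2 fun x => (dE x).continuousAt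
    set P' : ℝ → ℂ := fun x => (-2 * π * Complex.I * k / L * E x) * (e x * ψ n x) +
      E x * ((e x * ((a x - 2 * π * α / L) * Complex.I)) * ψ n x + e x * deriv (ψ n) x) with hP'
    have cP' : Continuous P' := by
      have := cψ n
      have := cdψ n
      fun_prop
    have hP : ∫ x in (0:ℝ)..L, P' x = 0 := by
      have hd : ∀ x ∈ Set.uIcc 0 L, HasDerivAt (fun x => E x * (e x * ψ n x)) (P' x) x :=
        fun x _ => (dE x).mul ((de x).mul (dψ n x))
      rw [intervalIntegral.integral_eq_sub_of_hasDerivAt hd (cP'.intervalIntegrable _ _)]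
      have h1 : E L = E 0 := by simp only [hE]; rw [AddCircle.coe_period]; rfl
      have h2 := pe 0
      have h3 := hψP n 0
      rw [zero_add] at h2 h3
      rw [h1, h2, h3, sub_self]
    have hpt : ∀ x, E x * (e x * (Complex.I * deriv (ψ n) x - (a x : ℂ) * ψ n x)) =
        Complex.I * P' x + (-((2 * π / L : ℝ) : ℂ) * ((k:ℝ) + α : ℝ)) * (E x * (e x * ψ n x)) := by
      intro x
      simp only [hP']
      push_cast
      ring_nf
      simp only [Complex.I_sq]
      ring
    change (1/L) • ∫ x in (0:ℝ)..L, E x * (e x * (Complex.I * deriv (ψ n) x - (a x : ℂ) * ψ n x)) =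
      _ * ((1/L) • ∫ x in (0:ℝ)..L, E x * (e x * ψ n x))
    simp_rw [hpt]
    have i1 : IntervalIntegrable (fun x => Complex.I * P' x) volume 0 L :=
      (continuous_const.mul cP').intervalIntegrable _ _
    have i2 : IntervalIntegrable (fun x => (-((2 * π / L : ℝ) : ℂ) * ((k:ℝ) + α : ℝ)) *
        (E x * (e x * ψ n x))) volume 0 L :=
      (continuous_const.mul (cE.mul (ce.mul (cψ n)))).intervalIntegrable _ _
    rw [intervalIntegral.integral_add i1 i2,
      intervalIntegral.integral_const_mul, hP, mul_zero, zero_add,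
      intervalIntegral.integral_const_mul, mul_smul_comm]
  -- kinetic energy
  have hkin : ∀ n, HasSum (fun k : ℤ => (2*π/L)^2 * (|(k:ℝ)+α|^2 * ‖fourierCoeff (U n) k‖^2))
      (∫ x in (0:ℝ)..L, ‖Complex.I * deriv (ψ n) x - (a x : ℂ) * ψ n x‖ ^ 2) := by
    intro n
    have h := parseval_cont (W n)
    rw [haar_int (fun x => ‖W n x‖^2)] at h
    simp_rw [hW, hcoef, norm_mul, mul_pow, ne] at h
    rw [intervalIntegral.integral_const_mul, smul_eq_mul, inv_mul_cancel_left₀ hL.ne'] at h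
    convert! h using 2 with k
    rw [norm_neg, Complex.norm_real, Complex.norm_real, Real.norm_eq_abs, Real.norm_eq_abs, sq_abs,
      sq_abs]
    ring
  have hpos : (2*π/L)^2 ≠ 0 := by positivity
  have hk : ∀ n, Summable fun k : ℤ => |(k:ℝ)+α|^2 * ‖fourierCoeff (U n) k‖^2 := fun n =>
    (summable_mul_left_iff hpos).1 (hkin n).summable
  have hcore := core U hu hαZ hk
  rw [haar_int (fun x => (∑ n, ‖U n x‖^2)^3)] at hcore
  simp_rw [hU, norm_mul, mul_pow, ne, ← Finset.mul_sum, mul_pow] at hcore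
  rw [intervalIntegral.integral_const_mul, smul_eq_mul] at hcore
  have hT : ∀ n, (∫ x in (0:ℝ)..L, ‖Complex.I * deriv (ψ n) x - (a x : ℂ) * ψ n x‖ ^ 2) =
      (2*π/L)^2 * ∑' k : ℤ, |(k:ℝ)+α|^2 * ‖fourierCoeff (U n) k‖^2 := by
    intro n
    rw [← (hkin n).tsum_eq, tsum_mul_left]
  simp_rw [hT]
  rw [← Finset.mul_sum]
  generalize ∑ n, ∑' k : ℤ, |(k:ℝ)+α|^2 * ‖fourierCoeff (U n) k‖^2 = Q at hcore ⊢
  generalize ∫ x in (0:ℝ)..L, (∑ n, ‖ψ n x‖ ^ 2) ^ 3 = R at hcore ⊢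
  have e1 : L⁻¹ * (L^3 * R) = L^2 * R := by field_simp
  have e2 : K2 α * ((2*π/L)^2 * Q) = (15 * (supF α)^2 * Ic * Q) / L^2 := by
    unfold K2 Ic
    field_simp
    ring
  rw [e1] at hcore
  rw [e2, le_div_iff₀ (by positivity)]
  linarith
end

section
/- Let L > 0, M ≥ 1, let a : ℝ → ℝ be an L-periodic continuous function with magnetic flux α = (1/(2π))∫₀^L a(x)dx, α ∉ ℤ, and define K₂(α) = (5/(3√3 π)) · [sup_{b ≥ 0} b^{5/3} Σ_{k∈ℤ} (|k+α|³ + b)^{−2}]². Let ψ₁,…,ψ_N : ℝ → ℂ^M be L-periodic H¹ vector functions orthonormal in L²((0,L), ℂ^M), and let U(x) = Σ_{n=1}^N ψ_n(x) ψ_n(x)^* be the M×M matrix with entries U(x)_{jl} = Σ_n ψ_n(x,j) conj(ψ_n(x,l)). Then ∫₀^L Tr[U(x)³] dx ≤ K₂(α) · Σ_{n=1}^N ∫₀^L |i ψ_n'(x) − a(x)ψ_n(x)|²_{ℂ^M} dx. -/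
open MeasureTheory Real Filter

noncomputable def ltG (t : ℝ) : ℝ :=
  2 / 3 * (t ^ 2 / (1 + t ^ 3) + (1 / 6 * Real.log ((t ^ 2 - t + 1) / (1 + t) ^ 2) +
    1 / √3 * Real.arctan ((2 * t - 1) / √3)))

lemma ltG_deriv (t : ℝ) (ht : 0 ≤ t) : HasDerivAt ltG (2 * t * (1 / (1 + t ^ 3)) ^ 2) t := by
  have h3 : √3 ≠ 0 := by positivity
  have h33 : √3 ^ 2 = 3 := by norm_num
  have h1 : (1 + t ^ 3) ≠ 0 := by positivity
  have h2 : (1 + t) ≠ 0 := by positivity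
  have h4 : t ^ 2 - t + 1 ≠ 0 := by nlinarith [sq_nonneg (t - 1 / 2)]
  have d1 : HasDerivAt (fun t : ℝ => t ^ 2 / (1 + t ^ 3))
      ((2 * t * (1 + t ^ 3) - t ^ 2 * (3 * t ^ 2)) / (1 + t ^ 3) ^ 2) t := by
    have a1 : HasDerivAt (fun t : ℝ => t ^ 2) (2 * t) t := by simpa using hasDerivAt_pow 2 t
    have a2 : HasDerivAt (fun t : ℝ => 1 + t ^ 3) (3 * t ^ 2) t := by
      simpa using (hasDerivAt_pow 3 t).const_add 1
    exact a1.div a2 h1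
  have d2 : HasDerivAt (fun t : ℝ => (t ^ 2 - t + 1) / (1 + t) ^ 2)
      (((2 * t - 1) * (1 + t) ^ 2 - (t ^ 2 - t + 1) * (2 * (1 + t))) / ((1 + t) ^ 2) ^ 2) t := by
    have a1 : HasDerivAt (fun t : ℝ => t ^ 2 - t + 1) (2 * t - 1) t := by
      simpa using ((hasDerivAt_pow 2 t).sub (hasDerivAt_id t)).add_const 1
    have a2 : HasDerivAt (fun t : ℝ => (1 + t) ^ 2) (2 * (1 + t)) t := by
      have := ((hasDerivAt_id t).const_add 1).pow 2
      refine this.congr_deriv ?_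
      simp
    exact a1.div a2 (by positivity)
  have d3 := d2.log (by positivity)
  have d4 : HasDerivAt (fun t : ℝ => (2 * t - 1) / √3) (2 / √3) t := by
    simpa using (((hasDerivAt_id t).const_mul 2).sub_const 1).div_const (√3)
  have d5 := d4.arctan
  have := (d1.add ((d3.const_mul (1 / 6)).add (d5.const_mul (1 / √3)))).const_mul (2 / 3)
  refine (this.congr_deriv ?_)
  have h5 : 1 + ((2 * t - 1) / √3) ^ 2 = 4 / 3 * (t ^ 2 - t + 1) := by
    rw [div_pow, h33]; ring
  have h6 : 1 / √3 * (1 / (1 + ((2 * t - 1) / √3) ^ 2) * (2 / √3)) =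
     1 / 2 / (t ^ 2 - t + 1) := by
    rw [h5]; field_simp; rw [h33]; ring
  rw [h6]
  have h7 : 1 + t ^ 3 = (1 + t) * (t ^ 2 - t + 1) := by ring
  rw [h7]
  field_simp
  ring

lemma ltG_zero : ltG 0 = - (2 / 3 * (1 / √3 * (π / 6))) := by
  have : ((2 * 0 - 1) / √3) = - (√3)⁻¹ := by ring
  unfold ltG
  rw [this, Real.arctan_neg, Real.arctan_inv_sqrt_three]
  simp

lemma ltG_tendsto : Tendsto ltG atTop (nhds (2 / 3 * (1 / √3 * (π / 2)))) := by
  have h3 : 0 < √3 := by positivity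
  have t1 : Tendsto (fun t : ℝ => t ^ 2 / (1 + t ^ 3)) atTop (nhds 0) := by
    have : Tendsto (fun t : ℝ => 1 / t) atTop (nhds 0) := by
      simpa using tendsto_inv_atTop_zero (𝕜 := ℝ)
    refine squeeze_zero' ?_ ?_ this
    · filter_upwards [eventually_gt_atTop 0] with t ht; positivity
    · filter_upwards [eventually_gt_atTop 0] with t ht
      rw [div_le_div_iff₀ (by positivity) ht]; nlinarith
  have t2 : Tendsto (fun t : ℝ => (t ^ 2 - t + 1) / (1 + t) ^ 2) atTop (nhds 1) := by
    have : Tendsto (fun t : ℝ => 1 - 3 * (t / (1 + t) ^ 2)) atTop (nhds (1 - 3 * 0)) := by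
      refine Tendsto.const_sub _ (Tendsto.const_mul _ ?_)
      have : Tendsto (fun t : ℝ => 1 / t) atTop (nhds 0) := by
        simpa using tendsto_inv_atTop_zero (𝕜 := ℝ)
      refine squeeze_zero' ?_ ?_ this
      · filter_upwards [eventually_gt_atTop 0] with t ht; positivity
      · filter_upwards [eventually_gt_atTop 0] with t ht
        rw [div_le_div_iff₀ (by positivity) ht]; nlinarith
    rw [mul_zero, sub_zero] at this
    refine this.congr' ?_
    filter_upwards [eventually_gt_atTop 0] with t ht
    have h2 : (1 + t) ≠ 0 := by positivity
    field_simp; ring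
  have t3 : Tendsto (fun t : ℝ => Real.log ((t ^ 2 - t + 1) / (1 + t) ^ 2)) atTop (nhds 0) := by
    have := t2.log one_ne_zero
    simpa using this
  have t4 : Tendsto (fun t : ℝ => Real.arctan ((2 * t - 1) / √3)) atTop (nhds (π / 2)) := by
    have h : Tendsto (fun t : ℝ => (2 * t - 1) / √3) atTop atTop := by
      refine Tendsto.atTop_div_const h3 ?_
      exact tendsto_atTop_add_const_right _ _ (tendsto_id.const_mul_atTop two_pos)
    exact (tendsto_nhds_of_tendsto_nhdsWithin Real.tendsto_arctan_atTop).comp h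
  have := (t1.add ((t3.const_mul (1 / 6)).add (t4.const_mul (1 / √3)))).const_mul (2 / 3)
  simp only [mul_zero, zero_add] at this
  exact this

lemma ltG_cont {p : ℝ} (hp : 0 < p) : ContinuousOn (fun t : ℝ => 2 * t * (p ^ 3 / (p ^ 3 + t ^ 3)) ^ 2) (Set.Ici 0) := by
  refine ContinuousOn.mul (by fun_prop) (ContinuousOn.pow (ContinuousOn.div (by fun_prop) (by fun_prop) ?_) 2)
  intro t (ht : 0 ≤ t)
  positivity

lemma lt_int_le {p T : ℝ} (hp : 0 < p) (hT : 0 ≤ T) :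
    ∫ t in (0:ℝ)..T, 2 * t * (p ^ 3 / (p ^ 3 + t ^ 3)) ^ 2 ≤ 4 * π / (9 * √3) * p ^ 2 := by
  have hd : ∀ t ∈ Set.uIcc 0 T, HasDerivAt (fun t => p ^ 2 * ltG (t / p))
      (2 * t * (p ^ 3 / (p ^ 3 + t ^ 3)) ^ 2) t := by
    intro t ht
    rw [Set.uIcc_of_le hT] at ht
    have ht0 := ht.1
    have := ((ltG_deriv (t / p) (by positivity)).comp t ((hasDerivAt_id t).div_const p)).const_mul (p ^ 2)
    refine this.congr_deriv ?_
    have h1 : p ^ 3 + t ^ 3 ≠ 0 := by positivity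
    have h2 : 1 + (t / p) ^ 3 = (p ^ 3 + t ^ 3) / p ^ 3 := by field_simp
    rw [h2]
    field_simp
  rw [intervalIntegral.integral_eq_sub_of_hasDerivAt hd]
  · have hm : MonotoneOn ltG (Set.Ici 0) := by
      refine monotoneOn_of_deriv_nonneg (convex_Ici 0) ?_ ?_ ?_
      · intro t ht; exact (ltG_deriv t ht).continuousAt.continuousWithinAt
      · intro t ht; rw [interior_Ici] at ht
        exact (ltG_deriv t (le_of_lt ht)).differentiableAt.differentiableWithinAt
      · intro t ht; rw [interior_Ici] at ht
        rw [(ltG_deriv t (le_of_lt ht)).deriv]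
        have : 0 < t := ht
        positivity
    have hl : ltG (T / p) ≤ 2 / 3 * (1 / √3 * (π / 2)) := by
      refine ge_of_tendsto ltG_tendsto ?_
      filter_upwards [eventually_ge_atTop (T / p)] with s hs
      have : 0 ≤ T / p := by positivity
      exact hm this (this.trans hs) hs
    rw [zero_div, ltG_zero]
    have h3 : 0 < √3 := by positivity
    calc p ^ 2 * ltG (T / p) - p ^ 2 * -(2 / 3 * (1 / √3 * (π / 6)))
        ≤ p ^ 2 * (2 / 3 * (1 / √3 * (π / 2))) - p ^ 2 * -(2 / 3 * (1 / √3 * (π / 6))) := by gcongr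
      _ = _ := by field_simp; ring
  · refine ContinuousOn.intervalIntegrable ?_
    rw [Set.uIcc_of_le hT]
    exact (ltG_cont hp).mono Set.Icc_subset_Ici_self

lemma lam_bound {lam c T : ℝ} (hl : 0 ≤ lam) (hc : 0 < c) (hT : lam / c ≤ T) (h : ℝ → ℝ)
    (hh : ContinuousOn h (Set.Icc 0 T)) (h0 : ∀ t, 0 ≤ h t)
    (hb : ∀ t, 0 ≤ t → √lam ≤ √(h t) + √(c * t)) :
    lam ^ 3 / (15 * c ^ 2) ≤ ∫ t in (0:ℝ)..T, 2 * t * h t := by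
  have hlc : 0 ≤ lam / c := by positivity
  have hcont : ContinuousOn (fun t => 2 * t * h t) (Set.Icc 0 T) := by fun_prop
  have hval : ∫ t in (0:ℝ)..(lam / c), (2 * lam * t - 4 * √lam * √c * t ^ ((3:ℝ)/2) + 2 * c * t ^ 2)
      = lam ^ 3 / (15 * c ^ 2) := by
    have i1 : IntervalIntegrable (fun t : ℝ => 2 * lam * t) volume 0 (lam / c) :=
      Continuous.intervalIntegrable (by fun_prop) _ _
    have i3 : IntervalIntegrable (fun t : ℝ => 2 * c * t ^ 2) volume 0 (lam / c) :=
      Continuous.intervalIntegrable (by fun_prop) _ _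
    have i2 : IntervalIntegrable (fun t : ℝ => 4 * √lam * √c * t ^ ((3:ℝ)/2)) volume 0 (lam / c) :=
      (intervalIntegral.intervalIntegrable_rpow' (by norm_num)).const_mul _
    rw [intervalIntegral.integral_add (i1.sub i2) i3, intervalIntegral.integral_sub i1 i2,
      intervalIntegral.integral_const_mul, intervalIntegral.integral_const_mul,
      intervalIntegral.integral_const_mul, integral_id, integral_pow, integral_rpow (by left; norm_num)]
    have hr : (lam / c) ^ ((3:ℝ)/2 + 1) = (lam / c) ^ 2 * (√lam / √c) := by
      rw [← Real.sqrt_div hl, Real.sqrt_eq_rpow, ← Real.rpow_natCast, ← Real.rpow_add' hlc (by norm_num)]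
      norm_num
    rw [hr, Real.zero_rpow (by norm_num)]
    have e1 : √lam * √lam = lam := Real.mul_self_sqrt hl
    have e3 : √c ≠ 0 := by positivity
    have e4 : 4 * √lam * √c * (((lam / c) ^ 2 * (√lam / √c) - 0) / (3 / 2 + 1)) = 8 / 5 * lam * (lam / c) ^ 2 := by
      calc _ = 8 / 5 * (√lam * √lam) * (lam / c) ^ 2 * (√c / √c) := by ring
        _ = _ := by rw [e1, div_self e3]; ring
    rw [e4]
    norm_num
    field_simp
    ring
  rw [← hval]
  have step1 : ∫ t in (0:ℝ)..(lam / c), (2 * lam * t - 4 * √lam * √c * t ^ ((3:ℝ)/2) + 2 * c * t ^ 2) ≤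
      ∫ t in (0:ℝ)..(lam / c), 2 * t * h t := by
    refine intervalIntegral.integral_mono_on hlc ?_ ?_ ?_
    · refine Continuous.intervalIntegrable ?_ _ _
      have : Continuous (fun t : ℝ => t ^ ((3:ℝ)/2)) := Real.continuous_rpow_const (by norm_num)
      fun_prop
    · refine ContinuousOn.intervalIntegrable ?_
      rw [Set.uIcc_of_le hlc]
      exact hcont.mono (Set.Icc_subset_Icc_right hT)
    · intro t ht
      have ht0 := ht.1
      have hct : c * t ≤ lam := by have := ht.2; rw [le_div_iff₀ hc] at this; linarith
      have e1 : √lam - √(c * t) ≤ √(h t) := by linarith [hb t ht0]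
      have e2 : 0 ≤ √lam - √(c * t) := by linarith [Real.sqrt_le_sqrt hct]
      have e3 : (√lam - √(c * t)) ^ 2 ≤ h t := by
        calc _ ≤ √(h t) ^ 2 := by gcongr
          _ = _ := Real.sq_sqrt (h0 t)
      have e4 : t ^ ((3:ℝ)/2) = t * √t := by
        rw [Real.sqrt_eq_rpow]
        nth_rw 2 [← Real.rpow_one t]
        rw [← Real.rpow_add' ht0 (by norm_num)]; norm_num
      have e5 : √(c * t) = √c * √t := Real.sqrt_mul hc.le t
      calc _ = 2 * t * (√lam - √(c * t)) ^ 2 := by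
            rw [e4, sub_sq, Real.sq_sqrt hl, Real.sq_sqrt (by positivity), e5]; ring
        _ ≤ _ := by gcongr
  refine step1.trans (intervalIntegral.integral_mono_interval le_rfl hlc hT ?_ ?_)
  · refine (ae_restrict_iff' measurableSet_Ioc).2 (Eventually.of_forall fun t ht => ?_)
    have := h0 t
    have := ht.1
    simp only [Pi.zero_apply]
    positivity
  · refine ContinuousOn.intervalIntegrable ?_
    rwa [Set.uIcc_of_le (hlc.trans hT)]


/-- one sided telescoping sum bound -/
lemma nat_tsum_bound {t : ℝ} (ht : 1 ≤ t) :
    Summable (fun k : ℕ => t / ((k:ℝ) + t) ^ 2) ∧ ∑' k : ℕ, t / ((k:ℝ) + t) ^ 2 ≤ 2 := by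
  have key : ∀ n : ℕ, ∑ k ∈ Finset.range n, t / ((k:ℝ) + t) ^ 2 ≤ t / (t - 1 / 2) - t / (n + t - 1 / 2) := by
    intro n
    induction n with
    | zero => simp
    | succ n ih =>
      rw [Finset.sum_range_succ]
      have : t / ((n:ℝ) + t) ^ 2 ≤ t / (n + t - 1 / 2) - t / ((n + 1 : ℕ) + t - 1 / 2) := by
        have h0 : (0:ℝ) ≤ n := Nat.cast_nonneg n
        have h1 : (0:ℝ) < n + t - 1 / 2 := by linarith
        have h2 : (0:ℝ) < (n + 1 : ℕ) + t - 1 / 2 := by push_cast; linarith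
        rw [div_sub_div _ _ h1.ne' h2.ne', div_le_div_iff₀ (by positivity) (by positivity)]
        push_cast
        nlinarith
      linarith
  have key2 : ∀ n : ℕ, ∑ k ∈ Finset.range n, t / ((k:ℝ) + t) ^ 2 ≤ 2 := by
    intro n
    have h0 : (0:ℝ) ≤ n := Nat.cast_nonneg n
    have h1 : (0:ℝ) < n + t - 1 / 2 := by linarith
    have : 0 ≤ t / (n + t - 1 / 2) := by positivity
    have : t / (t - 1 / 2) ≤ 2 := by rw [div_le_iff₀ (by linarith)]; linarith
    linarith [key n]
  have hnn : ∀ k : ℕ, 0 ≤ t / ((k:ℝ) + t) ^ 2 := fun k => by positivity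
  exact ⟨summable_of_sum_range_le hnn key2, Real.tsum_le_of_sum_range_le hnn key2⟩

/-- two sided sum bound -/
lemma int_tsum_bound (α : ℝ) {t : ℝ} (ht : 1 ≤ t) :
    Summable (fun k : ℤ => t / (|(k:ℝ) + α| + t) ^ 2) ∧
      ∑' k : ℤ, t / (|(k:ℝ) + α| + t) ^ 2 ≤ 4 := by
  obtain ⟨hs, hb⟩ := nat_tsum_bound ht
  set g : ℤ → ℝ := fun k => t / (|(k:ℝ) + Int.fract α| + t) ^ 2 with hg
  have hp : ∀ n : ℕ, g n ≤ t / ((n:ℝ) + t) ^ 2 := by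
    intro n
    have := Int.fract_nonneg α
    simp only [hg, Int.cast_natCast]
    rw [abs_of_nonneg (by positivity)]
    gcongr
    linarith
  have hm : ∀ n : ℕ, g (-((n:ℤ) + 1)) ≤ t / ((n:ℝ) + t) ^ 2 := by
    intro n
    have := Int.fract_lt_one α
    have h0 : (0:ℝ) ≤ n := Nat.cast_nonneg n
    simp only [hg]
    push_cast
    rw [abs_of_neg (by linarith)]
    gcongr
    linarith
  have hg0 : ∀ k, 0 ≤ g k := fun k => by simp only [hg]; positivity
  have s1 : Summable (fun n : ℕ => g n) := hs.of_nonneg_of_le (fun _ => hg0 _) hp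
  have s2 : Summable (fun n : ℕ => g (-((n:ℤ) + 1))) := hs.of_nonneg_of_le (fun _ => hg0 _) hm
  have H := HasSum.of_nat_of_neg_add_one s1.hasSum s2.hasSum
  have hle : (∑' n : ℕ, g n) + ∑' n : ℕ, g (-((n:ℤ) + 1)) ≤ 4 := by
    have := s1.tsum_le_tsum hp hs
    have := s2.tsum_le_tsum hm hs
    linarith
  have he : (fun k : ℤ => t / (|(k:ℝ) + α| + t) ^ 2) = g ∘ (Equiv.addRight ⌊α⌋) := by
    ext k
    simp only [hg, Function.comp, Equiv.coe_addRight]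
    push_cast
    rw [add_assoc, Int.floor_add_fract]
  rw [he]
  refine ⟨(Equiv.summable_iff _).2 H.summable, ?_⟩
  have : ∑' k, (g ∘ (Equiv.addRight ⌊α⌋)) k = ∑' k, g k := Equiv.tsum_eq (Equiv.addRight ⌊α⌋) g
  rw [this, H.tsum_eq]
  exact hle

lemma abs_shift_pos {α : ℝ} (hαZ : ∀ m : ℤ, α ≠ (m : ℝ)) (k : ℤ) : 0 < |(k:ℝ) + α| := by
  rw [abs_pos]
  intro h
  exact hαZ (-k) (by push_cast; linarith)

/-- Uniform positive lower bound is replaced with a sup bound on each term. -/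
lemma summable_inv_sq (α : ℝ) :
    Summable (fun k : ℤ => (|(k:ℝ) + α| ^ 2)⁻¹) := by
  obtain ⟨hs, -⟩ := int_tsum_bound α le_rfl
  refine Summable.of_norm_bounded_eventually (hs.mul_left 4) ?_
  have : ∀ᶠ k : ℤ in cofinite, 1 ≤ |(k:ℝ) + α| := by
    have h1 : Tendsto (fun k : ℤ => |(k:ℝ) + α|) cofinite atTop := by
      have : Tendsto (fun k : ℤ => |(k:ℝ)|) cofinite atTop := by
        exact (tendsto_norm_cocompact_atTop (E := ℝ)).comp Int.tendsto_coe_cofinite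
      refine tendsto_atTop_mono (f := fun k : ℤ => |(k:ℝ)| - |α|) (fun k => ?_)
        (tendsto_atTop_add_const_right _ _ this)
      have := abs_sub_abs_le_abs_sub (k:ℝ) (-α)
      simpa using this
    exact h1.eventually_ge_atTop 1
  filter_upwards [this] with k hk
  rw [norm_of_nonneg (by positivity), inv_eq_one_div, mul_div, div_le_div_iff₀ (by positivity) (by positivity)]
  nlinarith

lemma term_bound {p t : ℝ} (hp : 0 < p) (ht : 0 < t) :
    t ^ 5 * ((p ^ 3 + t ^ 3) ^ 2)⁻¹ ≤ 4 * (t / (p + t) ^ 2) := by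
  rw [← div_eq_mul_inv, mul_div, div_le_div_iff₀ (by positivity) (by positivity)]
  have h1 : t ^ 4 * (p + t) ^ 2 ≤ 4 * (p ^ 3 + t ^ 3) ^ 2 := by
    have h2 : t ^ 2 * (p + t) ≤ 2 * (p ^ 3 + t ^ 3) := by
      rcases le_total p t with h | h
      · nlinarith [pow_pos hp 3, mul_nonneg (sq_nonneg t) (sub_nonneg.2 h)]
      · have : t ^ 2 * p ≤ p ^ 2 * p := by gcongr
        nlinarith [pow_pos ht 3]
    calc _ = (t ^ 2 * (p + t)) ^ 2 := by ring
      _ ≤ (2 * (p ^ 3 + t ^ 3)) ^ 2 := by gcongr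
      _ = _ := by ring
  nlinarith

lemma rpow_cube {t : ℝ} (ht : 0 ≤ t) : (t ^ 3) ^ ((5:ℝ)/3) = t ^ 5 := by
  rw [← Real.rpow_natCast, ← Real.rpow_mul ht, ← Real.rpow_natCast]; norm_num

lemma Fsum_summable {α : ℝ} (hαZ : ∀ m : ℤ, α ≠ (m : ℝ)) {b : ℝ} (hb : 0 ≤ b) :
    Summable (fun k : ℤ => ((|(k : ℝ) + α| ^ 3 + b) ^ 2)⁻¹) := by
  have h := (summable_inv_sq α)
  have h3 : Summable (fun k : ℤ => (|(k:ℝ) + α| ^ 6)⁻¹) := by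
    refine Summable.of_norm_bounded_eventually h ?_
    have := h.tendsto_cofinite_zero.eventually_le_const (show (0:ℝ) < 1 by norm_num)
    filter_upwards [this] with k hk
    have hp := abs_shift_pos hαZ k
    rw [norm_of_nonneg (by positivity)]
    have h0 : 0 ≤ (|(k:ℝ) + α| ^ 2)⁻¹ := by positivity
    calc (|(k:ℝ) + α| ^ 6)⁻¹ = ((|(k:ℝ) + α| ^ 2)⁻¹) ^ 3 := by rw [inv_pow, ← pow_mul]
      _ ≤ ((|(k:ℝ) + α| ^ 2)⁻¹) ^ 1 := pow_le_pow_of_le_one h0 hk (by norm_num)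
      _ = _ := pow_one _
  refine h3.of_nonneg_of_le (fun k => by positivity) fun k => ?_
  have hp := abs_shift_pos hαZ k
  have : |(k:ℝ) + α| ^ 6 = (|(k:ℝ) + α| ^ 3) ^ 2 := by rw [← pow_mul]
  rw [this]
  gcongr
  linarith

lemma Fsum_bdd {α : ℝ} (hαZ : ∀ m : ℤ, α ≠ (m : ℝ)) :
    BddAbove (Set.range fun b : {x : ℝ // 0 ≤ x} => Fsum α b.1) := by
  set C := ∑' k : ℤ, ((|(k : ℝ) + α| ^ 3 + 0) ^ 2)⁻¹ with hC
  refine ⟨max 16 C, ?_⟩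
  rintro _ ⟨⟨b, hb⟩, rfl⟩
  simp only [Fsum]
  rcases le_total b 1 with h | h
  · refine le_trans ?_ (le_max_right _ _)
    have h1 : b ^ ((5:ℝ)/3) ≤ 1 := Real.rpow_le_one hb h (by norm_num)
    have h2 : ∑' k : ℤ, ((|(k : ℝ) + α| ^ 3 + b) ^ 2)⁻¹ ≤ C := by
      refine (Fsum_summable hαZ hb).tsum_le_tsum (fun k => ?_) (Fsum_summable hαZ le_rfl)
      have hp := abs_shift_pos hαZ k
      gcongr
    have h3 : 0 ≤ ∑' k : ℤ, ((|(k : ℝ) + α| ^ 3 + b) ^ 2)⁻¹ := tsum_nonneg fun k => by positivity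
    calc _ ≤ 1 * ∑' k : ℤ, ((|(k : ℝ) + α| ^ 3 + b) ^ 2)⁻¹ := by gcongr
      _ ≤ _ := by rwa [one_mul]
  · refine le_trans ?_ (le_max_left _ _)
    set t := b ^ ((1:ℝ)/3) with ht
    have ht1 : 1 ≤ t := Real.one_le_rpow h (by norm_num)
    have hbt : b = t ^ 3 := by
      rw [ht, ← Real.rpow_natCast, ← Real.rpow_mul hb]; norm_num
    obtain ⟨hs, hb4⟩ := int_tsum_bound α ht1
    rw [hbt, rpow_cube (by linarith), ← tsum_mul_left]
    calc _ ≤ ∑' k : ℤ, 4 * (t / (|(k:ℝ) + α| + t) ^ 2) := by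
          refine Summable.tsum_le_tsum (fun k => term_bound (abs_shift_pos hαZ k) (by linarith)) ?_ (hs.mul_left 4)
          exact (Fsum_summable hαZ (by positivity)).mul_left _
      _ ≤ 16 := by rw [tsum_mul_left]; linarith

lemma Fsum_le_supF {α : ℝ} (hαZ : ∀ m : ℤ, α ≠ (m : ℝ)) {t : ℝ} (ht : 0 ≤ t) :
    t ^ 5 * ∑' k : ℤ, ((|(k : ℝ) + α| ^ 3 + t ^ 3) ^ 2)⁻¹ ≤ supF α := by
  have := le_ciSup (Fsum_bdd hαZ) (⟨t ^ 3, by positivity⟩ : {x : ℝ // 0 ≤ x})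
  simpa only [supF, Fsum, rpow_cube ht] using this

lemma supF_pos {α : ℝ} (hαZ : ∀ m : ℤ, α ≠ (m : ℝ)) : 0 < supF α := by
  refine lt_of_lt_of_le ?_ (Fsum_le_supF hαZ (t := 1) (by norm_num))
  have := (Fsum_summable hαZ (b := 1 ^ 3) (by norm_num)).tsum_pos (fun k => by positivity) 0 (by positivity)
  simpa using this

open Matrix in
lemma matrix_spec {M N : ℕ} (v : Fin N → Fin M → ℂ) :
    ∃ (e : OrthonormalBasis (Fin M) ℂ (EuclideanSpace ℂ (Fin M))) (lam : Fin M → ℝ),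
      (∀ i, lam i = ∑ n, ‖∑ j, (starRingEnd ℂ) (e i j) * v n j‖ ^ 2) ∧
      (Matrix.trace ((Matrix.of fun j l => ∑ n, v n j * (starRingEnd ℂ) (v n l)) ^ 3)).re =
        ∑ i, lam i ^ 3 := by
  set V : Matrix (Fin M) (Fin M) ℂ := Matrix.of fun j l => ∑ n, v n j * (starRingEnd ℂ) (v n l) with hV
  have hH : V.IsHermitian := by
    ext j l
    simp [hV, Matrix.conjTranspose_apply, mul_comm]
  refine ⟨hH.eigenvectorBasis, hH.eigenvalues, fun i => ?_, ?_⟩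
  · have h1 := hH.eigenvalues_eq i
    have h2 : (star (hH.eigenvectorBasis i).ofLp ⬝ᵥ (V *ᵥ (hH.eigenvectorBasis i).ofLp)) =
        ((∑ n, ‖∑ j, (starRingEnd ℂ) (hH.eigenvectorBasis i j) * v n j‖ ^ 2 : ℝ) : ℂ) := by
      set e := (hH.eigenvectorBasis i).ofLp
      push_cast
      simp_rw [← Complex.mul_conj']
      simp only [dotProduct, mulVec, hV, Matrix.of_apply, Finset.sum_mul, Finset.mul_sum, map_sum, map_mul,
        Complex.conj_conj, Pi.star_apply, RCLike.star_def]
      rw [Finset.sum_comm]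
      conv_lhs => enter [2, l]; rw [Finset.sum_comm]
      rw [Finset.sum_comm]
      refine Finset.sum_congr rfl fun n _ => ?_
      refine Finset.sum_congr rfl fun l _ => ?_
      refine Finset.sum_congr rfl fun j _ => ?_
      ring
    rw [h1, h2]
    exact Complex.ofReal_re _
  · have hs := hH.spectral_theorem
    have h3 : V ^ 3 = (Unitary.conjStarAlgAut ℂ _ hH.eigenvectorUnitary)
        (Matrix.diagonal (RCLike.ofReal ∘ hH.eigenvalues) ^ 3) := by
      rw [map_pow, ← hs]
    rw [h3, Unitary.conjStarAlgAut_apply, Matrix.trace_mul_cycle]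
    simp [Matrix.diagonal_pow, Matrix.trace_diagonal, ← Complex.ofReal_pow]

lemma ebasis_sum {M : ℕ} (e : OrthonormalBasis (Fin M) ℂ (EuclideanSpace ℂ (Fin M)))
    (w : Fin M → ℂ) : ∑ i, ‖∑ j, (starRingEnd ℂ) (e i j) * w j‖ ^ 2 = ∑ j, ‖w j‖ ^ 2 := by
  have := e.sum_sq_norm_inner_right (WithLp.toLp 2 w)
  rw [EuclideanSpace.norm_sq_eq] at this
  simp only [PiLp.inner_apply, RCLike.inner_apply] at this
  rw [← this]
  refine Finset.sum_congr rfl fun i _ => ?_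
  simp only [mul_comm]

lemma ebasis_sum2 {M N : ℕ} (e : OrthonormalBasis (Fin M) ℂ (EuclideanSpace ℂ (Fin M)))
    (w : Fin N → Fin M → ℂ) :
    ∑ i, ∑ n, ‖∑ j, (starRingEnd ℂ) (e i j) * w n j‖ ^ 2 = ∑ n, ∑ j, ‖w n j‖ ^ 2 := by
  rw [Finset.sum_comm]
  exact Finset.sum_congr rfl fun n _ => ebasis_sum e (w n)

lemma ebasis_norm {M : ℕ} (e : OrthonormalBasis (Fin M) ℂ (EuclideanSpace ℂ (Fin M)))
    (i : Fin M) : ∑ j, ‖e i j‖ ^ 2 = 1 := by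
  rw [← EuclideanSpace.norm_sq_eq, e.norm_eq_one]; norm_num

lemma minkowski {N : ℕ} (x y : Fin N → ℂ) :
    √(∑ n, ‖x n + y n‖ ^ 2) ≤ √(∑ n, ‖x n‖ ^ 2) + √(∑ n, ‖y n‖ ^ 2) := by
  have := norm_add_le (WithLp.toLp 2 x : EuclideanSpace ℂ (Fin N)) (WithLp.toLp 2 y)
  simpa [EuclideanSpace.norm_eq] using this


lemma pointwise_bound {M N : ℕ} (v : Fin N → Fin M → ℂ) (H : ℝ → Fin N → Fin M → ℂ) {c T : ℝ}
    (hc : 0 < c) (hT0 : 0 ≤ T) (hT : (∑ n, ∑ j, ‖v n j‖ ^ 2) / c ≤ T)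
    (hH : ∀ n j, ContinuousOn (fun t => H t n j) (Set.Icc 0 T))
    (hlow : ∀ (e : Fin M → ℂ) (t : ℝ), 0 ≤ t →
      ∑ n, ‖∑ j, (starRingEnd ℂ) (e j) * (v n j - H t n j)‖ ^ 2 ≤ c * t * ∑ j, ‖e j‖ ^ 2) :
    (Matrix.trace ((Matrix.of fun j l => ∑ n, v n j * (starRingEnd ℂ) (v n l)) ^ 3)).re / (15 * c ^ 2)
      ≤ ∫ t in (0:ℝ)..T, 2 * t * ∑ n, ∑ j, ‖H t n j‖ ^ 2 := by
  obtain ⟨e, lam, hlam, htr⟩ := matrix_spec v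
  rw [htr]
  have hc1 : ∀ i, ContinuousOn (fun t => ∑ n, ‖∑ j, (starRingEnd ℂ) (e i j) * H t n j‖ ^ 2) (Set.Icc 0 T) := by
    intro i
    fun_prop
  have hInt0 : ∀ i, IntervalIntegrable
      (fun t => 2 * t * ∑ n, ‖∑ j, (starRingEnd ℂ) (e i j) * H t n j‖ ^ 2) volume 0 T := by
    intro i
    refine ContinuousOn.intervalIntegrable ?_
    rw [Set.uIcc_of_le hT0]
    exact ContinuousOn.mul (by fun_prop) (hc1 i)
  have hl0 : ∀ i, 0 ≤ lam i := fun i => by rw [hlam]; positivity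
  have hlT : ∀ i, lam i / c ≤ T := by
    intro i
    refine le_trans ?_ hT
    gcongr
    have : ∑ n, ∑ j, ‖v n j‖ ^ 2 = ∑ i, lam i := by
      simp only [hlam]
      exact (ebasis_sum2 e v).symm
    rw [this]
    exact Finset.single_le_sum (fun i _ => hl0 i) (Finset.mem_univ i)
  have heq : ∀ t, 2 * t * ∑ n, ∑ j, ‖H t n j‖ ^ 2 =
      ∑ i, 2 * t * ∑ n, ‖∑ j, (starRingEnd ℂ) (e i j) * H t n j‖ ^ 2 := by
    intro t
    rw [← Finset.mul_sum, ebasis_sum2 e (H t)]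
  simp only [heq]
  rw [intervalIntegral.integral_finsetSum (fun i _ => hInt0 i), Finset.sum_div]
  refine Finset.sum_le_sum fun i _ => ?_
  refine lam_bound (hl0 i) hc (hlT i) _ (hc1 i) (fun t => by positivity) fun t ht => ?_
  have h1 := minkowski (fun n => ∑ j, (starRingEnd ℂ) (e i j) * H t n j)
    (fun n => ∑ j, (starRingEnd ℂ) (e i j) * (v n j - H t n j))
  have h2 : ∀ n, ∑ j, (starRingEnd ℂ) (e i j) * H t n j +
      ∑ j, (starRingEnd ℂ) (e i j) * (v n j - H t n j) = ∑ j, (starRingEnd ℂ) (e i j) * v n j := by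
    intro n
    rw [← Finset.sum_add_distrib]
    refine Finset.sum_congr rfl fun j _ => by ring
  simp only [h2, ← hlam] at h1
  refine h1.trans ?_
  gcongr
  have := hlow (e i) t ht
  rwa [ebasis_norm, mul_one] at this

/-- The exponentials `e_k`. -/
noncomputable def ek (L : ℝ) (k : ℤ) (x : ℝ) : ℂ := Complex.exp (2 * π * Complex.I * k * x / L)

/-- Fourier coefficients. -/
noncomputable def cf (L : ℝ) (f : ℝ → ℂ) (k : ℤ) : ℂ :=
  (1 / L : ℂ) * ∫ x in (0:ℝ)..L, ek L (-k) x * f x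

lemma ek_norm (L : ℝ) (k : ℤ) (x : ℝ) : ‖ek L k x‖ = 1 := by
  have : (2 * π * Complex.I * k * x / L : ℂ) = ((2 * π * k * x / L : ℝ) : ℂ) * Complex.I := by
    push_cast; ring
  rw [ek, this, Complex.norm_exp_ofReal_mul_I]

lemma ek_cont (L : ℝ) (k : ℤ) : Continuous (ek L k) := by
  unfold ek; fun_prop

lemma ek_mul (L : ℝ) (k l : ℤ) (x : ℝ) : ek L k x * ek L l x = ek L (k + l) x := by
  rw [ek, ek, ek, ← Complex.exp_add]; congr 1; push_cast; ring

lemma ek_deriv (L : ℝ) (k : ℤ) (x : ℝ) :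
    HasDerivAt (ek L k) ((2 * π * Complex.I * k / L) * ek L k x) x := by
  have h : HasDerivAt (fun x : ℝ => (2 * π * Complex.I * k / L) * (x : ℂ)) (2 * π * Complex.I * k / L) x := by
    simpa using (Complex.ofRealCLM.hasDerivAt (x := x)).const_mul (2 * π * Complex.I * k / L : ℂ)
  have := h.cexp
  have h2 : (fun x : ℝ => Complex.exp ((2 * π * Complex.I * k / L) * (x : ℂ))) = ek L k := by
    ext x; rw [ek]; congr 1; ring
  rw [h2] at this
  convert this using 1
  rw [ek, mul_comm]; congr 2; ring

lemma ek_per {L : ℝ} (hL : 0 < L) (k : ℤ) : ek L k L = 1 := by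
  have : (L : ℂ) ≠ 0 := by exact_mod_cast hL.ne'
  rw [ek, mul_div_assoc, div_self this, mul_one, ← Complex.exp_int_mul_two_pi_mul_I k]
  congr 1; ring

lemma ek_zero (L : ℝ) (k : ℤ) : ek L k 0 = 1 := by simp [ek]

lemma ek_eq_fourier (L : ℝ) (k : ℤ) (x : ℝ) : fourier k (x : AddCircle L) = ek L k x := by
  rw [fourier_coe_apply, ek]

lemma cf_eq_On {L : ℝ} (hL : 0 < L) (f : ℝ → ℂ) (k : ℤ) : cf L f k = fourierCoeffOn hL f k := by
  rw [fourierCoeffOn_eq_integral, cf, Complex.real_smul]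
  simp only [smul_eq_mul, fourier_coe_apply, ek, sub_zero]
  push_cast
  rfl

lemma cf_parseval {L : ℝ} (hL : 0 < L) {f : ℝ → ℂ} (hf : Continuous f) :
    HasSum (fun k => ‖cf L f k‖ ^ 2) (L⁻¹ * ∫ x in (0:ℝ)..L, ‖f x‖ ^ 2) := by
  have h2 : MemLp f 2 (volume.restrict (Set.Ioc 0 L)) := by
    obtain ⟨C, hC⟩ := (isCompact_Icc (a := (0:ℝ)) (b := L)).exists_bound_of_continuousOn hf.continuousOn
    refine MemLp.of_bound hf.aestronglyMeasurable C ?_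
    refine (ae_restrict_iff' measurableSet_Ioc).2 (Eventually.of_forall fun t ht => ?_)
    exact hC t (Set.Ioc_subset_Icc_self ht)
  have := hasSum_sq_fourierCoeffOn hL h2
  simpa [cf_eq_On hL] using this

lemma cf_inv {L : ℝ} (hL : 0 < L) {f : ℝ → ℂ} (hf : Continuous f) (hp : Function.Periodic f L)
    (hs : Summable (cf L f)) (x : ℝ) : HasSum (fun k => cf L f k * ek L k x) (f x) := by
  have : Fact (0 < L) := ⟨hL⟩
  let F : C(AddCircle L, ℂ) := ⟨hp.lift, continuous_quot_lift _ hf⟩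
  have hF : ∀ y : ℝ, F (y : AddCircle L) = f y := fun y => hp.lift_coe y
  have hc : fourierCoeff F = cf L f := by
    ext k
    rw [fourierCoeff_eq_intervalIntegral _ _ 0, cf, Complex.real_smul]
    simp only [smul_eq_mul, ek_eq_fourier, hF, zero_add]
    push_cast
    rfl
  have := has_pointwise_sum_fourier_series_of_summable (f := F) (by rwa [hc]) (x : AddCircle L)
  simpa only [hc, hF, smul_eq_mul, ek_eq_fourier] using this

lemma cf_deriv {L : ℝ} (hL : 0 < L) {f f' : ℝ → ℂ} (hf : ∀ x, HasDerivAt f (f' x) x)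
    (hf' : Continuous f') (hp : f L = f 0) (k : ℤ) :
    cf L f' k = (2 * π * Complex.I * k / L) * cf L f k := by
  have hfc : Continuous f := continuous_iff_continuousAt.2 fun x => (hf x).continuousAt
  have hec := ek_cont L (-k)
  have h1 := intervalIntegral.integral_eq_sub_of_hasDerivAt (a := 0) (b := L)
    (fun x _ => (ek_deriv L (-k) x).mul (hf x)) (Continuous.intervalIntegrable (by fun_prop) _ _)
  simp only [Pi.mul_apply] at h1
  rw [ek_per hL, ek_zero, hp, sub_self, intervalIntegral.integral_add
    (Continuous.intervalIntegrable (by fun_prop) _ _)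
    (Continuous.intervalIntegrable (by fun_prop) _ _)] at h1
  have h2 : ∫ x in (0:ℝ)..L, 2 * π * Complex.I * ((-k : ℤ) : ℂ) / L * ek L (-k) x * f x =
      - (2 * π * Complex.I * k / L) * ∫ x in (0:ℝ)..L, ek L (-k) x * f x := by
    rw [← intervalIntegral.integral_const_mul]
    congr 1
    ext x
    push_cast
    ring
  rw [h2] at h1
  rw [cf, cf]
  linear_combination (1 / L : ℂ) * h1

lemma cf_add {L : ℝ} {f g : ℝ → ℂ} (hf : Continuous f) (hg : Continuous g) (k : ℤ) :
    cf L (fun x => f x + g x) k = cf L f k + cf L g k := by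
  have hec := ek_cont L (-k)
  simp only [cf, mul_add]
  rw [intervalIntegral.integral_add (Continuous.intervalIntegrable (by fun_prop) _ _)
    (Continuous.intervalIntegrable (by fun_prop) _ _)]
  ring

lemma cf_const_mul {L : ℝ} (c : ℂ) (f : ℝ → ℂ) (k : ℤ) :
    cf L (fun x => c * f x) k = c * cf L f k := by
  simp only [cf]
  have : ∀ x, ek L (-k) x * (c * f x) = c * (ek L (-k) x * f x) := fun x => by ring
  simp only [this, intervalIntegral.integral_const_mul]
  ring

lemma cf_sum {L : ℝ} {ι : Type*} (s : Finset ι) {f : ι → ℝ → ℂ} (hf : ∀ i, Continuous (f i)) (k : ℤ) :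
    cf L (fun x => ∑ i ∈ s, f i x) k = ∑ i ∈ s, cf L (f i) k := by
  have hec := ek_cont L (-k)
  simp only [cf, Finset.mul_sum]
  rw [intervalIntegral.integral_finsetSum
    (fun i _ => Continuous.intervalIntegrable (by have := hf i; fun_prop) _ _), Finset.mul_sum]

lemma ek_integral {L : ℝ} (hL : 0 < L) {k : ℤ} (hk : k ≠ 0) : ∫ x in (0:ℝ)..L, ek L k x = 0 := by
  have hec := ek_cont L k
  have h1 := intervalIntegral.integral_eq_sub_of_hasDerivAt (a := 0) (b := L)
    (fun x _ => ek_deriv L k x) (Continuous.intervalIntegrable (by fun_prop) _ _)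
  rw [ek_per hL, ek_zero, sub_self, intervalIntegral.integral_const_mul] at h1
  refine (mul_eq_zero.1 h1).resolve_left ?_
  have : (L : ℂ) ≠ 0 := by exact_mod_cast hL.ne'
  have : (k : ℂ) ≠ 0 := by exact_mod_cast hk
  have : (π : ℂ) ≠ 0 := by exact_mod_cast Real.pi_ne_zero
  simp [*]

lemma tsum_ek_cont {L : ℝ} {d : ℤ → ℂ} (hd : Summable fun k => ‖d k‖) :
    Continuous (fun x => ∑' k, d k * ek L k x) := by
  refine continuous_tsum (fun k => (continuous_const.mul (ek_cont L k))) hd fun k x => ?_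
  rw [norm_mul, ek_norm, mul_one]

lemma cf_tsum {L : ℝ} (hL : 0 < L) {d : ℤ → ℂ} (hd : Summable fun k => ‖d k‖) (l : ℤ) :
    cf L (fun x => ∑' k, d k * ek L k x) l = d l := by
  have hLc : (L : ℂ) ≠ 0 := by exact_mod_cast hL.ne'
  have hterm : ∀ k x, ek L (-l) x * (d k * ek L k x) = d k * ek L (k - l) x := by
    intro k x
    rw [mul_left_comm, ek_mul]; congr 2; ring
  have h : HasSum (fun k => ∫ x in (0:ℝ)..L, ek L (-l) x * (d k * ek L k x))
      (∫ x in (0:ℝ)..L, ∑' k, ek L (-l) x * (d k * ek L k x)) := by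
    refine intervalIntegral.hasSum_integral_of_dominated_convergence (fun k _ => ‖d k‖) ?_ ?_ ?_ ?_ ?_
    · intro k
      refine Continuous.aestronglyMeasurable ?_
      have := ek_cont L (-l)
      have := ek_cont L k
      fun_prop
    · intro k
      refine Eventually.of_forall fun x _ => ?_
      rw [norm_mul, norm_mul, ek_norm, ek_norm]; simp
    · exact Eventually.of_forall fun x _ => hd
    · simp
    · refine Eventually.of_forall fun x _ => Summable.hasSum ?_
      refine Summable.of_norm_bounded hd fun k => ?_
      rw [norm_mul, norm_mul, ek_norm, ek_norm]; simp
  have h2 : HasSum (fun k => ∫ x in (0:ℝ)..L, ek L (-l) x * (d k * ek L k x)) (L * d l) := by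
    have : ∀ k, ∫ x in (0:ℝ)..L, ek L (-l) x * (d k * ek L k x) = if k = l then L * d l else 0 := by
      intro k
      simp only [hterm, intervalIntegral.integral_const_mul]
      split_ifs with hk
      · subst hk
        simp [ek, mul_comm]
      · rw [ek_integral hL (sub_ne_zero.2 hk), mul_zero]
    simp only [this]
    exact hasSum_ite_eq l _
  rw [cf]
  simp only [← tsum_mul_left]
  rw [h.unique h2]
  field_simp


lemma cs_summable {w d : ℤ → ℂ} (hw : Summable fun k => ‖w k‖ ^ 2) (hd : Summable fun k => ‖d k‖ ^ 2) :
    Summable (fun k => w k * d k) := by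
  refine Summable.of_norm_bounded (hw.add hd) fun k => ?_
  rw [norm_mul]
  nlinarith [sq_nonneg (‖w k‖ - ‖d k‖), sq_nonneg ‖w k‖, sq_nonneg ‖d k‖]

lemma cs_tsum {w d : ℤ → ℂ} (hw : Summable fun k => ‖w k‖ ^ 2) (hd : Summable fun k => ‖d k‖ ^ 2) :
    ‖∑' k, w k * d k‖ ^ 2 ≤ (∑' k, ‖w k‖ ^ 2) * ∑' k, ‖d k‖ ^ 2 := by
  have h := ((cs_summable hw hd).hasSum.norm).pow 2
  refine le_of_tendsto h (Eventually.of_forall fun s => ?_)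
  calc ‖∑ k ∈ s, w k * d k‖ ^ 2 ≤ (∑ k ∈ s, ‖w k‖ * ‖d k‖) ^ 2 := by
        gcongr
        refine (norm_sum_le _ _).trans (le_of_eq ?_)
        simp only [norm_mul]
    _ ≤ (∑ k ∈ s, ‖w k‖ ^ 2) * ∑ k ∈ s, ‖d k‖ ^ 2 := Finset.sum_mul_sq_le_sq_mul_sq _ _ _
    _ ≤ _ := by
        gcongr
        · exact hw.sum_le_tsum s (fun _ _ => by positivity)
        · exact hd.sum_le_tsum s (fun _ _ => by positivity)

lemma orth_norm {L : ℝ} {M N : ℕ} (χ : Fin N → Fin M → ℝ → ℂ)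
    (hc : ∀ n j, Continuous (χ n j))
    (horth : ∀ n m, ∫ x in (0:ℝ)..L, ∑ j, χ n j x * (starRingEnd ℂ) (χ m j x) =
      if n = m then 1 else 0) (t : Fin N → ℂ) :
    ∑ j, ∫ x in (0:ℝ)..L, ‖∑ n, t n * χ n j x‖ ^ 2 = ∑ n, ‖t n‖ ^ 2 := by
  have hInt0 : ∀ j, IntervalIntegrable (fun x => ‖∑ n, t n * χ n j x‖ ^ 2) volume 0 L :=
    fun j => Continuous.intervalIntegrable (by fun_prop) _ _
  rw [← intervalIntegral.integral_finsetSum (fun j _ => hInt0 j)]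
  apply Complex.ofReal_injective
  rw [← intervalIntegral.integral_ofReal]
  have h1 : ∀ x, ((∑ j, ‖∑ n, t n * χ n j x‖ ^ 2 : ℝ) : ℂ) =
      ∑ n, ∑ m, t n * (starRingEnd ℂ) (t m) * ∑ j, χ n j x * (starRingEnd ℂ) (χ m j x) := by
    intro x
    push_cast
    simp_rw [← Complex.mul_conj', map_sum, Finset.sum_mul, Finset.mul_sum, map_mul]
    rw [Finset.sum_comm]
    refine Finset.sum_congr rfl fun n _ => ?_
    rw [Finset.sum_comm]
    refine Finset.sum_congr rfl fun m _ => ?_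
    refine Finset.sum_congr rfl fun j _ => ?_
    ring
  simp only [h1]
  have hcc : ∀ n j, Continuous fun x => (starRingEnd ℂ) (χ n j x) := fun n j =>
    Complex.continuous_conj.comp (hc n j)
  rw [intervalIntegral.integral_finsetSum
    (fun n _ => Continuous.intervalIntegrable (by fun_prop) _ _)]
  push_cast
  refine Finset.sum_congr rfl fun n _ => ?_
  rw [intervalIntegral.integral_finsetSum
    (fun n _ => Continuous.intervalIntegrable (by fun_prop) _ _)]
  simp only [intervalIntegral.integral_const_mul, horth]
  simp [Complex.mul_conj']

lemma bessel {L : ℝ} (hL : 0 < L) {M N : ℕ} (χ : Fin N → Fin M → ℝ → ℂ)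
    (hc : ∀ n j, Continuous (χ n j))
    (horth : ∀ n m, ∫ x in (0:ℝ)..L, ∑ j, χ n j x * (starRingEnd ℂ) (χ m j x) =
      if n = m then 1 else 0) {w : ℤ → ℂ} (hw : Summable fun k => ‖w k‖ ^ 2) (e : Fin M → ℂ) :
    ∑ n, ‖∑ j, e j * ∑' k, w k * cf L (χ n j) k‖ ^ 2 ≤
      L⁻¹ * (∑' k, ‖w k‖ ^ 2) * ∑ j, ‖e j‖ ^ 2 := by
  set z : Fin N → ℂ := fun n => ∑ j, e j * ∑' k, w k * cf L (χ n j) k with hz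
  set t : Fin N → ℂ := fun n => (starRingEnd ℂ) (z n) with ht
  set S := ∑ n, ‖z n‖ ^ 2 with hS
  have hS0 : 0 ≤ S := by positivity
  set g : Fin M → ℝ → ℂ := fun j x => ∑ n, t n * χ n j x with hg
  have hgc : ∀ j, Continuous (g j) := fun j => by simp only [hg]; fun_prop
  have hcsum : ∀ n j, Summable (fun k => w k * cf L (χ n j) k) := fun n j =>
    cs_summable hw (cf_parseval hL (hc n j)).summable
  have hcfg : ∀ j k, cf L (g j) k = ∑ n, t n * cf L (χ n j) k := by
    intro j k
    simp only [hg]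
    rw [cf_sum _ (fun n => by fun_prop)]
    simp only [cf_const_mul]
  have h1 : (S : ℂ) = ∑ j, e j * ∑' k, w k * cf L (g j) k := by
    have : ∀ j, ∑' k, w k * cf L (g j) k = ∑ n, t n * ∑' k, w k * cf L (χ n j) k := by
      intro j
      simp only [hcfg, Finset.mul_sum, ← tsum_mul_left]
      rw [Summable.tsum_finsetSum (fun n _ => ?_)]
      · refine Finset.sum_congr rfl fun n _ => tsum_congr fun k => by ring
      · refine ((hcsum n j).mul_left (t n)).congr fun k => by ring
    simp only [this, hS]
    push_cast
    simp_rw [← Complex.mul_conj', Finset.mul_sum]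
    rw [Finset.sum_comm]
    refine Finset.sum_congr rfl fun n _ => ?_
    nth_rw 1 [hz]
    simp only [Finset.sum_mul]
    refine Finset.sum_congr rfl fun j _ => ?_
    simp only [ht]
    ring
  set W := ∑' k, ‖w k‖ ^ 2 with hW
  have hW0 : 0 ≤ W := tsum_nonneg fun k => by positivity
  have h2 : ∀ j, ‖∑' k, w k * cf L (g j) k‖ ^ 2 ≤ W * (L⁻¹ * ∫ x in (0:ℝ)..L, ‖g j x‖ ^ 2) := by
    intro j
    rw [← (cf_parseval hL (hgc j)).tsum_eq]
    exact cs_tsum hw (cf_parseval hL (hgc j)).summable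
  have h3 : ∑ j, ∫ x in (0:ℝ)..L, ‖g j x‖ ^ 2 = S := by
    simp only [hg]
    rw [orth_norm χ hc horth t]
    simp [hS, ht]
  have h4 : S ^ 2 ≤ (∑ j, ‖e j‖ ^ 2) * (W * (L⁻¹ * S)) := by
    calc S ^ 2 = ‖(S : ℂ)‖ ^ 2 := by rw [Complex.norm_real, norm_of_nonneg hS0]
      _ ≤ (∑ j, ‖e j‖ * ‖∑' k, w k * cf L (g j) k‖) ^ 2 := by
        rw [h1]
        gcongr
        refine (norm_sum_le _ _).trans (le_of_eq ?_)
        simp only [norm_mul]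
      _ ≤ (∑ j, ‖e j‖ ^ 2) * ∑ j, ‖∑' k, w k * cf L (g j) k‖ ^ 2 := Finset.sum_mul_sq_le_sq_mul_sq _ _ _
      _ ≤ (∑ j, ‖e j‖ ^ 2) * ∑ j, W * (L⁻¹ * ∫ x in (0:ℝ)..L, ‖g j x‖ ^ 2) := by
        gcongr with j
        exact h2 j
      _ = _ := by rw [← Finset.mul_sum, ← Finset.mul_sum, h3]
  rcases hS0.eq_or_lt with h | h
  · rw [← h]; positivity
  · have : S * S ≤ (L⁻¹ * W * ∑ j, ‖e j‖ ^ 2) * S := by nlinarith [h4]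
    exact le_of_mul_le_mul_right this h

/-- kinetic energy in Fourier space -/
lemma kin_hasSum {L : ℝ} (hL : 0 < L) (α : ℝ) {f f' : ℝ → ℂ} (hf : ∀ x, HasDerivAt f (f' x) x)
    (hf' : Continuous f') (hp : f L = f 0) :
    HasSum (fun k : ℤ => |(k:ℝ) + α| ^ 2 * ‖cf L f k‖ ^ 2)
      (L / (2 * π) ^ 2 *
        ∫ x in (0:ℝ)..L, ‖Complex.I * f' x - ((2 * π * α / L : ℝ) : ℂ) * f x‖ ^ 2) := by
  have hfc : Continuous f := continuous_iff_continuousAt.2 fun x => (hf x).continuousAt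
  have hLc : (L : ℂ) ≠ 0 := by exact_mod_cast hL.ne'
  have h := cf_parseval hL (f := fun x => Complex.I * f' x + (-((2 * π * α / L : ℝ) : ℂ)) * f x) (by fun_prop)
  have hk : ∀ k, cf L (fun x => Complex.I * f' x + (-((2 * π * α / L : ℝ) : ℂ)) * f x) k =
      ((-(2 * π / L) * (k + α) : ℝ) : ℂ) * cf L f k := by
    intro k
    rw [cf_add (by fun_prop) (by fun_prop), cf_const_mul, cf_const_mul, cf_deriv hL hf hf' hp]
    push_cast
    field_simp
    linear_combination (k * cf L f k : ℂ) * Complex.I_sq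
  have h2 := h.mul_left (L ^ 2 / (2 * π) ^ 2)
  have hpi := Real.pi_ne_zero
  have e1 : (fun k : ℤ => |(k:ℝ) + α| ^ 2 * ‖cf L f k‖ ^ 2) = fun k => L ^ 2 / (2 * π) ^ 2 *
      ‖cf L (fun x => Complex.I * f' x + (-((2 * π * α / L : ℝ) : ℂ)) * f x) k‖ ^ 2 := by
    funext k
    rw [hk, norm_mul, Complex.norm_real, norm_mul, norm_neg, norm_of_nonneg (show 0 ≤ 2 * π / L by positivity),
      Real.norm_eq_abs]
    field_simp
  have e2 : ∀ x, Complex.I * f' x - ((2 * π * α / L : ℝ) : ℂ) * f x =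
      Complex.I * f' x + (-((2 * π * α / L : ℝ) : ℂ)) * f x := fun x => by ring
  have e3 : ∀ y : ℝ, L / (2 * π) ^ 2 * y = L ^ 2 / (2 * π) ^ 2 * (L⁻¹ * y) := fun y => by
    field_simp
  rw [e1]
  simp only [e2]
  rw [e3]
  exact h2

lemma cf_summable {α : ℝ} (hαZ : ∀ m : ℤ, α ≠ (m : ℝ)) {c : ℤ → ℂ}
    (hc : Summable (fun k : ℤ => |(k:ℝ) + α| ^ 2 * ‖c k‖ ^ 2)) : Summable (fun k => ‖c k‖) := by
  refine Summable.of_norm_bounded (hc.add (summable_inv_sq α)) fun k => ?_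
  have hp := abs_shift_pos hαZ k
  set p := |(k:ℝ) + α|
  rw [norm_norm]
  have h1 : ‖c k‖ = (p * ‖c k‖) * p⁻¹ := by field_simp
  have h2 : p ^ 2 * ‖c k‖ ^ 2 = (p * ‖c k‖) ^ 2 := by ring
  rw [h2, ← inv_pow]
  nth_rw 1 [h1]
  nlinarith [sq_nonneg (p * ‖c k‖ - p⁻¹), sq_nonneg (p * ‖c k‖), sq_nonneg (p⁻¹)]

/-- high-pass weight -/
noncomputable def hw (α t : ℝ) (k : ℤ) : ℝ := |(k:ℝ) + α| ^ 3 / (|(k:ℝ) + α| ^ 3 + |t| ^ 3)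

lemma hw_nonneg (α t : ℝ) (k : ℤ) : 0 ≤ hw α t k := by unfold hw; positivity

lemma hw_le_one {α : ℝ} (hαZ : ∀ m : ℤ, α ≠ (m : ℝ)) (t : ℝ) (k : ℤ) : hw α t k ≤ 1 := by
  have hp := abs_shift_pos hαZ k
  unfold hw
  rw [div_le_one (by positivity)]
  have : 0 ≤ |t| ^ 3 := by positivity
  linarith

lemma hw_cont {α : ℝ} (hαZ : ∀ m : ℤ, α ≠ (m : ℝ)) (k : ℤ) : Continuous fun t => hw α t k := by
  unfold hw
  refine Continuous.div (by fun_prop) (by fun_prop) fun t => ?_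
  have hp := abs_shift_pos hαZ k
  positivity

/-- high-frequency part -/
noncomputable def Hh (L α : ℝ) (c : ℤ → ℂ) (t x : ℝ) : ℂ := ∑' k, ((hw α t k : ℂ) * c k) * ek L k x

lemma Hh_norm_le {α : ℝ} (hαZ : ∀ m : ℤ, α ≠ (m : ℝ)) (c : ℤ → ℂ) (t : ℝ) (k : ℤ) :
    ‖(hw α t k : ℂ) * c k‖ ≤ ‖c k‖ := by
  rw [norm_mul, Complex.norm_real, norm_of_nonneg (hw_nonneg _ _ _)]
  exact mul_le_of_le_one_left (norm_nonneg _) (hw_le_one hαZ t k)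

lemma Hh_cont (L : ℝ) {α : ℝ} (hαZ : ∀ m : ℤ, α ≠ (m : ℝ)) {c : ℤ → ℂ} (hc : Summable fun k => ‖c k‖) :
    Continuous (fun q : ℝ × ℝ => Hh L α c q.1 q.2) := by
  unfold Hh
  refine continuous_tsum (fun k => ?_) hc fun k q => ?_
  · have h1 := ek_cont L k
    have h2 := hw_cont hαZ k
    have h3 : Continuous fun q : ℝ × ℝ => hw α q.1 k := h2.comp continuous_fst
    fun_prop
  · rw [norm_mul, ek_norm, mul_one]
    exact Hh_norm_le hαZ c _ k

lemma Hh_L2 {L : ℝ} (hL : 0 < L) {α : ℝ} (hαZ : ∀ m : ℤ, α ≠ (m : ℝ)) {c : ℤ → ℂ}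
    (hc : Summable fun k => ‖c k‖) (t : ℝ) :
    ∫ x in (0:ℝ)..L, ‖Hh L α c t x‖ ^ 2 = L * ∑' k, (hw α t k) ^ 2 * ‖c k‖ ^ 2 := by
  have hs : Summable fun k => ‖(hw α t k : ℂ) * c k‖ :=
    hc.of_nonneg_of_le (fun _ => norm_nonneg _) (Hh_norm_le hαZ c t)
  have h := (cf_parseval hL (tsum_ek_cont (L := L) hs)).tsum_eq
  simp only [cf_tsum hL hs] at h
  have h2 : ∀ k, ‖(hw α t k : ℂ) * c k‖ ^ 2 = (hw α t k) ^ 2 * ‖c k‖ ^ 2 := by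
    intro k
    rw [norm_mul, Complex.norm_real, mul_pow, norm_of_nonneg (hw_nonneg _ _ _)]
  simp only [h2] at h
  unfold Hh
  rw [h]
  field_simp

lemma Hh_energy {L : ℝ} (hL : 0 < L) {α : ℝ} (hαZ : ∀ m : ℤ, α ≠ (m : ℝ)) {c : ℤ → ℂ}
    (hc : Summable (fun k : ℤ => |(k:ℝ) + α| ^ 2 * ‖c k‖ ^ 2)) {T : ℝ} (hT : 0 ≤ T) :
    ∫ t in (0:ℝ)..T, 2 * t * ∫ x in (0:ℝ)..L, ‖Hh L α c t x‖ ^ 2 ≤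
      L * (4 * π / (9 * √3)) * ∑' k : ℤ, |(k:ℝ) + α| ^ 2 * ‖c k‖ ^ 2 := by
  have hc1 := cf_summable hαZ hc
  have hc2 : Summable (fun k => ‖c k‖ ^ 2) := by
    refine Summable.of_norm_bounded_eventually hc1 ?_
    filter_upwards [hc1.tendsto_cofinite_zero.eventually_le_const (show (0:ℝ) < 1 by norm_num)] with k hk
    rw [norm_of_nonneg (by positivity)]
    nlinarith [norm_nonneg (c k)]
  simp only [Hh_L2 hL hαZ hc1]
  have hsum : HasSum (fun k => ∫ t in (0:ℝ)..T, 2 * t * (L * ((hw α t k) ^ 2 * ‖c k‖ ^ 2)))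
      (∫ t in (0:ℝ)..T, 2 * t * (L * ∑' k, (hw α t k) ^ 2 * ‖c k‖ ^ 2)) := by
    have hb : ∀ t k, (hw α t k) ^ 2 * ‖c k‖ ^ 2 ≤ ‖c k‖ ^ 2 := by
      intro t k
      refine mul_le_of_le_one_left (by positivity) ?_
      exact pow_le_one₀ (hw_nonneg _ _ _) (hw_le_one hαZ t k)
    refine intervalIntegral.hasSum_integral_of_dominated_convergence
      (fun k t => 2 * T * (L * ‖c k‖ ^ 2)) ?_ ?_ ?_ ?_ ?_
    · intro k
      refine Continuous.aestronglyMeasurable ?_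
      have h2 := hw_cont hαZ k
      fun_prop
    · intro k
      refine Eventually.of_forall fun t ht => ?_
      rw [Set.uIoc_of_le hT] at ht
      have ht0 := ht.1
      have ht1 := ht.2
      rw [norm_of_nonneg (by positivity)]
      have := hb t k
      gcongr
    · exact Eventually.of_forall fun t _ => (hc2.mul_left L).mul_left (2 * T)
    · simp
    · refine Eventually.of_forall fun t _ => ?_
      refine ((Summable.hasSum ?_).mul_left L).mul_left (2 * t)
      exact hc2.of_nonneg_of_le (fun k => by positivity) (hb t)
  rw [← hsum.tsum_eq, ← tsum_mul_left]
  refine hsum.summable.tsum_le_tsum (fun k => ?_) (hc.mul_left _)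
  have hp := abs_shift_pos hαZ k
  have h1 : ∫ t in (0:ℝ)..T, 2 * t * (L * ((hw α t k) ^ 2 * ‖c k‖ ^ 2)) =
      (L * ‖c k‖ ^ 2) * ∫ t in (0:ℝ)..T, 2 * t * (|(k:ℝ) + α| ^ 3 / (|(k:ℝ) + α| ^ 3 + t ^ 3)) ^ 2 := by
    rw [← intervalIntegral.integral_const_mul]
    refine intervalIntegral.integral_congr fun t ht => ?_
    rw [Set.uIcc_of_le hT] at ht
    simp only [hw, abs_of_nonneg ht.1]
    ring
  rw [h1]
  calc _ ≤ (L * ‖c k‖ ^ 2) * (4 * π / (9 * √3) * |(k:ℝ) + α| ^ 2) := by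
        gcongr
        exact lt_int_le hp hT
    _ = _ := by ring

lemma low_bound {L : ℝ} (hL : 0 < L) {α : ℝ} (hαZ : ∀ m : ℤ, α ≠ (m : ℝ)) {M N : ℕ}
    (χ : Fin N → Fin M → ℝ → ℂ) (hc : ∀ n j, Continuous (χ n j))
    (hper : ∀ n j, Function.Periodic (χ n j) L)
    (hcs : ∀ n j, Summable fun k => ‖cf L (χ n j) k‖)
    (horth : ∀ n m, ∫ x in (0:ℝ)..L, ∑ j, χ n j x * (starRingEnd ℂ) (χ m j x) =
      if n = m then 1 else 0) (e : Fin M → ℂ) {t : ℝ} (ht : 0 ≤ t) (x : ℝ) :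
    ∑ n, ‖∑ j, (starRingEnd ℂ) (e j) * (χ n j x - Hh L α (cf L (χ n j)) t x)‖ ^ 2 ≤
      supF α / L * t * ∑ j, ‖e j‖ ^ 2 := by
  set w : ℤ → ℂ := fun k => ((1 - hw α t k : ℝ) : ℂ) * ek L k x with hwdef
  have hlow : ∀ n j, χ n j x - Hh L α (cf L (χ n j)) t x = ∑' k, w k * cf L (χ n j) k := by
    intro n j
    have h1 := cf_inv hL (hc n j) (hper n j) (hcs n j).of_norm x
    have h2 : Summable fun k => ((hw α t k : ℂ) * cf L (χ n j) k) * ek L k x := by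
      refine Summable.of_norm_bounded (hcs n j) fun k => ?_
      rw [norm_mul, ek_norm, mul_one]
      exact Hh_norm_le hαZ _ t k
    rw [Hh, ← (h1.sub h2.hasSum).tsum_eq]
    refine tsum_congr fun k => ?_
    simp only [hwdef]
    push_cast
    ring
  have hwn : ∀ k, ‖w k‖ ^ 2 = t ^ 6 * ((|(k:ℝ) + α| ^ 3 + t ^ 3) ^ 2)⁻¹ := by
    intro k
    have hp := abs_shift_pos hαZ k
    have h0 : |(k:ℝ) + α| ^ 3 + t ^ 3 ≠ 0 := by positivity
    simp only [hwdef]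
    rw [norm_mul, ek_norm, mul_one, Complex.norm_real, Real.norm_eq_abs, sq_abs, hw, abs_of_nonneg ht]
    field_simp
    ring
  have hws : Summable fun k => ‖w k‖ ^ 2 := by
    simp only [hwn]
    exact (Fsum_summable hαZ (by positivity)).mul_left _
  have hW : ∑' k, ‖w k‖ ^ 2 ≤ supF α * t := by
    simp only [hwn]
    rw [tsum_mul_left]
    calc _ = (t ^ 5 * ∑' k : ℤ, ((|(k : ℝ) + α| ^ 3 + t ^ 3) ^ 2)⁻¹) * t := by ring
      _ ≤ _ := by
        gcongr
        exact Fsum_le_supF hαZ ht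
  have hB := bessel hL χ hc horth hws (fun j => (starRingEnd ℂ) (e j))
  simp only [hlow]
  refine hB.trans ?_
  simp only [RCLike.norm_conj]
  calc _ ≤ L⁻¹ * (supF α * t) * ∑ j, ‖e j‖ ^ 2 := by gcongr
    _ = _ := by ring


lemma main_chi {L : ℝ} (hL : 0 < L) {α : ℝ} (hαZ : ∀ m : ℤ, α ≠ (m : ℝ)) {M N : ℕ}
    (χ χ' : Fin N → Fin M → ℝ → ℂ) (hd : ∀ n j x, HasDerivAt (χ n j) (χ' n j x) x)
    (hc' : ∀ n j, Continuous (χ' n j))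
    (hper : ∀ n j, Function.Periodic (χ n j) L)
    (horth : ∀ n m, ∫ x in (0:ℝ)..L, ∑ j, χ n j x * (starRingEnd ℂ) (χ m j x) =
      if n = m then 1 else 0) :
    ∫ x in (0:ℝ)..L, (Matrix.trace
        ((Matrix.of fun j l => ∑ n, χ n j x * (starRingEnd ℂ) (χ n l x)) ^ 3)).re ≤
      K2 α * ∑ n, ∫ x in (0:ℝ)..L,
        ∑ j, ‖Complex.I * χ' n j x - ((2 * π * α / L : ℝ) : ℂ) * χ n j x‖ ^ 2 := by
  have hc : ∀ n j, Continuous (χ n j) := fun n j =>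
    continuous_iff_continuousAt.2 fun x => (hd n j x).continuousAt
  have hp0 : ∀ n j, χ n j L = χ n j 0 := fun n j => by simpa using hper n j 0
  have hkin := fun n j => kin_hasSum hL α (hd n j) (hc' n j) (hp0 n j)
  have hcs : ∀ n j, Summable fun k => ‖cf L (χ n j) k‖ := fun n j => cf_summable hαZ (hkin n j).summable
  have hS := supF_pos hαZ
  set c := supF α / L with hcdef
  have hcpos : 0 < c := by positivity
  -- bound
  obtain ⟨B, hB⟩ := (isCompact_Icc (a := (0:ℝ)) (b := L)).exists_bound_of_continuousOn
    (f := fun x => ∑ n, ∑ j, ‖χ n j x‖ ^ 2) (by fun_prop)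
  set T := |B| / c with hTdef
  have hT0 : 0 ≤ T := by positivity
  have hHc : ∀ n j, Continuous (fun q : ℝ × ℝ => Hh L α (cf L (χ n j)) q.1 q.2) := fun n j =>
    Hh_cont L hαZ (hcs n j)
  have hpt : ∀ x ∈ Set.Icc 0 L, (Matrix.trace
        ((Matrix.of fun j l => ∑ n, χ n j x * (starRingEnd ℂ) (χ n l x)) ^ 3)).re / (15 * c ^ 2) ≤
      ∫ t in (0:ℝ)..T, 2 * t * ∑ n, ∑ j, ‖Hh L α (cf L (χ n j)) t x‖ ^ 2 := by
    intro x hx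
    refine pointwise_bound (fun n j => χ n j x) (fun t n j => Hh L α (cf L (χ n j)) t x) hcpos hT0 ?_ ?_ ?_
    · rw [hTdef]
      gcongr
      exact (le_abs_self _).trans ((hB x hx).trans (le_abs_self _))
    · intro n j
      have : Continuous fun t : ℝ => Hh L α (cf L (χ n j)) t x :=
        (hHc n j).comp (f := fun t : ℝ => (t, x)) (by fun_prop)
      exact this.continuousOn
    · intro e t ht
      exact low_bound hL hαZ χ hc hper hcs horth e ht x
  have hFc : Continuous (fun q : ℝ × ℝ => 2 * q.2 * ∑ n, ∑ j, ‖Hh L α (cf L (χ n j)) q.2 q.1‖ ^ 2) := by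
    have : ∀ n j, Continuous (fun q : ℝ × ℝ => Hh L α (cf L (χ n j)) q.2 q.1) := fun n j =>
      (hHc n j).comp (f := fun q : ℝ × ℝ => (q.2, q.1)) (by fun_prop)
    fun_prop
  have htc : Continuous fun x => (Matrix.trace
        ((Matrix.of fun j l => ∑ n, χ n j x * (starRingEnd ℂ) (χ n l x)) ^ 3)).re := by
    have h1 : Continuous fun x => (Matrix.of fun j l => ∑ n, χ n j x * (starRingEnd ℂ) (χ n l x)) := by
      refine continuous_matrix fun j l => ?_
      have hcc : ∀ n j, Continuous fun x => (starRingEnd ℂ) (χ n j x) := fun n j =>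
        Complex.continuous_conj.comp (hc n j)
      simp only [Matrix.of_apply]
      fun_prop
    exact Complex.continuous_re.comp (h1.pow 3).matrix_trace
  have hKI : ∀ n, ∫ x in (0:ℝ)..L, ∑ j, ‖Complex.I * χ' n j x - ((2 * π * α / L : ℝ) : ℂ) * χ n j x‖ ^ 2 =
      ∑ j, ∫ x in (0:ℝ)..L, ‖Complex.I * χ' n j x - ((2 * π * α / L : ℝ) : ℂ) * χ n j x‖ ^ 2 := by
    intro n
    exact intervalIntegral.integral_finsetSum (fun j _ => Continuous.intervalIntegrable (by fun_prop) _ _)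
  simp only [hKI]
  set K := ∑ n, ∑ j, ∫ x in (0:ℝ)..L, ‖Complex.I * χ' n j x - ((2 * π * α / L : ℝ) : ℂ) * χ n j x‖ ^ 2 with hK
  have hInn : ∀ n j, Continuous fun t => 2 * t * ∫ x in (0:ℝ)..L, ‖Hh L α (cf L (χ n j)) t x‖ ^ 2 := by
    intro n j
    refine Continuous.mul (by fun_prop) ?_
    refine intervalIntegral.continuous_parametric_intervalIntegral_of_continuous' ?_ _ _
    have := hHc n j
    simp only [Function.uncurry_def]
    fun_prop
  have hmain : (∫ x in (0:ℝ)..L, (Matrix.trace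
        ((Matrix.of fun j l => ∑ n, χ n j x * (starRingEnd ℂ) (χ n l x)) ^ 3)).re) / (15 * c ^ 2) ≤
      L * (4 * π / (9 * √3)) * (L / (2 * π) ^ 2 * K) := by
    rw [← intervalIntegral.integral_div]
    calc _ ≤ ∫ x in (0:ℝ)..L, ∫ t in (0:ℝ)..T, 2 * t * ∑ n, ∑ j, ‖Hh L α (cf L (χ n j)) t x‖ ^ 2 := by
          refine intervalIntegral.integral_mono_on hL.le ?_ ?_ hpt
          · exact Continuous.intervalIntegrable (by fun_prop) _ _
          · refine Continuous.intervalIntegrable ?_ _ _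
            exact intervalIntegral.continuous_parametric_intervalIntegral_of_continuous' (by exact hFc) _ _
      _ = ∫ t in (0:ℝ)..T, ∫ x in (0:ℝ)..L, 2 * t * ∑ n, ∑ j, ‖Hh L α (cf L (χ n j)) t x‖ ^ 2 := by
          refine intervalIntegral_intervalIntegral_swap ?_
          have : IntegrableOn (fun q : ℝ × ℝ => 2 * q.2 * ∑ n, ∑ j, ‖Hh L α (cf L (χ n j)) q.2 q.1‖ ^ 2)
              (Set.uIcc 0 L ×ˢ Set.uIcc 0 T) :=
            hFc.continuousOn.integrableOn_compact (isCompact_uIcc.prod isCompact_uIcc)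
          exact this.mono_set (Set.prod_mono Set.uIoc_subset_uIcc Set.uIoc_subset_uIcc)
      _ = ∫ t in (0:ℝ)..T, ∑ n, ∑ j, 2 * t * ∫ x in (0:ℝ)..L, ‖Hh L α (cf L (χ n j)) t x‖ ^ 2 := by
          congr 1
          funext t
          have hHt : ∀ n j, Continuous fun x : ℝ => Hh L α (cf L (χ n j)) t x := fun n j =>
            (hHc n j).comp (f := fun x : ℝ => (t, x)) (by fun_prop)
          rw [intervalIntegral.integral_const_mul, intervalIntegral.integral_finsetSum
            (fun n _ => Continuous.intervalIntegrable (by fun_prop) _ _), Finset.mul_sum]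
          refine Finset.sum_congr rfl fun n _ => ?_
          rw [intervalIntegral.integral_finsetSum
            (fun j _ => Continuous.intervalIntegrable (by fun_prop) _ _), Finset.mul_sum]
      _ = ∑ n, ∑ j, ∫ t in (0:ℝ)..T, 2 * t * ∫ x in (0:ℝ)..L, ‖Hh L α (cf L (χ n j)) t x‖ ^ 2 := by
          rw [intervalIntegral.integral_finsetSum
            (fun n _ => Continuous.intervalIntegrable (by fun_prop) _ _)]
          refine Finset.sum_congr rfl fun n _ => ?_
          rw [intervalIntegral.integral_finsetSum
            (fun j _ => Continuous.intervalIntegrable (hInn n j) _ _)]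
      _ ≤ ∑ n, ∑ j, L * (4 * π / (9 * √3)) * (L / (2 * π) ^ 2 *
            ∫ x in (0:ℝ)..L, ‖Complex.I * χ' n j x - ((2 * π * α / L : ℝ) : ℂ) * χ n j x‖ ^ 2) := by
          refine Finset.sum_le_sum fun n _ => Finset.sum_le_sum fun j _ => ?_
          rw [← (hkin n j).tsum_eq]
          exact Hh_energy hL hαZ (hkin n j).summable hT0
      _ = _ := by
          simp only [hK, Finset.mul_sum]
  rw [div_le_iff₀ (by positivity)] at hmain
  refine hmain.trans (le_of_eq ?_)
  rw [K2, hcdef]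
  have hpi := Real.pi_ne_zero
  field_simp
  ring

/-- matrix Lieb–Thirring inequality for orthonormal systems, constant `K₂(α)`. -/
theorem matrix_lieb_thirring_orthonormal_K2
    (L : ℝ) (hL : 0 < L) (M : ℕ) (hM : 1 ≤ M)
    (a : ℝ → ℝ) (ha : Continuous a) (haP : Function.Periodic a L)
    (α : ℝ) (hα : α = (1 / (2 * Real.pi)) * ∫ x in (0:ℝ)..L, a x)
    (hαZ : ∀ m : ℤ, α ≠ (m : ℝ))
    (N : ℕ) (ψ : Fin N → ℝ → (Fin M → ℂ))
    (hψ : ∀ n j, ContDiff ℝ 1 (fun x => ψ n x j))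
    (hψP : ∀ n, Function.Periodic (ψ n) L)
    (horth : ∀ n m, ∫ x in (0:ℝ)..L, ∑ j, ψ n x j * (starRingEnd ℂ) (ψ m x j) =
      if n = m then 1 else 0) :
    ∫ x in (0:ℝ)..L,
        (Matrix.trace
          ((Matrix.of fun j l => ∑ n, ψ n x j * (starRingEnd ℂ) (ψ n x l)) ^ 3)).re ≤
      K2 α * ∑ n, ∫ x in (0:ℝ)..L,
        ∑ j, ‖Complex.I * deriv (fun y => ψ n y j) x - (a x : ℂ) * ψ n x j‖ ^ 2 := by
  set A : ℝ → ℝ := fun x => ∫ y in (0:ℝ)..x, a y with hA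
  have hAd : ∀ x, HasDerivAt A (a x) x := fun x =>
    intervalIntegral.integral_hasDerivAt_right (ha.intervalIntegrable _ _)
      ha.aestronglyMeasurable.stronglyMeasurableAtFilter ha.continuousAt
  have hAL : ∫ x in (0:ℝ)..L, a x = 2 * π * α := by
    rw [hα]; have := Real.pi_ne_zero; field_simp
  have hAp : ∀ x, A (x + L) = A x + 2 * π * α := by
    intro x
    simp only [hA]
    rw [← intervalIntegral.integral_add_adjacent_intervals (ha.intervalIntegrable 0 x)
      (ha.intervalIntegrable x (x + L)), haP.intervalIntegral_add_eq x 0, zero_add, hAL]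
  set β := 2 * π * α / L with hβ
  set h : ℝ → ℂ := fun x => Complex.exp (((A x - β * x : ℝ) : ℂ) * Complex.I) with hh
  have hhn : ∀ x, h x * (starRingEnd ℂ) (h x) = 1 := by
    intro x
    rw [Complex.mul_conj', hh]
    simp only [Complex.norm_exp_ofReal_mul_I]
    norm_num
  have hhn1 : ∀ x, ‖h x‖ = 1 := fun x => Complex.norm_exp_ofReal_mul_I _
  have hhp : ∀ x, h (x + L) = h x := by
    intro x
    simp only [hh]
    rw [hAp]
    have : A x + 2 * π * α - β * (x + L) = A x - β * x := by
      rw [hβ]; field_simp; ring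
    rw [this]
  have hhd : ∀ x, HasDerivAt h (((a x - β : ℝ) : ℂ) * Complex.I * h x) x := by
    intro x
    have h1 : HasDerivAt (fun x => A x - β * x) (a x - β) x := by
      have h0 : HasDerivAt (fun y : ℝ => β * y) β x := by
        simpa using (hasDerivAt_id x).const_mul β
      exact (hAd x).sub h0
    have h2 := (h1.ofReal_comp.mul_const Complex.I).cexp
    convert h2 using 1
    simp only [hh]
    ring
  have hψd : ∀ n j x, HasDerivAt (fun y => ψ n y j) (deriv (fun y => ψ n y j) x) x := fun n j x =>
    ((hψ n j).differentiable (by norm_num) x).hasDerivAt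
  have hψc : ∀ n j, Continuous (fun y => ψ n y j) := fun n j => (hψ n j).continuous
  have hψdc : ∀ n j, Continuous (deriv (fun y => ψ n y j)) := fun n j => (hψ n j).continuous_deriv le_rfl
  have hhc : Continuous h := continuous_iff_continuousAt.2 fun x => (hhd x).continuousAt
  have hcancel : ∀ x (u v : ℂ), h x * u * (starRingEnd ℂ) (h x * v) = u * (starRingEnd ℂ) v := by
    intro x u v
    rw [map_mul]
    linear_combination (u * (starRingEnd ℂ) v) * hhn x
  have := main_chi hL hαZ (fun n j x => h x * ψ n x j)
    (fun n j x => ((a x - β : ℝ) : ℂ) * Complex.I * h x * ψ n x j + h x * deriv (fun y => ψ n y j) x)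
    (fun n j x => (hhd x).mul (hψd n j x))
    (fun n j => by
      have h1 := hψc n j
      have h2 := hψdc n j
      fun_prop)
    (fun n j x => by simp only [hhp, hψP n x])
    (fun n m => by simp only [hcancel]; exact horth n m)
  simp only [hcancel] at this
  refine this.trans (le_of_eq ?_)
  congr 1
  refine Finset.sum_congr rfl fun n _ => ?_
  congr 1
  funext x
  refine Finset.sum_congr rfl fun j _ => ?_
  have hx : Complex.I * (((a x - β : ℝ) : ℂ) * Complex.I * h x * ψ n x j + h x * deriv (fun y => ψ n y j) x) -
      (β : ℂ) * (h x * ψ n x j) = h x * (Complex.I * deriv (fun y => ψ n y j) x - (a x : ℂ) * ψ n x j) := by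
    push_cast
    linear_combination (((a x : ℂ) - β) * h x * ψ n x j) * Complex.I_sq
  rw [hx, norm_mul, hhn1, one_mul]
end

section
/- Let L > 0, M ≥ 1, let a : ℝ → ℝ be an L-periodic continuous function with magnetic flux α = (1/(2π))∫₀^L a(x)dx, α ∉ ℤ, and define k(α) = 1/|sin(2πα)| if α mod 1 ∈ (0,1/4) ∪ (3/4,1) and k(α) = 1 if α mod 1 ∈ [1/4,3/4]. Let ψ₁,…,ψ_N : ℝ → ℂ^M be L-periodic H¹ vector functions orthonormal in L²((0,L), ℂ^M), and let U(x) = Σ_{n=1}^N ψ_n(x) ψ_n(x)^*. Then ∫₀^L Tr[U(x)³] dx ≤ k(α)² · Σ_{n=1}^N ∫₀^L |i ψ_n'(x) − a(x)ψ_n(x)|²_{ℂ^M} dx. -/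
open MeasureTheory Real Filter

lemma kConst_spec (α : ℝ) (hαZ : ∀ m : ℤ, α ≠ (m : ℝ)) :
    0 < kConst α ∧ ∀ T : ℝ, 0 < T →
      Real.sinh T ≤ kConst α * (Real.cosh T - Real.cos (2 * Real.pi * α)) := by
  have hdec : α = Int.fract α + (⌊α⌋ : ℝ) := (Int.fract_add_floor α).symm
  have hcos : Real.cos (2 * Real.pi * α) = Real.cos (2 * Real.pi * Int.fract α) := by
    conv_lhs => rw [hdec]
    rw [show 2 * Real.pi * (Int.fract α + (⌊α⌋ : ℝ)) =
      2 * Real.pi * Int.fract α + (⌊α⌋ : ℝ) * (2 * Real.pi) by ring, Real.cos_add_int_mul_two_pi]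
  have hsin : Real.sin (2 * Real.pi * α) = Real.sin (2 * Real.pi * Int.fract α) := by
    conv_lhs => rw [hdec]
    rw [show 2 * Real.pi * (Int.fract α + (⌊α⌋ : ℝ)) =
      2 * Real.pi * Int.fract α + (⌊α⌋ : ℝ) * (2 * Real.pi) by ring, Real.sin_add_int_mul_two_pi]
  have hf1 := Int.fract_lt_one α
  have hf0 : 0 < Int.fract α := by
    rcases (Int.fract_nonneg α).lt_or_eq with h | h
    · exact h
    · exfalso; apply hαZ ⌊α⌋; rw [← h] at hdec; simpa using hdec
  have hpi := Real.pi_pos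
  unfold kConst
  split_ifs with h
  · refine ⟨one_pos, fun T _ => ?_⟩
    have : Real.cos (2 * Real.pi * α) ≤ 0 := by
      rw [hcos]
      apply Real.cos_nonpos_of_pi_div_two_le_of_le <;> nlinarith [h.1, h.2]
    have := Real.sinh_lt_cosh T
    linarith
  · have hs : Real.sin (2 * Real.pi * α) ≠ 0 := by
      rw [hsin]
      rw [not_and_or, not_le, not_le] at h
      rcases h with h | h
      · exact (Real.sin_pos_of_pos_of_lt_pi (by positivity) (by nlinarith)).ne'
      · rw [← Real.sin_sub_two_pi]
        exact (Real.sin_neg_of_neg_of_neg_pi_lt (by nlinarith) (by nlinarith)).ne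
    have hs' := abs_pos.mpr hs
    refine ⟨by positivity, fun T hT => ?_⟩
    rw [one_div, inv_mul_eq_div, le_div_iff₀ hs']
    have h1 := Real.cosh_sq T
    have h2 := Real.sin_sq_add_cos_sq (2 * Real.pi * α)
    have h3 := sq_abs (Real.sin (2 * Real.pi * α))
    have : Real.sinh T * |Real.sin (2 * Real.pi * α)| + Real.cos (2 * Real.pi * α)
        ≤ Real.cosh T := by
      apply abs_le_of_sq_le_sq' _ (Real.cosh_pos T).le |>.2
      generalize |Real.sin (2 * Real.pi * α)| = s at *
      rw [h1, ]
      have : (Real.sinh T^2 + 1) = (Real.sinh T^2 + 1) * (s^2 + Real.cos (2 * Real.pi * α)^2) := by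
        rw [h3, h2, mul_one]
      rw [this]
      nlinarith [sq_nonneg (Real.sinh T * Real.cos (2 * Real.pi * α) - s)]
    linarith

lemma energy_bound (L lam θ : ℝ) (hL : 0 < L) (hlam : 0 < lam) (v v' : ℝ → ℂ)
    (hv : ∀ y, HasDerivAt v (v' y) y) (hc : Continuous v')
    (hB : v L = Complex.exp (θ * Complex.I) * v 0) :
    ‖v 0‖ ^ 2 * (2 * lam * (Real.cosh (lam * L) - Real.cos θ)) ≤
      Real.sinh (lam * L) * ∫ y in (0:ℝ)..L, (‖v' y‖ ^ 2 + lam ^ 2 * ‖v y‖ ^ 2) := by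
  have hT : 0 < Real.sinh (lam * L) := Real.sinh_pos_iff.2 (by positivity)
  set A := v 0 with hA
  set B := Complex.exp (θ * Complex.I) * v 0 with hBdef
  set s := Real.sinh (lam * L) with hs
  have hvc : Continuous v := continuous_iff_continuousAt.2 fun y => (hv y).continuousAt
  set f : ℝ → ℂ := fun y => ((Real.sinh (lam * (L - y)) / s : ℝ) : ℂ) * A +
    ((Real.sinh (lam * y) / s : ℝ) : ℂ) * B with hf
  set f' : ℝ → ℂ := fun y => ((-lam * Real.cosh (lam * (L - y)) / s : ℝ) : ℂ) * A +
    ((lam * Real.cosh (lam * y) / s : ℝ) : ℂ) * B with hf'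
  have d1 : ∀ y : ℝ, HasDerivAt (fun y : ℝ => lam * (L - y)) (-lam) y := fun y => by
    simpa using ((hasDerivAt_id y).const_sub L).const_mul lam
  have d2 : ∀ y : ℝ, HasDerivAt (fun y : ℝ => lam * y) lam y := fun y => by
    simpa using (hasDerivAt_id y).const_mul lam
  have hfd : ∀ y, HasDerivAt f (f' y) y := fun y => by
    have h1 := (((d1 y).sinh).div_const s).ofReal_comp.mul_const A
    have h2 := (((d2 y).sinh).div_const s).ofReal_comp.mul_const B
    refine (h1.add h2).congr_deriv ?_
    simp only [hf']; push_cast; ring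
  have hfd' : ∀ y, HasDerivAt f' ((lam ^ 2 : ℝ) * f y) y := fun y => by
    have h1 := ((((d1 y).cosh).const_mul (-lam)).div_const s).ofReal_comp.mul_const A
    have h2 := ((((d2 y).cosh).const_mul lam).div_const s).ofReal_comp.mul_const B
    refine (h1.add h2).congr_deriv ?_
    simp only [hf]; push_cast; ring
  have hfc : Continuous f := continuous_iff_continuousAt.2 fun y => (hfd y).continuousAt
  have hfc' : Continuous f' := continuous_iff_continuousAt.2 fun y => (hfd' y).continuousAt
  have hH : ∀ y, HasDerivAt (fun y => ((2 * v y - f y) * (starRingEnd ℂ) (f' y)).re)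
      (((2 * v' y - f' y) * (starRingEnd ℂ) (f' y) +
        (2 * v y - f y) * (starRingEnd ℂ) ((lam ^ 2 : ℝ) * f y)).re) y := fun y => by
    have h1 := (((hv y).const_mul 2).sub (hfd y)).mul ((hfd' y).star)
    have h2 := (Complex.reCLM.hasFDerivAt (x := ((2 * v y - f y) * (starRingEnd ℂ) (f' y)))).comp_hasDerivAt y h1
    exact h2
  have hint := intervalIntegral.integral_eq_sub_of_hasDerivAt (a := 0) (b := L)
    (fun y _ => hH y) (Continuous.intervalIntegrable (by fun_prop) _ _)
  have hmono : (∫ y in (0:ℝ)..L, ((2 * v' y - f' y) * (starRingEnd ℂ) (f' y) +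
        (2 * v y - f y) * (starRingEnd ℂ) ((lam ^ 2 : ℝ) * f y)).re) ≤
      ∫ y in (0:ℝ)..L, (‖v' y‖ ^ 2 + lam ^ 2 * ‖v y‖ ^ 2) := by
    apply intervalIntegral.integral_mono hL.le
      (Continuous.intervalIntegrable (by fun_prop) _ _)
      (Continuous.intervalIntegrable (by fun_prop) _ _)
    intro y
    simp only [Complex.sq_norm, Complex.normSq_apply, Complex.add_re, Complex.mul_re, Complex.mul_im,
      Complex.sub_re, Complex.sub_im, Complex.conj_re, Complex.conj_im, Complex.ofReal_re,
      Complex.ofReal_im, Complex.re_ofNat, Complex.im_ofNat]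
    nlinarith [sq_nonneg ((v' y).re - (f' y).re), sq_nonneg ((v' y).im - (f' y).im),
      sq_nonneg (lam * ((v y).re - (f y).re)), sq_nonneg (lam * ((v y).im - (f y).im))]
  rw [hint] at hmono
  have hss : s / s = 1 := div_self hT.ne'
  have f0 : f 0 = A := by
    simp only [hf, sub_zero, mul_zero, Real.sinh_zero, ← hs, hss]; simp
  have fL : f L = B := by
    simp only [hf, sub_self, mul_zero, Real.sinh_zero, ← hs, hss]; simp
  have f0' : f' 0 = ((lam / s : ℝ) : ℂ) * (B - (Real.cosh (lam * L) : ℝ) * A) := by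
    simp [hf']; ring
  have fL' : f' L = ((lam / s : ℝ) : ℂ) * ((Real.cosh (lam * L) : ℝ) * B - A) := by
    simp [hf']; ring
  rw [f0, fL, f0', fL', hB, ← hA] at hmono
  have hBA : B = ((Real.cos θ : ℝ) + (Real.sin θ : ℝ) * Complex.I) * A := by
    rw [hBdef, Complex.exp_mul_I]; simp [hA]
  have hcs := Real.sin_sq_add_cos_sq θ
  have key : ‖A‖ ^ 2 * (2 * lam * (Real.cosh (lam * L) - Real.cos θ)) =
    s * (((2 * B - B) * (starRingEnd ℂ) (((lam / s : ℝ) : ℂ) * ((Real.cosh (lam * L) : ℝ) * B - A))).re -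
    ((2 * A - A) * (starRingEnd ℂ) (((lam / s : ℝ) : ℂ) * (B - (Real.cosh (lam * L) : ℝ) * A))).re) := by
    rw [hBA]
    generalize Real.cosh (lam * L) = C
    generalize Real.cos θ = c at *
    generalize Real.sin θ = d at *
    have hls : lam = s * (lam / s) := by field_simp
    generalize lam / s = r at *
    simp only [Complex.sq_norm, Complex.normSq_apply, Complex.add_re, Complex.add_im, Complex.mul_re, Complex.mul_im,
      Complex.sub_re, Complex.sub_im, Complex.conj_re, Complex.conj_im, Complex.ofReal_re,
      Complex.ofReal_im, Complex.re_ofNat, Complex.im_ofNat, Complex.I_re, Complex.I_im]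
    rw [hls]
    linear_combination (-(s * r * C * (A.re * A.re + A.im * A.im))) * hcs
  rw [key]
  exact mul_le_mul_of_nonneg_left hmono hT.le

lemma interp (L lam α k : ℝ) (hL : 0 < L) (hlam : 0 < lam)
    (a : ℝ → ℝ) (ha : Continuous a) (haP : Function.Periodic a L)
    (hα : α = (1 / (2 * Real.pi)) * ∫ x in (0:ℝ)..L, a x)
    (hk : ∀ T : ℝ, 0 < T →
      Real.sinh T ≤ k * (Real.cosh T - Real.cos (2 * Real.pi * α)))
    (u u' : ℝ → ℂ) (hu : ∀ y, HasDerivAt u (u' y) y) (hc : Continuous u')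
    (huP : Function.Periodic u L) (huP' : Function.Periodic u' L) (x : ℝ) :
    2 * lam * ‖u x‖ ^ 2 ≤ k * ∫ y in (0:ℝ)..L,
      (‖Complex.I * u' y - a y * u y‖ ^ 2 + lam ^ 2 * ‖u y‖ ^ 2) := by
  have huc : Continuous u := continuous_iff_continuousAt.2 fun y => (hu y).continuousAt
  set φ : ℝ → ℝ := fun y => ∫ t in x..(x + y), a t with hφ
  have hφd : ∀ y, HasDerivAt φ (a (x + y)) y := fun y => by
    have := (intervalIntegral.integral_hasDerivAt_right (ha.intervalIntegrable x (x + y))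
      (ha.stronglyMeasurableAtFilter _ _) ha.continuousAt)
    exact HasDerivAt.comp_const_add x y this
  have hφL : φ L = 2 * Real.pi * α := by
    simp only [hφ]
    rw [haP.intervalIntegral_add_eq x 0, hα, zero_add]
    field_simp
  have hφc : Continuous φ := continuous_iff_continuousAt.2 fun y => (hφd y).continuousAt
  have e0 : φ 0 = 0 := by simp [hφ]
  have key := energy_bound L lam (2 * Real.pi * α) hL hlam
    (fun y => Complex.exp (φ y * Complex.I) * u (x + y))
    (fun y => Complex.exp (φ y * Complex.I) * (u' (x + y) + Complex.I * a (x + y) * u (x + y)))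
    (fun y => by
      have h1 := (((hφd y).ofReal_comp).mul_const Complex.I).cexp
      have h2 := h1.mul (HasDerivAt.comp_const_add x y (hu (x + y)))
      refine h2.congr_deriv ?_
      ring)
    (by fun_prop)
    (by rw [hφL, huP x, e0]; simp)
  have eint : (∫ y in (0:ℝ)..L, (‖Complex.exp (φ y * Complex.I) *
        (u' (x + y) + Complex.I * a (x + y) * u (x + y))‖ ^ 2 +
        lam ^ 2 * ‖Complex.exp (φ y * Complex.I) * u (x + y)‖ ^ 2)) =
      ∫ y in (0:ℝ)..L, (‖Complex.I * u' y - a y * u y‖ ^ 2 + lam ^ 2 * ‖u y‖ ^ 2) := by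
    have hper : Function.Periodic
        (fun y => ‖Complex.I * u' y - a y * u y‖ ^ 2 + lam ^ 2 * ‖u y‖ ^ 2) L := by
      intro y; simp only [huP y, huP' y, haP y]
    have := hper.intervalIntegral_add_eq 0 x
    rw [zero_add] at this
    have h3 := intervalIntegral.integral_comp_add_left (a := 0) (b := L)
      (fun y => ‖Complex.I * u' y - a y * u y‖ ^ 2 + lam ^ 2 * ‖u y‖ ^ 2) x
    rw [add_zero] at h3
    rw [this, ← h3]
    congr 1; ext y
    rw [norm_mul, norm_mul, Complex.norm_exp_ofReal_mul_I, one_mul, one_mul]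
    congr 2
    rw [← one_mul ‖u' (x + y) + _‖, ← Complex.norm_I, ← norm_mul]
    congr 1
    linear_combination (a (x + y) * u (x + y)) * Complex.I_mul_I
  rw [eint] at key
  simp only [e0] at key
  simp only [Complex.ofReal_zero, zero_mul, Complex.exp_zero, one_mul, add_zero] at key
  set E := ∫ y in (0:ℝ)..L, (‖Complex.I * u' y - a y * u y‖ ^ 2 + lam ^ 2 * ‖u y‖ ^ 2)
  have hE : 0 ≤ E := intervalIntegral.integral_nonneg hL.le fun y _ => by positivity
  have hT : 0 < lam * L := by positivity
  have h1 := mul_le_mul_of_nonneg_right (hk _ hT) hE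
  have h2 : 0 < Real.cosh (lam * L) - Real.cos (2 * Real.pi * α) := by
    have := Real.one_lt_cosh.2 hT.ne'
    linarith [Real.cos_le_one (2 * Real.pi * α)]
  refine le_of_mul_le_mul_right ?_ h2
  calc _ = _ := by ring
    _ ≤ _ := key
    _ ≤ _ := h1
    _ = _ := by ring

lemma cs_sum {M : ℕ} (e z : Fin M → ℂ) (he : ∑ j, ‖e j‖ ^ 2 = 1) :
    ‖∑ j, (starRingEnd ℂ) (e j) * z j‖ ^ 2 ≤ ∑ j, ‖z j‖ ^ 2 := by
  have h1 : ‖∑ j, (starRingEnd ℂ) (e j) * z j‖ ≤ ∑ j, ‖e j‖ * ‖z j‖ := by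
    refine (norm_sum_le _ _).trans (Finset.sum_le_sum fun j _ => ?_)
    rw [norm_mul, RCLike.norm_conj]
  calc _ ≤ (∑ j, ‖e j‖ * ‖z j‖) ^ 2 := by gcongr
    _ ≤ (∑ j, ‖e j‖ ^ 2) * ∑ j, ‖z j‖ ^ 2 := Finset.sum_mul_sq_le_sq_mul_sq _ _ _
    _ = _ := by rw [he, one_mul]

lemma gram_expand {M N : ℕ} (L : ℝ) (b : Fin N → ℂ) (F : Fin N → ℝ → Fin M → ℂ)
    (hF : ∀ n j, Continuous fun y => F n y j) :
    ((∫ y in (0:ℝ)..L, ∑ j, ‖∑ n, b n * F n y j‖ ^ 2 : ℝ) : ℂ) =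
      ∑ n, ∑ m, (b n * (starRingEnd ℂ) (b m)) *
        ∫ y in (0:ℝ)..L, ∑ j, F n y j * (starRingEnd ℂ) (F m y j) := by
  rw [← intervalIntegral.integral_ofReal]
  simp_rw [← intervalIntegral.integral_const_mul]
  have hc : ∀ n m, Continuous fun y => (b n * (starRingEnd ℂ) (b m)) *
      ∑ j, F n y j * (starRingEnd ℂ) (F m y j) := fun n m => by
    refine continuous_const.mul (continuous_finsetSum _ fun j _ => (hF n j).mul ?_)
    exact Complex.continuous_conj.comp (hF m j)
  have : ∀ n, (∑ m, ∫ y in (0:ℝ)..L, (b n * (starRingEnd ℂ) (b m)) *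
      ∑ j, F n y j * (starRingEnd ℂ) (F m y j)) =
      ∫ y in (0:ℝ)..L, ∑ m, (b n * (starRingEnd ℂ) (b m)) *
      ∑ j, F n y j * (starRingEnd ℂ) (F m y j) := fun n =>
    (intervalIntegral.integral_finsetSum fun m _ => (hc n m).intervalIntegrable _ _).symm
  simp_rw [this]
  rw [← intervalIntegral.integral_finsetSum fun n _ =>
    (continuous_finsetSum _ fun m _ => hc n m).intervalIntegrable _ _]
  congr 1; ext y
  push_cast
  simp_rw [← Complex.mul_conj', map_sum, map_mul, Finset.sum_mul_sum, Finset.mul_sum]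
  rw [Finset.sum_comm]
  refine Finset.sum_congr rfl fun n _ => ?_
  rw [Finset.sum_comm]
  refine Finset.sum_congr rfl fun m _ => Finset.sum_congr rfl fun j _ => ?_
  ring

lemma cube_bound {M : ℕ} (L α k : ℝ) (hL : 0 < L) (hk0 : 0 < k)
    (a : ℝ → ℝ) (ha : Continuous a) (haP : Function.Periodic a L)
    (hα : α = (1 / (2 * Real.pi)) * ∫ x in (0:ℝ)..L, a x)
    (hk : ∀ T : ℝ, 0 < T →
      Real.sinh T ≤ k * (Real.cosh T - Real.cos (2 * Real.pi * α)))
    (w w' : ℝ → Fin M → ℂ) (hw : ∀ y j, HasDerivAt (fun y => w y j) (w' y j) y)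
    (hc : ∀ j, Continuous fun y => w' y j)
    (hP : Function.Periodic w L) (hP' : Function.Periodic w' L)
    (e : Fin M → ℂ) (he : ∑ j, ‖e j‖ ^ 2 = 1) (x μ : ℝ) (hμ : 0 ≤ μ)
    (h1 : ∑ j, (starRingEnd ℂ) (e j) * w x j = (μ : ℂ))
    (h2 : ∫ y in (0:ℝ)..L, ∑ j, ‖w y j‖ ^ 2 = μ) :
    μ ^ 3 ≤ k ^ 2 * ∫ y in (0:ℝ)..L, ∑ j, ‖Complex.I * w' y j - a y * w y j‖ ^ 2 := by
  have hwc : ∀ j, Continuous fun y => w y j := fun j =>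
    continuous_iff_continuousAt.2 fun y => (hw y j).continuousAt
  have hD : 0 ≤ ∫ y in (0:ℝ)..L, ∑ j, ‖Complex.I * w' y j - a y * w y j‖ ^ 2 :=
    intervalIntegral.integral_nonneg hL.le fun y _ => by positivity
  rcases hμ.lt_or_eq with hμ | hμ
  swap
  · rw [← hμ]; simpa using mul_nonneg (sq_nonneg k) hD
  have hlam : 0 < μ / k := by positivity
  have key := interp L (μ / k) α k hL hlam a ha haP hα hk
    (fun y => ∑ j, (starRingEnd ℂ) (e j) * w y j) (fun y => ∑ j, (starRingEnd ℂ) (e j) * w' y j)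
    (fun y => HasDerivAt.fun_sum fun j _ => (hw y j).const_mul _)
    (by fun_prop) (fun y => by simp only [hP y]) (fun y => by simp only [hP' y]) x
  have hle : (∫ y in (0:ℝ)..L,
      (‖Complex.I * (∑ j, (starRingEnd ℂ) (e j) * w' y j) -
        a y * (∑ j, (starRingEnd ℂ) (e j) * w y j)‖ ^ 2 +
        (μ / k) ^ 2 * ‖∑ j, (starRingEnd ℂ) (e j) * w y j‖ ^ 2)) ≤
      ∫ y in (0:ℝ)..L, ((∑ j, ‖Complex.I * w' y j - a y * w y j‖ ^ 2) +
        (μ / k) ^ 2 * ∑ j, ‖w y j‖ ^ 2) := by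
    apply intervalIntegral.integral_mono hL.le
      (Continuous.intervalIntegrable (by fun_prop) _ _)
      (Continuous.intervalIntegrable (by fun_prop) _ _)
    intro y
    have e1 : Complex.I * (∑ j, (starRingEnd ℂ) (e j) * w' y j) -
        a y * (∑ j, (starRingEnd ℂ) (e j) * w y j) =
        ∑ j, (starRingEnd ℂ) (e j) * (Complex.I * w' y j - a y * w y j) := by
      rw [Finset.mul_sum, Finset.mul_sum, ← Finset.sum_sub_distrib]
      exact Finset.sum_congr rfl fun j _ => by ring
    have := cs_sum e (w y) he
    have := cs_sum e (fun j => Complex.I * w' y j - a y * w y j) he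
    simp only [e1]
    gcongr
  have hsplit : (∫ y in (0:ℝ)..L, ((∑ j, ‖Complex.I * w' y j - a y * w y j‖ ^ 2) +
        (μ / k) ^ 2 * ∑ j, ‖w y j‖ ^ 2)) =
      (∫ y in (0:ℝ)..L, ∑ j, ‖Complex.I * w' y j - a y * w y j‖ ^ 2) + (μ / k) ^ 2 * μ := by
    rw [intervalIntegral.integral_add (Continuous.intervalIntegrable (by fun_prop) _ _)
      (Continuous.intervalIntegrable (by fun_prop) _ _),
      intervalIntegral.integral_const_mul, h2]
  rw [hsplit] at hle
  simp only [h1, Complex.norm_real, Real.norm_eq_abs, sq_abs] at key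
  have h3 := key.trans (mul_le_mul_of_nonneg_left hle hk0.le)
  set D := ∫ y in (0:ℝ)..L, ∑ j, ‖Complex.I * w' y j - a y * w y j‖ ^ 2
  have h4 : k * (2 * (μ / k) * μ ^ 2) ≤ k * (k * (D + (μ / k) ^ 2 * μ)) :=
    mul_le_mul_of_nonneg_left h3 hk0.le
  have e1 : k * (2 * (μ / k) * μ ^ 2) = 2 * μ ^ 3 := by field_simp
  have e2 : k * (k * (D + (μ / k) ^ 2 * μ)) = k ^ 2 * D + μ ^ 3 := by field_simp
  rw [e1, e2] at h4
  linarith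

lemma trace_cube {M : ℕ} (U : Matrix (Fin M) (Fin M) ℂ) (hU : U.IsHermitian) :
    (Matrix.trace (U ^ 3)).re = ∑ i, hU.eigenvalues i ^ 3 := by
  have h := hU.spectral_theorem
  have h3 : U ^ 3 = Unitary.conjStarAlgAut ℂ _ hU.eigenvectorUnitary
      (Matrix.diagonal (RCLike.ofReal ∘ hU.eigenvalues) ^ 3) := by
    rw [map_pow, ← h]
  rw [h3, Unitary.conjStarAlgAut_apply, Matrix.trace_mul_cycle, Unitary.coe_star_mul_self,
    one_mul, Matrix.diagonal_pow, Matrix.trace_diagonal]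
  simp [← Complex.ofReal_pow]

/-- matrix Lieb–Thirring inequality for orthonormal systems, constant `k(α)²`. -/
theorem matrix_lieb_thirring_orthonormal_K1
    (L : ℝ) (hL : 0 < L) (M : ℕ) (hM : 1 ≤ M)
    (a : ℝ → ℝ) (ha : Continuous a) (haP : Function.Periodic a L)
    (α : ℝ) (hα : α = (1 / (2 * Real.pi)) * ∫ x in (0:ℝ)..L, a x)
    (hαZ : ∀ m : ℤ, α ≠ (m : ℝ))
    (N : ℕ) (ψ : Fin N → ℝ → (Fin M → ℂ))
    (hψ : ∀ n j, ContDiff ℝ 1 (fun x => ψ n x j))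
    (hψP : ∀ n, Function.Periodic (ψ n) L)
    (horth : ∀ n m, ∫ x in (0:ℝ)..L, ∑ j, ψ n x j * (starRingEnd ℂ) (ψ m x j) =
      if n = m then 1 else 0) :
    ∫ x in (0:ℝ)..L,
        (Matrix.trace
          ((Matrix.of fun j l => ∑ n, ψ n x j * (starRingEnd ℂ) (ψ n x l)) ^ 3)).re ≤
      kConst α ^ 2 * ∑ n, ∫ x in (0:ℝ)..L,
        ∑ j, ‖Complex.I * deriv (fun y => ψ n y j) x - (a x : ℂ) * ψ n x j‖ ^ 2 := by
  obtain ⟨hk0, hk⟩ := kConst_spec α hαZ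
  set k := kConst α
  set ψ' : Fin N → ℝ → (Fin M → ℂ) := fun n y j => deriv (fun y => ψ n y j) y with hψ'
  have hd : ∀ n y j, HasDerivAt (fun y => ψ n y j) (ψ' n y j) y := fun n y j =>
    ((hψ n j).differentiable one_ne_zero y).hasDerivAt
  have hc : ∀ n j, Continuous fun y => ψ n y j := fun n j => (hψ n j).continuous
  have hc' : ∀ n j, Continuous fun y => ψ' n y j := fun n j =>
    (hψ n j).continuous_deriv le_rfl
  have hP' : ∀ n, Function.Periodic (ψ' n) L := by
    intro n y
    ext j
    have h1 : (fun y => ψ n (y + L) j) = fun y => ψ n y j := by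
      ext y; rw [hψP n y]
    simp only [hψ']
    rw [← deriv_comp_add_const (f := fun y => ψ n y j), h1]
  set D : Fin N → ℝ → Fin M → ℂ := fun n y j => Complex.I * ψ' n y j - a y * ψ n y j with hDdef
  have hDc : ∀ n j, Continuous fun y => D n y j := fun n j => by
    have := hc n j; have := hc' n j
    simp only [hDdef]; fun_prop
  set G : Fin N → Fin N → ℂ := fun n m =>
    ∫ y in (0:ℝ)..L, ∑ j, D n y j * (starRingEnd ℂ) (D m y j) with hG
  -- pointwise bound
  have hpt : ∀ x, (Matrix.trace
      ((Matrix.of fun j l => ∑ n, ψ n x j * (starRingEnd ℂ) (ψ n x l)) ^ 3)).re ≤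
      k ^ 2 * (∑ n, ∑ m, (∑ j, ψ m x j * (starRingEnd ℂ) (ψ n x j)) * G n m).re := by
    intro x
    set U : Matrix (Fin M) (Fin M) ℂ :=
      Matrix.of fun j l => ∑ n, ψ n x j * (starRingEnd ℂ) (ψ n x l) with hUdef
    have hU : U.IsHermitian := by
      ext j l
      simp [hUdef, Matrix.conjTranspose_apply, mul_comm]
    rw [trace_cube U hU]
    set e : Fin M → Fin M → ℂ := fun i j => hU.eigenvectorBasis i j with hedef
    set c : Fin M → Fin N → ℂ := fun i n => ∑ j, (starRingEnd ℂ) (e i j) * ψ n x j with hcdef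
    have he : ∀ i, ∑ j, ‖e i j‖ ^ 2 = 1 := fun i => by
      rw [hedef, ← EuclideanSpace.norm_sq_eq, hU.eigenvectorBasis.orthonormal.1 i, one_pow]
    have hcμ : ∀ i, ∑ n, (starRingEnd ℂ) (c i n) * c i n = (hU.eigenvalues i : ℂ) := by
      intro i
      have h1 := hU.mulVec_eigenvectorBasis i
      have h2 : ∀ j, ∑ l, U j l * e i l = hU.eigenvalues i * e i j := fun j => by
        have := congrFun h1 j
        simpa [Matrix.mulVec, dotProduct] using this
      have h3 : ∑ j, (starRingEnd ℂ) (e i j) * ∑ l, U j l * e i l = hU.eigenvalues i := by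
        simp_rw [h2]
        calc _ = (hU.eigenvalues i : ℂ) * ((∑ j, ‖e i j‖ ^ 2 : ℝ) : ℂ) := by
              push_cast
              rw [Finset.mul_sum]
              refine Finset.sum_congr rfl fun j _ => ?_
              rw [← Complex.conj_mul']; ring
          _ = _ := by rw [he]; simp
      rw [← h3]
      calc _ = ∑ n, ∑ j, ∑ l, (starRingEnd ℂ) (e i j) *
              ((ψ n x j * (starRingEnd ℂ) (ψ n x l)) * e i l) := by
            refine Finset.sum_congr rfl fun n _ => ?_
            simp only [hcdef, map_sum, map_mul, Complex.conj_conj]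
            rw [mul_comm, Finset.sum_mul_sum]
            exact Finset.sum_congr rfl fun j _ => Finset.sum_congr rfl fun l _ => by ring
        _ = _ := by
            rw [Finset.sum_comm]
            refine Finset.sum_congr rfl fun j _ => ?_
            rw [Finset.sum_comm, Finset.mul_sum]
            refine Finset.sum_congr rfl fun l _ => ?_
            simp only [hUdef, Matrix.of_apply]
            rw [← Finset.mul_sum, ← Finset.sum_mul]
    have hμ0 : ∀ i, 0 ≤ hU.eigenvalues i := fun i => by
      have h1 : (hU.eigenvalues i : ℝ) = ∑ n, ‖c i n‖ ^ 2 := by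
        have := hcμ i
        simp_rw [Complex.conj_mul'] at this
        exact_mod_cast this.symm
      rw [h1]; positivity
    have hi : ∀ i, hU.eigenvalues i ^ 3 ≤ k ^ 2 *
        (∑ n, ∑ m, ((starRingEnd ℂ) (c i n) * c i m) * G n m).re := by
      intro i
      have := cube_bound L α k hL hk0 a ha haP hα hk
        (fun y j => ∑ n, (starRingEnd ℂ) (c i n) * ψ n y j)
        (fun y j => ∑ n, (starRingEnd ℂ) (c i n) * ψ' n y j)
        (fun y j => HasDerivAt.fun_sum fun n _ => (hd n y j).const_mul _)
        (fun j => continuous_finsetSum _ fun n _ => continuous_const.mul (hc' n j))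
        (fun y => by simp only [hψP _ y]) (fun y => by simp only [hP' _ y])
        (e i) (he i) x (hU.eigenvalues i) (hμ0 i)
        (by
          rw [← hcμ i]
          simp_rw [Finset.mul_sum]
          rw [Finset.sum_comm]
          refine Finset.sum_congr rfl fun n _ => ?_
          conv_rhs => rw [show c i n = ∑ j, (starRingEnd ℂ) (e i j) * ψ n x j from rfl]
          rw [Finset.mul_sum]
          exact Finset.sum_congr rfl fun j _ => by ring)
        (by
          have h1 := gram_expand L (fun n => (starRingEnd ℂ) (c i n)) ψ hc
          simp_rw [horth] at h1
          simp only [Complex.conj_conj, mul_ite, mul_one, mul_zero, Finset.sum_ite_eq,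
            Finset.mem_univ, if_true] at h1
          rw [hcμ i] at h1
          exact_mod_cast h1)
      refine this.trans (le_of_eq ?_)
      congr 1
      have h1 := gram_expand L (fun n => (starRingEnd ℂ) (c i n)) D hDc
      simp only [Complex.conj_conj] at h1
      rw [← Complex.ofReal_re (∫ y in (0:ℝ)..L, _)]
      rw [← h1]
      congr 3
      ext y
      refine Finset.sum_congr rfl fun j _ => ?_
      congr 2
      rw [Finset.mul_sum, Finset.mul_sum, ← Finset.sum_sub_distrib]
      exact Finset.sum_congr rfl fun n _ => by simp only [hDdef]; ring
    have hpars : ∀ n m, ∑ i, (starRingEnd ℂ) (c i n) * c i m =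
        ∑ j, ψ m x j * (starRingEnd ℂ) (ψ n x j) := by
      intro n m
      have := hU.eigenvectorBasis.sum_inner_mul_inner
        (WithLp.toLp 2 (ψ n x)) (WithLp.toLp 2 (ψ m x))
      simp only [PiLp.inner_apply, RCLike.inner_apply] at this
      rw [← this]
      refine Finset.sum_congr rfl fun i _ => ?_
      simp only [hcdef, map_sum, map_mul, Complex.conj_conj, hedef]
      congr 1 <;> exact Finset.sum_congr rfl fun j _ => by ring
    calc _ ≤ ∑ i, k ^ 2 * (∑ n, ∑ m, ((starRingEnd ℂ) (c i n) * c i m) * G n m).re :=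
          Finset.sum_le_sum fun i _ => hi i
      _ = _ := by
          rw [← Finset.mul_sum, ← Complex.re_sum]
          congr 2
          rw [Finset.sum_comm]
          refine Finset.sum_congr rfl fun n _ => ?_
          rw [Finset.sum_comm]
          refine Finset.sum_congr rfl fun m _ => ?_
          rw [← Finset.sum_mul, hpars]
  have hcont : ∀ n m, Continuous fun x => (∑ j, ψ m x j * (starRingEnd ℂ) (ψ n x j)) * G n m :=
    fun n m => by fun_prop
  have hcontL : Continuous fun x => (Matrix.trace
      ((Matrix.of fun j l => ∑ n, ψ n x j * (starRingEnd ℂ) (ψ n x l)) ^ 3)).re := by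
    have : Continuous fun x => (Matrix.of fun j l => ∑ n, ψ n x j * (starRingEnd ℂ) (ψ n x l)) := by
      refine continuous_matrix fun j l => ?_
      simp only [Matrix.of_apply]
      fun_prop
    exact Complex.continuous_re.comp (this.pow 3).matrix_trace
  have hcS : Continuous fun x => ∑ n, ∑ m, (∑ j, ψ m x j * (starRingEnd ℂ) (ψ n x j)) * G n m :=
    continuous_finsetSum _ fun n _ => continuous_finsetSum _ fun m _ => hcont n m
  have hcR : Continuous fun x => k ^ 2 *
      (∑ n, ∑ m, (∑ j, ψ m x j * (starRingEnd ℂ) (ψ n x j)) * G n m).re :=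
    continuous_const.mul (Complex.continuous_re.comp hcS)
  refine (intervalIntegral.integral_mono hL.le (hcontL.intervalIntegrable _ _)
    (hcR.intervalIntegrable _ _) hpt).trans ?_
  rw [intervalIntegral.integral_const_mul]
  refine le_of_eq ?_
  congr 1
  have hre := Complex.reCLM.intervalIntegral_comp_comm (hcS.intervalIntegrable (μ := volume) 0 L)
  simp only [Complex.reCLM_apply] at hre
  rw [hre, intervalIntegral.integral_finsetSum fun n _ =>
    (continuous_finsetSum _ fun m _ => hcont n m).intervalIntegrable _ _, Complex.re_sum]
  refine Finset.sum_congr rfl fun n _ => ?_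
  rw [intervalIntegral.integral_finsetSum fun m _ => (hcont n m).intervalIntegrable _ _]
  simp_rw [intervalIntegral.integral_mul_const, horth]
  simp only [ite_mul, one_mul, zero_mul, Finset.sum_ite_eq', Finset.mem_univ, if_true]
  have : G n n = ((∫ y in (0:ℝ)..L, ∑ j, ‖D n y j‖ ^ 2 : ℝ) : ℂ) := by
    rw [← intervalIntegral.integral_ofReal]
    simp only [hG]
    congr 1; ext y
    push_cast
    exact Finset.sum_congr rfl fun j _ => Complex.mul_conj' _
  rw [this, Complex.ofReal_re]
end
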